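/- Up to isomorphism, there are exactly 92 distributive quasigroups of order 243 that are not medial. -/

import Mathlib

/-- A quasigroup: a set with a binary operation whose left and right
translations are bijections. -/
structure Quasigroup (Q : Type) where
  mul : Q → Q → Q
  leftBij : ∀ x, Function.Bijective fun y => mul x y
  rightBij : ∀ x, Function.Bijective fun y => mul y x

namespace Quasigroup

/-- Mediality: (x*y)*(u*v) = (x*u)*(y*v). -/
def Medial {Q : Type} (q : Quasigroup Q) : Prop :=
  ∀ x y u v, q.mul (q.mul x y) (q.mul u v) = q.mul (q.mul x u) (q.mul y v)

/-- Distributivity: both left and right self-distributivity. -/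
def Distributive {Q : Type} (q : Quasigroup Q) : Prop :=
  (∀ x y z, q.mul x (q.mul y z) = q.mul (q.mul x y) (q.mul x z)) ∧
  (∀ x y z, q.mul (q.mul x y) z = q.mul (q.mul x z) (q.mul y z))

/-- Idempotency: x*x = x. -/
def Idempotent {Q : Type} (q : Quasigroup Q) : Prop := ∀ x, q.mul x x = x

/-- Mendelsohn quasigroup: idempotent and semisymmetric. -/
def Mendelsohn {Q : Type} (q : Quasigroup Q) : Prop :=
  Idempotent q ∧ ∀ x y, q.mul y (q.mul x y) = x

/-- A subquasigroup: a subset closed under multiplication, left division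
and right division. -/
def IsSubquasigroup {Q : Type} (q : Quasigroup Q) (S : Set Q) : Prop :=
  (∀ x ∈ S, ∀ y ∈ S, q.mul x y ∈ S) ∧
  (∀ x ∈ S, ∀ z ∈ S, ∀ y, q.mul x y = z → y ∈ S) ∧
  (∀ y ∈ S, ∀ z ∈ S, ∀ x, q.mul x y = z → x ∈ S)

/-- The smallest subquasigroup containing `a`, `b`, `c`. -/
def genSet {Q : Type} (q : Quasigroup Q) (a b c : Q) : Set Q :=
  ⋂₀ {S : Set Q | IsSubquasigroup q S ∧ a ∈ S ∧ b ∈ S ∧ c ∈ S}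

/-- Trimediality: every subquasigroup generated by three elements is medial. -/
def Trimedial {Q : Type} (q : Quasigroup Q) : Prop :=
  ∀ a b c : Q, ∀ x ∈ genSet q a b c, ∀ y ∈ genSet q a b c,
    ∀ u ∈ genSet q a b c, ∀ v ∈ genSet q a b c,
      q.mul (q.mul x y) (q.mul u v) = q.mul (q.mul x u) (q.mul y v)

/-- Isomorphism of quasigroups. -/
def Iso {Q₁ Q₂ : Type} (q₁ : Quasigroup Q₁) (q₂ : Quasigroup Q₂) : Prop :=
  ∃ f : Q₁ ≃ Q₂, ∀ x y, f (q₁.mul x y) = q₂.mul (f x) (f y)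

end Quasigroup


namespace DQ

theorem pai {Q : Type} (f : Equiv.Perm Q) (x : Q) : f (f⁻¹ x) = x := f.apply_symm_apply x
theorem pia {Q : Type} (f : Equiv.Perm Q) (x : Q) : f⁻¹ (f x) = x := f.symm_apply_apply x

section Pre
variable {Q : Type} (o : Q) (l r : Q → Equiv.Perm Q) (L R : Equiv.Perm Q)
  (lr : ∀ x y, l x y = r y x) (l0 : ∀ y, l o y = y) (r0 : ∀ x, l x o = x)
  (h1 : ∀ X y z, l X (l y z) = l (l (R X) y) (l (L X) z))
  (h2 : ∀ x y Z, l (l x y) Z = l (l x (R Z)) (l y (L Z)))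
include lr l0 r0 h1 h2

theorem pre_commute (u : Q) : l u * r u = r u * l u := by
  obtain ⟨X, rfl⟩ := R.surjective u
  have a1 : l X = l (R X) * l (L X) := by
    ext z; have := h1 X o z; rwa [l0, r0] at this
  have a2 : l X = r (L X) * l (R X) := by
    ext z; have := h1 X z o; rw [r0, r0] at this; rw [this, lr]; rfl
  have b1 : r X = l (R X) * r (L X) := by
    ext y; have := h2 o y X; rw [l0, l0] at this
    rw [← lr, this, Equiv.Perm.mul_apply, ← lr]
  have b2 : r X = r (L X) * r (R X) := by
    ext x; have := h2 x o X; rw [l0, r0] at this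
    rw [← lr, this, Equiv.Perm.mul_apply, lr, ← lr x]
  have cc : l X * l (R X) = l (l (R X) (R X)) * l (L X) := by
    ext z; exact h1 X (R X) z
  have ee : r X * l (R X) = l (l (R X) (R X)) * r (L X) := by
    ext z; rw [Equiv.Perm.mul_apply, ← lr, h2, Equiv.Perm.mul_apply, ← lr]
  obtain ⟨W, hW⟩ : ∃ W, W = l (l (R X) (R X)) := ⟨_, rfl⟩
  rw [← hW] at cc ee
  clear hW
  generalize l (R X) = A at *
  generalize l (L X) = B at *
  generalize r (L X) = B' at *
  generalize r (R X) = A' at *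
  have e1 : B' = A * B * A⁻¹ := by rw [eq_mul_inv_iff_mul_eq, ← a2, a1]
  have e2 : r X = A * A * B * A⁻¹ := by rw [b1, e1]; group
  have e3 : A' = A * B⁻¹ * A * B * A⁻¹ := by
    have : A' = B'⁻¹ * r X := by rw [b2]; group
    rw [this, e1, e2]; group
  have e4 : A * B * A * B⁻¹ = A * A * B * A * B⁻¹ * A⁻¹ := by
    have x1 : W = A * B * A * B⁻¹ := by
      rw [eq_mul_inv_iff_mul_eq, ← cc, a1]
    have x2 : W = A * A * B * A * B⁻¹ * A⁻¹ := by
      have : W = r X * A * B'⁻¹ := by rw [ee]; group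
      rw [this, e1, e2]; group
    rw [← x1, x2]
  have e5 : B * A * B⁻¹ * A = A * B * A * B⁻¹ := by
    have : A⁻¹ * (A * B * A * B⁻¹) * A = A⁻¹ * (A * A * B * A * B⁻¹ * A⁻¹) * A := by rw [e4]
    calc B * A * B⁻¹ * A = A⁻¹ * (A * B * A * B⁻¹) * A := by group
      _ = _ := this
      _ = _ := by group
  have e6 : A * (B⁻¹ * A * B) = B⁻¹ * A * B * A := by
    calc A * (B⁻¹ * A * B) = B⁻¹ * (B * A * B⁻¹ * A) * B := by group
      _ = _ := by rw [e5]; group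
  have e7 : A' = B⁻¹ * A * B := by
    calc A' = A * (B⁻¹ * A * B) * A⁻¹ := by rw [e3]; group
      _ = _ := by rw [e6]; group
  rw [e7, e6]

theorem pre_comm [Finite Q] (x y : Q) : l x y = l y x := by
  have hc := pre_commute o l r L R lr l0 r0 h1 h2
  have hro : ∀ u, r u o = u := fun u => by rw [← lr, l0]
  set C : Q → Equiv.Perm Q := fun u => l u * (r u)⁻¹ with hC
  have hCl : ∀ u, C u * l u = l u * C u := fun u => by
    have : (r u)⁻¹ * l u = l u * (r u)⁻¹ := by
      rw [inv_mul_eq_iff_eq_mul, ← mul_assoc, ← hc, mul_assoc, mul_inv_cancel, mul_one]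
    simp only [hC]; rw [mul_assoc, this]
  have hCu : ∀ u, C u u = u := fun u => by
    have : (r u)⁻¹ u = o := by rw [Equiv.Perm.inv_eq_iff_eq, hro]
    simp only [hC, Equiv.Perm.mul_apply, this, r0]
  have hCo : ∀ u, C u o = o := fun u => by
    have := DFunLike.congr_fun (hCl u) o
    simp only [Equiv.Perm.mul_apply, r0, hCu] at this
    exact (l u).injective (by rw [← this, r0])
  have hadd0 : ∀ X y z, C X (l y z) = l (C (R X) y) (C (L X) z) := fun X y z => by
    have e : (r X)⁻¹ (l y z) = l ((r (R X))⁻¹ y) ((r (L X))⁻¹ z) := by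
      rw [Equiv.Perm.inv_eq_iff_eq, ← lr, h2, lr _ (R X), lr _ (L X), pai, pai]
    simp only [hC, Equiv.Perm.mul_apply, e]; rw [h1]
  have hCR : ∀ X, C (R X) = C X := fun X => by
    ext y; have := hadd0 X y o; rw [r0, hCo, r0] at this; exact this.symm
  have hCL : ∀ X, C (L X) = C X := fun X => by
    ext y; have := hadd0 X o y; rw [l0, hCo, l0] at this; exact this.symm
  have hadd : ∀ X y z, C X (l y z) = l (C X y) (C X z) := fun X y z => by
    rw [hadd0, hCR, hCL]
  have hsw : ∀ u y, l y u = C y (l u y) := fun u y => by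
    simp only [hC, Equiv.Perm.mul_apply]; rw [lr u y, pia]
  have base : ∀ u y, C u (C y (l u y)) = l u y := fun u y => by
    rw [← hsw, ← hsw]
  have step : ∀ y Y W, (∀ u, C u (C y (l u Y)) = l u Y) → (∀ u, C u (C y (l u W)) = l u W) →
      ∀ u, C u (C y (l u (l Y W))) = l u (l Y W) := fun y Y W hY hW u => by
    have hY := hY (R u)
    have hW := hW (L u)
    rw [hCR] at hY; rw [hCL] at hW
    rw [h1, hadd, hadd, hY, hW]
  have key : ∀ y u, C y u = u := fun y u => by
    have hn : ∀ n : ℕ, ∀ u, C u (C y (l u ((l y ^ (n+1)) o))) = l u ((l y ^ (n+1)) o) := by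
      intro n
      induction n with
      | zero => intro u; simpa [r0] using base u y
      | succ n ih =>
        rw [pow_succ', Equiv.Perm.mul_apply]
        exact step y _ _ (fun u => base u y) ih
    have hfin := isOfFinOrder_of_finite (l y)
    have hpos := hfin.orderOf_pos
    have := hn (orderOf (l y) - 1) u
    rw [Nat.sub_add_cancel hpos, pow_orderOf_eq_one] at this
    simp only [Equiv.Perm.one_apply, r0] at this
    exact (C u).injective (this.trans (hCu u).symm)
  rw [hsw, key]

end Pre

/-- Commutative Moufang loops, through their translations. -/
structure CM (Q : Type) where
  o : Q
  l : Q → Equiv.Perm Q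
  l_o : ∀ x, l x o = x
  o_l : l o = 1
  comm : ∀ x y, l x y = l y x
  mouf : ∀ x y, l (l x y) = l x * l x * l y * (l x)⁻¹
  cube : ∀ x y, l x * l x * l x * l y = l y * (l x * l x * l x)

theorem pre_cm {Q : Type} [Finite Q] (o : Q) (l : Q → Equiv.Perm Q) (L R : Equiv.Perm Q)
    (l0 : ∀ y, l o y = y) (r0 : ∀ x, l x o = x) (comm : ∀ x y, l x y = l y x)
    (h1 : ∀ X y z, l X (l y z) = l (l (R X) y) (l (L X) z))
    (Ladd : ∀ x y, L (l x y) = l (L x) (L y)) (Radd : ∀ x y, R (l x y) = l (R x) (R y)) :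
    ∃ c : CM Q, c.l = l ∧ c.o = o ∧
      (∀ x y, l (L x) * (l (R x))⁻¹ * l y = l y * (l (L x) * (l (R x))⁻¹)) ∧
      (∀ x, l (L x) * l (R x) = l (R x) * l (L x)) := by
  have a1 : ∀ X, l X = l (R X) * l (L X) := fun X => by
    ext z; have := h1 X o z; rwa [l0, r0] at this
  have a2 : ∀ X, l X = l (L X) * l (R X) := fun X => by
    ext z; have := h1 X z o; rw [r0, r0] at this; rw [this, comm]; rfl
  have com : ∀ X, l (L X) * l (R X) = l (R X) * l (L X) := fun X => by rw [← a1, ← a2]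
  have cc : ∀ X y, l X * l y = l (l (R X) y) * l (L X) := fun X y => by
    ext z; exact h1 X y z
  have dd : ∀ X y, l X * l y = l (l (L X) y) * l (R X) := fun X y => by
    ext z
    rw [Equiv.Perm.mul_apply, Equiv.Perm.mul_apply, comm y z, h1, comm]
  have c1 : ∀ X y, l (l (R X) y) = l (R X) * l (L X) * l y * (l (L X))⁻¹ := fun X y => by
    rw [eq_mul_inv_iff_mul_eq, ← cc, ← a1]
  have d1 : ∀ X y, l (l (L X) y) = l (R X) * l (L X) * l y * (l (R X))⁻¹ := fun X y => by
    rw [eq_mul_inv_iff_mul_eq, ← dd, ← a1]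
  have ol : l o = 1 := by ext y; exact l0 y
  have neg : ∀ w, l ((l w)⁻¹ o) = (l w)⁻¹ := fun w => by
    obtain ⟨X, rfl⟩ := L.surjective w
    have := d1 X ((l (L X))⁻¹ o)
    simp only [pai, ol] at this
    have h : l (R X) * l (L X) * l ((l (L X))⁻¹ o) = l (R X) := by
      rw [eq_mul_inv_iff_mul_eq, one_mul] at this; exact this.symm
    rw [mul_assoc] at h
    have h := mul_eq_left.mp h
    exact eq_inv_of_mul_eq_one_right h
  have negadd : ∀ x y, (l (l x y))⁻¹ o = l ((l x)⁻¹ o) ((l y)⁻¹ o) := fun x y => by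
    -- s = x + y, x = s - y
    have e1 : l (l x y) ((l y)⁻¹ o) = x := by
      rw [comm, neg, Equiv.Perm.inv_eq_iff_eq, comm]
    have e2 : (l (l x y))⁻¹ x = (l y)⁻¹ o := by rw [Equiv.Perm.inv_eq_iff_eq, e1]
    have e3 : l x ((l (l x y))⁻¹ o) = (l y)⁻¹ o := by
      rw [← e2, comm, neg]
    rw [neg, ← e3]; simp
  have negL : ∀ x, L ((l x)⁻¹ o) = (l (L x))⁻¹ o := fun x => by
    have hLo : L o = o := by
      have := Ladd o o; rw [l0] at this
      exact (l (L o)).injective (by rw [← this, r0])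
    rw [Equiv.Perm.eq_inv_iff_eq, ← Ladd]; simp [hLo]
  have negR : ∀ x, R ((l x)⁻¹ o) = (l (R x))⁻¹ o := fun x => by
    have hLo : R o = o := by
      have := Radd o o; rw [l0] at this
      exact (l (R o)).injective (by rw [← this, r0])
    rw [Equiv.Perm.eq_inv_iff_eq, ← Radd]; simp [hLo]
  -- U0 U1^2 central
  have grp : ∀ A B Y : Equiv.Perm Q, B * A = A * B →
      (A * B * Y * B⁻¹)⁻¹ = A⁻¹ * B⁻¹ * Y⁻¹ * B → Y * (A * B * B) = A * B * B * Y := by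
    intro A B Y hAB h
    have h' : A * B * Y * B⁻¹ = B⁻¹ * Y * B * A := by
      rw [← inv_inv (A * B * Y * B⁻¹), h]; group
    calc Y * (A * B * B) = B * (B⁻¹ * Y * B * A) * B := by rw [← hAB]; group
      _ = B * (A * B * Y * B⁻¹) * B := by rw [h']
      _ = (B * A) * B * Y := by group
      _ = _ := by rw [hAB]
  have k1 : ∀ X y, l y * (l (R X) * l (L X) * l (L X)) = l (R X) * l (L X) * l (L X) * l y := by
    intro X y
    apply grp _ _ _ (com X)
    have h := c1 ((l X)⁻¹ o) ((l y)⁻¹ o)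
    rw [negR, negL, ← negadd, neg, neg, neg, neg, c1, inv_inv] at h
    exact h
  have k2 : ∀ X y, l y * (l (L X) * l (R X) * l (R X)) = l (L X) * l (R X) * l (R X) * l y := by
    intro X y
    apply grp _ _ _ (com X).symm
    have h := d1 ((l X)⁻¹ o) ((l y)⁻¹ o)
    rw [negL, negR, ← negadd, neg, neg, neg, neg, d1, inv_inv] at h
    rw [com X, h]
    have : (l (L X))⁻¹ * (l (R X))⁻¹ = (l (R X))⁻¹ * (l (L X))⁻¹ := by
      rw [← mul_inv_rev, ← mul_inv_rev, com]
    rw [this]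
  have k3 : ∀ X y, Commute (l y) (l (L X) * (l (R X))⁻¹) := fun X y => by
    have e : l (L X) * (l (R X))⁻¹ =
        (l (R X) * l (L X) * l (L X)) * (l (L X) * l (R X) * l (R X))⁻¹ := by
      rw [← com X]; simp only [mul_inv_rev, mul_assoc]; 
      have := com X
      have c : Commute (l (L X)) (l (R X)) := this
      have c2 := c.inv_right
      rw [eq_comm]
      calc l (L X) * (l (R X) * (l (L X) * ((l (R X))⁻¹ * ((l (R X))⁻¹ * (l (L X))⁻¹))))
          = l (L X) * (l (R X) * (((l (L X) * (l (R X))⁻¹) * (l (R X))⁻¹) * (l (L X))⁻¹)) := by group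
        _ = l (L X) * (l (R X) * (((l (R X))⁻¹ * (l (L X) * (l (R X))⁻¹)) * (l (L X))⁻¹)) := by
            rw [c2.eq, mul_assoc (l (R X))⁻¹, c2.eq]
        _ = l (L X) * (l (R X) * (((l (R X))⁻¹ * ((l (R X))⁻¹ * l (L X))) * (l (L X))⁻¹)) := by
            rw [c2.eq]
        _ = _ := by group
    rw [e]
    exact Commute.mul_right (k1 X y) (Commute.inv_right (k2 X y))
  have k4 : ∀ X y, Commute (l y) (l (R X) * l (R X) * l (R X)) := fun X y => by
    have e : l (R X) * l (R X) * l (R X) =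
        (l (L X) * (l (R X))⁻¹)⁻¹ * (l (L X) * l (R X) * l (R X)) := by
      group
    rw [e]
    exact Commute.mul_right (Commute.inv_right (k3 X y)) (k2 X y)
  refine ⟨⟨o, l, r0, ol, comm, ?_, ?_⟩, rfl, rfl, fun x y => (k3 x y).eq.symm, com⟩
  · intro x y
    obtain ⟨X, rfl⟩ := R.surjective x
    rw [c1]
    have h := (k3 X y).eq
    have e : l (L X) * l y * (l (L X))⁻¹ = l (R X) * l y * (l (R X))⁻¹ := by
      have c : Commute (l (L X)) (l (R X)) := com X
      have e1 : l (L X) = l (R X) * (l (L X) * (l (R X))⁻¹) := by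
        rw [← mul_assoc, ← com]; group
      have e2 : l (L X) * l y = l (R X) * l y * (l (L X) * (l (R X))⁻¹) := by
        rw [mul_assoc (l (R X)), h]; nth_rw 1 [e1]; group
      rw [e2]
      have e3 : l (L X) * (l (R X))⁻¹ = (l (R X))⁻¹ * l (L X) := c.inv_right.eq
      rw [e3]; group
    calc _ = l (R X) * (l (L X) * l y * (l (L X))⁻¹) := by group
      _ = _ := by rw [e]; group
  · intro x y
    obtain ⟨X, rfl⟩ := R.surjective x
    exact (k4 X y).eq.symm

open Quasigroup in
/-- A distributive quasigroup is an affine quasigroup over a commutative Moufang loop. -/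
theorem exists_cm {Q : Type} [Finite Q] (o : Q) (q : Quasigroup Q) (hd : Distributive q) :
    ∃ (c : CM Q) (L R : Equiv.Perm Q), (∀ x y, q.mul x y = c.l (R x) (L y)) ∧
      (∀ x, c.l (R x) (L x) = x) ∧
      (∀ x y, L (c.l x y) = c.l (L x) (L y)) ∧ (∀ x y, R (c.l x y) = c.l (R x) (R y)) ∧
      (∀ x y, c.l (L x) * (c.l (R x))⁻¹ * c.l y = c.l y * (c.l (L x) * (c.l (R x))⁻¹)) ∧
      (∀ x, c.l (L x) * c.l (R x) = c.l (R x) * c.l (L x)) := by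
  obtain ⟨hl, hr⟩ := hd
  let Lt : Q → Equiv.Perm Q := fun x => Equiv.ofBijective _ (q.leftBij x)
  let Rt : Q → Equiv.Perm Q := fun x => Equiv.ofBijective _ (q.rightBij x)
  have hLt : ∀ x y, Lt x y = q.mul x y := fun _ _ => rfl
  have hRt : ∀ x y, Rt x y = q.mul y x := fun _ _ => rfl
  have idem : ∀ x, q.mul x x = x := fun x => by
    have := hl x x x
    exact ((q.rightBij (q.mul x x)).1 this).symm
  set L := Lt o with hL
  set R := Rt o with hR
  have LR : ∀ x, L (R x) = R (L x) := fun x => by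
    change q.mul o (q.mul x o) = q.mul (q.mul o x) o
    rw [hl, idem]
  have Lm : ∀ x y, L (q.mul x y) = q.mul (L x) (L y) := hl o
  have Rm : ∀ x y, R (q.mul x y) = q.mul (R x) (R y) := fun x y => hr x y o
  have Lim : ∀ x y, L.symm (q.mul x y) = q.mul (L.symm x) (L.symm y) := fun x y => by
    rw [Equiv.symm_apply_eq, Lm]; simp
  have Rim : ∀ x y, R.symm (q.mul x y) = q.mul (R.symm x) (R.symm y) := fun x y => by
    rw [Equiv.symm_apply_eq, Rm]; simp
  have LRi : ∀ x, L (R.symm x) = R.symm (L x) := fun x => by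
    rw [Equiv.eq_symm_apply, ← LR]; simp
  have LiR : ∀ x, L.symm (R x) = R (L.symm x) := fun x => by
    rw [Equiv.symm_apply_eq, LR]; simp
  have LiRi : ∀ x, L.symm (R.symm x) = R.symm (L.symm x) := fun x => by
    rw [Equiv.symm_apply_eq, LRi]; simp
  let l : Q → Equiv.Perm Q := fun x => L.symm.trans (Lt (R.symm x))
  let r : Q → Equiv.Perm Q := fun y => R.symm.trans (Rt (L.symm y))
  have hlap : ∀ x y, l x y = q.mul (R.symm x) (L.symm y) := fun _ _ => rfl
  have hrap : ∀ x y, r y x = q.mul (R.symm x) (L.symm y) := fun _ _ => rfl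
  have Ro : R.symm o = o := by rw [Equiv.symm_apply_eq]; exact (idem o).symm
  have Lo : L.symm o = o := by rw [Equiv.symm_apply_eq]; exact (idem o).symm
  have l0 : ∀ y, l o y = y := fun y => by
    rw [hlap, Ro]; exact L.apply_symm_apply y
  have r0 : ∀ x, l x o = x := fun x => by
    rw [hlap, Lo]; exact R.apply_symm_apply x
  have h1 : ∀ X y z, l X (l y z) = l (l (R X) y) (l (L X) z) := fun X y z => by
    simp only [hlap, Rim, Lim, ← LRi, Equiv.symm_apply_apply, LiRi]
    rw [hl]
  have h2 : ∀ x y Z, l (l x y) Z = l (l x (R Z)) (l y (L Z)) := fun x y Z => by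
    simp only [hlap, Rim, Lim, LiR, Equiv.symm_apply_apply, LiRi]
    rw [hr]
  have Ladd : ∀ x y, L (l x y) = l (L x) (L y) := fun x y => by
    simp only [hlap, Lm, LRi, Equiv.symm_apply_apply, Equiv.apply_symm_apply]
  have Radd : ∀ x y, R (l x y) = l (R x) (R y) := fun x y => by
    simp only [hlap, Rm, LiR, Equiv.symm_apply_apply, Equiv.apply_symm_apply]
  have comm := pre_comm o l r L R (fun x y => rfl) l0 r0 h1 h2
  obtain ⟨c, hcl, hco, k1, k2⟩ := pre_cm o l L R l0 r0 comm h1 Ladd Radd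
  refine ⟨c, L, R, ?_, ?_, ?_⟩
  · intro x y; rw [hcl, hlap]; simp
  · intro x; rw [hcl, hlap]; simp [idem]
  · rw [hcl]; exact ⟨Ladd, Radd, k1, k2⟩

end DQ

namespace DQ
namespace CM

variable {Q : Type} (c : CM Q)

/-- Inverse element. -/
def neg (x : Q) : Q := (c.l x)⁻¹ c.o

theorem add_neg (x : Q) : c.l x (c.neg x) = c.o := pai _ _

theorem o_l' (x : Q) : c.l c.o x = x := by rw [c.o_l]; rfl

theorem l_neg (x : Q) : c.l (c.neg x) = (c.l x)⁻¹ := by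
  have h := c.mouf x (c.neg x)
  rw [add_neg, c.o_l, eq_comm, mul_inv_eq_one, mul_assoc] at h
  exact eq_inv_of_mul_eq_one_right (mul_eq_left.mp h)

theorem neg_o : c.neg c.o = c.o := by unfold neg; rw [c.o_l]; rfl

theorem neg_neg (x : Q) : c.neg (c.neg x) = x := by
  rw [neg, l_neg, inv_inv, c.l_o]

theorem l_inj {x y : Q} (h : c.l x = c.l y) : x = y := by
  rw [← c.l_o x, h, c.l_o]

theorem eq_o {x w : Q} (h : c.l x w = w) : x = c.o := by
  rw [c.comm] at h; exact (c.l w).injective (by rw [h, c.l_o])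

theorem neg_inj {x y : Q} (h : c.neg x = c.neg y) : x = y := by
  rw [← c.neg_neg x, h, c.neg_neg]

theorem neg_eq_o {x : Q} : c.neg x = c.o ↔ x = c.o :=
  ⟨fun h => by rw [← c.neg_neg x, h, c.neg_o], fun h => by rw [h, c.neg_o]⟩

theorem neg_cancel (x y : Q) : c.l (c.neg x) (c.l x y) = y := by rw [l_neg]; exact pia _ _
theorem cancel_neg (x y : Q) : c.l x (c.l (c.neg x) y) = y := by rw [l_neg]; exact pai _ _

theorem neg_add (x y : Q) : c.neg (c.l x y) = c.l (c.neg x) (c.neg y) := by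
  have e1 : c.l (c.l x y) (c.neg y) = x := by
    rw [c.comm, c.comm x, neg_cancel]
  have e2 : (c.l (c.l x y))⁻¹ x = c.neg y := by rw [Equiv.Perm.inv_eq_iff_eq, e1]
  have e3 : c.l x (c.neg (c.l x y)) = c.neg y := by
    rw [← e2, c.comm, l_neg]
  rw [l_neg, ← e3, pia]

theorem sq (x s t : Q) : c.l x (c.l x (c.l s t)) = c.l (c.l x s) (c.l x t) := by
  rw [c.mouf x s]; simp only [Equiv.Perm.mul_apply, pia]

theorem mouf' (x y : Q) : c.l (c.l x y) = c.l y * c.l y * c.l x * (c.l y)⁻¹ := by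
  rw [c.comm, c.mouf]

theorem dbl (x : Q) : c.l (c.l x x) = c.l x * c.l x := by
  rw [c.mouf]; group

/-- Automorphisms. -/
def Aut (α : Equiv.Perm Q) : Prop := ∀ s t, α (c.l s t) = c.l (α s) (α t)

variable {c} in
theorem Aut.o {α : Equiv.Perm Q} (h : c.Aut α) : α c.o = c.o := by
  have := h c.o c.o
  rw [c.l_o] at this
  exact c.eq_o this.symm

variable {c} in
theorem Aut.neg {α : Equiv.Perm Q} (h : c.Aut α) (x : Q) : α (c.neg x) = c.neg (α x) := by
  unfold CM.neg; rw [Equiv.Perm.eq_inv_iff_eq, ← h, pai, h.o]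

variable {c} in
theorem Aut.inv {α : Equiv.Perm Q} (h : c.Aut α) : c.Aut α⁻¹ := fun s t => by
  rw [Equiv.Perm.inv_eq_iff_eq, h, pai, pai]

variable {c} in
theorem Aut.conj {α : Equiv.Perm Q} (h : c.Aut α) (x : Q) : α * c.l x = c.l (α x) * α := by
  ext s; exact h x s

/-- Associator maps. -/
def D (x y : Q) : Equiv.Perm Q := (c.l (c.l x y))⁻¹ * c.l x * c.l y

theorem D_eq (x y : Q) : c.D x y = c.l x * (c.l y)⁻¹ * (c.l x)⁻¹ * c.l y := by
  rw [D, c.mouf]; group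

theorem assoc (x y z : Q) : c.l x (c.l y z) = c.l (c.l x y) (c.D x y z) := by
  simp only [D, Equiv.Perm.mul_apply, pai]

theorem D_o (x y : Q) : c.D x y c.o = c.o := by
  simp only [D, Equiv.Perm.mul_apply, c.l_o]
  rw [Equiv.Perm.inv_eq_iff_eq, c.l_o]

theorem D_aut (x y : Q) : c.Aut (c.D x y) := by
  have key : ∀ s t, c.l x (c.l x (c.l (c.neg y) (c.l (c.neg y) (c.l (c.neg x) (c.l (c.neg x)
      (c.l y (c.l y (c.l s t)))))))) = c.l (c.D x y s) (c.D x y t) := fun s t => by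
    rw [sq c y, sq c (c.neg x), sq c (c.neg y), sq c x, D_eq]; simp only [Equiv.Perm.mul_apply, l_neg]
  intro s t
  have h := key (c.l s t) c.o
  rw [c.l_o, D_o, c.l_o, key] at h
  exact h.symm

theorem D_l (x y : Q) : c.D x y x = x := by
  simp only [D, Equiv.Perm.mul_apply]
  rw [Equiv.Perm.inv_eq_iff_eq, c.comm y x, c.comm]

theorem D_r (x y : Q) : c.D x y y = y := by
  simp only [D, Equiv.Perm.mul_apply]
  rw [Equiv.Perm.inv_eq_iff_eq, c.comm x, dbl, c.comm (c.l x y), c.comm x]; rfl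

theorem D_cl (x y : Q) : c.D x y * c.l x = c.l x * c.D x y := by
  rw [(c.D_aut x y).conj, D_l]

theorem D_cr (x y : Q) : c.D x y * c.l y = c.l y * c.D x y := by
  rw [(c.D_aut x y).conj, D_r]

theorem D_eq' (x y : Q) : c.D x y = c.l y * c.l x * (c.l y)⁻¹ * (c.l x)⁻¹ := by
  have h := c.D_cr x y
  have h' : c.D x y = c.l y * c.D x y * (c.l y)⁻¹ := by rw [← h]; group
  rw [h', D_eq]
  have h1 := c.D_cl x y
  have h'' : c.l x * (c.l y)⁻¹ * (c.l x)⁻¹ * c.l y = (c.l y)⁻¹ * (c.l x)⁻¹ * c.l y * c.l x := by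
    rw [← D_eq]
    have : c.D x y = (c.l x)⁻¹ * (c.D x y * c.l x) := by rw [h1]; group
    rw [this, D_eq]; group
  have h3 : c.l x * (c.l y)⁻¹ * (c.l x)⁻¹ * c.l y = c.l y * c.l x * (c.l y)⁻¹ * (c.l x)⁻¹ := by
    have : c.D x y = c.l y * c.D x y * (c.l y)⁻¹ := by rw [← h]; group
    rw [← D_eq]; nth_rw 1 [this]; rw [D_eq]; group
  rw [h3]
  have : c.D x y = c.l y * c.D x y * (c.l y)⁻¹ := by rw [← h]; group
  rw [D_eq, h3] at this; exact this.symm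

theorem D_symm (x y : Q) : c.D y x = (c.D x y)⁻¹ := by
  rw [D_eq' c y x, D_eq' c x y]; group

theorem D_cube (x y : Q) : c.D x y * c.D x y * c.D x y = 1 := by
  have e : c.l y * c.l x * (c.l y)⁻¹ = c.D x y * c.l x := by rw [D_eq']; group
  have cm : Commute (c.D x y) (c.l x) := c.D_cl x y
  have h := c.cube x y
  have h2 : (c.D x y * c.l x) ^ 3 = (c.l x) ^ 3 := by
    rw [← e]
    calc (c.l y * c.l x * (c.l y)⁻¹) ^ 3 = c.l y * (c.l x * c.l x * c.l x) * (c.l y)⁻¹ := by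
            simp only [pow_succ, pow_zero, one_mul]; group
      _ = _ := by rw [← h]; simp only [pow_succ, pow_zero, one_mul]; group
  rw [cm.mul_pow] at h2
  have := mul_eq_right.mp h2
  rw [← this]; simp only [pow_succ, pow_zero, one_mul]

theorem l_add (x y : Q) : c.l (c.l x y) = c.l x * c.l y * (c.D x y)⁻¹ := by
  rw [D]; group

theorem D_add_r (x y : Q) : c.D x (c.l y x) = c.D x y := by
  rw [D_eq' c x (c.l y x), c.comm y x, l_add]
  have h : (c.D x y)⁻¹ * c.l x * c.D x y = c.l x := by
    rw [mul_assoc, ← c.D_cl]; group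
  calc c.l x * c.l y * (c.D x y)⁻¹ * c.l x * (c.l x * c.l y * (c.D x y)⁻¹)⁻¹ * (c.l x)⁻¹
      = c.l x * c.l y * ((c.D x y)⁻¹ * c.l x * c.D x y) * (c.l y)⁻¹ * (c.l x)⁻¹ * (c.l x)⁻¹ := by group
    _ = c.l x * (c.l y * c.l x * (c.l y)⁻¹ * (c.l x)⁻¹) * (c.l x)⁻¹ := by rw [h]; group
    _ = c.D x y := by rw [← D_eq', ← c.D_cl]; group

theorem D_add_r' (x y : Q) : c.D x (c.l x y) = c.D x y := by rw [c.comm, D_add_r]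

theorem D_neg_r (x y : Q) : c.D x (c.neg y) = (c.D x y)⁻¹ := by
  rw [D_eq', l_neg, D_eq]; group

theorem D_neg_l (x y : Q) : c.D (c.neg x) y = (c.D x y)⁻¹ := by
  rw [D_symm, D_neg_r, D_symm c x y, inv_inv]

theorem D_add_l (x y : Q) : c.D (c.l y x) x = c.D y x := by
  rw [D_symm, D_add_r, D_symm, inv_inv]

theorem aut_D {α : Equiv.Perm Q} (h : c.Aut α) (x y : Q) :
    α * c.D x y = c.D (α x) (α y) * α := by
  have e : c.D (α x) (α y) = α * c.D x y * α⁻¹ := by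
    have hx : c.l (α x) = α * c.l x * α⁻¹ := by rw [h.conj]; group
    have hy : c.l (α y) = α * c.l y * α⁻¹ := by rw [h.conj]; group
    rw [D_eq, D_eq, hx, hy]; group
  rw [e]; group

theorem fixI (y p w : Q) : c.D y (c.l p w) w = c.D y p w := by
  -- first: w = D_{zx} D_{xy}⁻¹ w if w = (x+y)+z
  have A : ∀ x y z, c.D x (c.neg y) (c.l (c.l x y) z) = c.D x z (c.l (c.l x y) z) := by
    intro x y z
    have e1 : c.l y (c.l x z) = (c.D x y)⁻¹ (c.l (c.l x y) z) := by
      rw [(c.D_aut x y).inv, c.assoc, c.comm y x, D_symm]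
      congr 2
      rw [Equiv.Perm.eq_inv_iff_eq, c.D_aut, D_l, D_r]
    have e2 : c.l z (c.l x y) = c.D z x (c.l y (c.l x z)) := by
      rw [c.assoc z x y, c.comm y, c.D_aut z x, c.comm x z]
      congr 2
      rw [c.D_aut, D_l, D_r]
    rw [e1, c.comm z, D_symm c x z, Equiv.Perm.eq_inv_iff_eq] at e2
    rw [D_neg_r, e2]
  have h := A y (c.l (c.neg y) (c.neg p)) (c.l p w)
  rw [cancel_neg, neg_cancel, neg_add, neg_neg, neg_neg, D_add_r'] at h
  exact h.symm

/-- Associator. -/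
def f (x y z : Q) : Q := c.l (c.neg z) (c.D x y z)

theorem Df (x y z : Q) : c.D x y z = c.l z (c.f x y z) := by rw [f, cancel_neg]

theorem f_eq {x y z t : Q} (h : c.D x y z = c.l z t) : c.f x y z = t := by
  rw [f, h, neg_cancel]

theorem f_o {x y z : Q} : c.f x y z = c.o ↔ c.D x y z = z :=
  ⟨fun h => by rw [Df, h, c.l_o], fun h => c.f_eq (by rw [h, c.l_o])⟩

theorem f_II (y p w : Q) : c.f y w p = c.neg ((c.D p w)⁻¹ (c.f y p w)) := by
  apply c.f_eq
  have hb : c.D y (c.l p w) (c.l p w) = c.l p w := D_r _ _ _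
  rw [c.D_aut, fixI] at hb
  have h2 : c.D y (c.l p w) p = c.D y w p := by rw [c.comm p, fixI]
  rw [h2, Df c y p w] at hb
  -- D y w p = (p+w) - (w+a)
  have h3 : c.D y w p = c.l (c.l p w) (c.neg (c.l w (c.f y p w))) := by
    rw [← hb, c.comm (c.D y w p), c.comm, neg_cancel]
  rw [h3, l_add, neg_add]
  simp only [Equiv.Perm.mul_apply]
  rw [(c.D_aut p w).inv, (c.D_aut p w).inv.neg, (c.D_aut p w).inv.neg]
  have : (c.D p w)⁻¹ w = w := by rw [Equiv.Perm.inv_eq_iff_eq, D_r]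
  rw [this, cancel_neg]

theorem f_III (y p w : Q) : c.D p w (c.f y p w) = c.f y p w ∧ c.f y w p = c.neg (c.f y p w) := by
  set a := c.f y p w with ha
  set b := c.f y w p with hb
  have hII : b = c.neg ((c.D p w)⁻¹ a) := c.f_II y p w
  have e1 : c.f y w (c.l p w) = b := by
    rw [f_II, D_add_l, hII]
    have : c.f y (c.l p w) w = a := c.f_eq (by rw [fixI, Df])
    rw [this]
  have e2 := c.Df y w (c.l p w)
  rw [e1, c.D_aut, D_r, Df c y w p, ← hb] at e2
  -- (p + b) + w = (p+w) + b
  rw [c.comm _ w, c.comm p w, l_add] at e2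
  simp only [Equiv.Perm.mul_apply] at e2
  have e3 := (c.l p).injective ((c.l w).injective e2)
  have e4 : c.D p w b = b := by rw [D_symm, inv_inv] at e3; exact e3.symm
  have e5 : b = c.neg a := by
    rw [← e4, hII, (c.D_aut p w).neg, pai]
  refine ⟨?_, e5⟩
  rw [e5, (c.D_aut p w).neg] at e4
  exact c.neg_inj e4

theorem f_swap23 (x y z : Q) : c.f x z y = c.neg (c.f x y z) := (c.f_III x y z).2

theorem D_f23 (x y z : Q) : c.D y z (c.f x y z) = c.f x y z := (c.f_III x y z).1

theorem D_f12 (y p w : Q) : c.D y p (c.f y p w) = c.f y p w := by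
  have e1 : c.f y w (c.l p y) = c.neg (c.f y p w) := by
    rw [f_swap23]; congr 1
    exact c.f_eq (by rw [D_add_r, Df])
  have e2 := c.Df y w (c.l p y)
  rw [e1, c.D_aut, D_l, Df c y w p, f_swap23 c y p w] at e2
  rw [c.comm _ y, c.comm p y, l_add] at e2
  simp only [Equiv.Perm.mul_apply] at e2
  have e3 := (c.l p).injective ((c.l y).injective e2)
  rw [Equiv.Perm.eq_inv_iff_eq, (c.D_aut _ _).neg] at e3
  exact c.neg_inj e3

theorem D_f13 (x y z : Q) : c.D x z (c.f x y z) = c.f x y z := by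
  have := c.D_f12 x z y
  rw [f_swap23, (c.D_aut _ _).neg] at this
  exact c.neg_inj this

theorem f_swap12 (x y z : Q) : c.f y x z = c.neg (c.f x y z) := by
  apply c.f_eq
  rw [D_symm, Equiv.Perm.inv_eq_iff_eq, c.D_aut, (c.D_aut _ _).neg, D_f12, Df, c.comm, c.comm z,
    neg_cancel]

theorem f_cyc (x y z : Q) : c.f y z x = c.f x y z := by
  rw [f_swap23, f_swap12, neg_neg]

theorem f_three (x y z : Q) :
    c.l (c.f x y z) (c.l (c.f x y z) (c.f x y z)) = c.o := by
  have h := DFunLike.congr_fun (c.D_cube x y) z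
  simp only [Equiv.Perm.mul_apply, Equiv.Perm.one_apply] at h
  rw [Df c x y z, c.D_aut, D_f12, Df c x y z, c.D_aut, D_f12, c.D_aut, D_f12, Df c x y z] at h
  set a := c.f x y z
  have e : c.l (c.l a (c.l a a)) = c.l a * c.l a * c.l a := by
    rw [c.mouf, dbl]; group
  apply c.eq_o (w := z)
  rw [e]
  simp only [Equiv.Perm.mul_apply]
  rw [c.comm a z, c.comm a, c.comm a, h]

/-- Vanishing of associators. -/
def Z3 (x y z : Q) : Prop := c.D x y z = z

theorem Z3_f {x y z : Q} : c.Z3 x y z ↔ c.f x y z = c.o := c.f_o.symm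

variable {c} in
theorem Z3.s12 {x y z : Q} (h : c.Z3 x y z) : c.Z3 y x z := by
  rw [Z3_f] at *; rw [f_swap12, h, neg_o]
variable {c} in
theorem Z3.s23 {x y z : Q} (h : c.Z3 x y z) : c.Z3 x z y := by
  rw [Z3_f] at *; rw [f_swap23, h, neg_o]

/-- Subloops. -/
structure IsSub (S : Set Q) : Prop where
  o : c.o ∈ S
  add : ∀ {x y}, x ∈ S → y ∈ S → c.l x y ∈ S
  neg : ∀ {x}, x ∈ S → c.neg x ∈ S

/-- Generated subloop. -/
def span (T : Set Q) : Set Q := ⋂₀ {S | c.IsSub S ∧ T ⊆ S}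

theorem span_sub (T : Set Q) : c.IsSub (c.span T) where
  o := fun _ hS => hS.1.o
  add := fun hx hy S hS => hS.1.add (hx S hS) (hy S hS)
  neg := fun hx S hS => hS.1.neg (hx S hS)

theorem sub_span (T : Set Q) : T ⊆ c.span T := fun _ hx _ hS => hS.2 hx

variable {c} in
theorem IsSub.span_le {S T : Set Q} (hS : c.IsSub S) (h : T ⊆ S) : c.span T ⊆ S :=
  fun _ hx => hx S ⟨hS, h⟩

theorem span_mono {S T : Set Q} (h : S ⊆ T) : c.span S ⊆ c.span T :=
  (c.span_sub T).span_le (h.trans (c.sub_span T))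

theorem fix_sub (α : Equiv.Perm Q) (h : c.Aut α) : c.IsSub {s | α s = s} where
  o := h.o
  add := fun {x y} hx hy => by
    change α x = x at hx; change α y = y at hy; change α _ = _; rw [h, hx, hy]
  neg := fun {x} hx => by
    change α x = x at hx; change α _ = _; rw [h.neg, hx]

theorem Z3_sub (x y : Q) : c.IsSub {s | c.Z3 x y s} := c.fix_sub _ (c.D_aut x y)

variable {c} in
theorem IsSub.D {S : Set Q} (hS : c.IsSub S) {x y z : Q} (hx : x ∈ S) (hy : y ∈ S) (hz : z ∈ S) :
    c.D x y z ∈ S := by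
  have : c.D x y z = c.l (c.neg (c.l x y)) (c.l x (c.l y z)) := by
    rw [c.assoc x y z, neg_cancel]
  rw [this]
  exact hS.add (hS.neg (hS.add hx hy)) (hS.add hx (hS.add hy hz))

variable {c} in
theorem IsSub.f {S : Set Q} (hS : c.IsSub S) {x y z : Q} (hx : x ∈ S) (hy : y ∈ S) (hz : z ∈ S) :
    c.f x y z ∈ S := hS.add (hS.neg hz) (hS.D hx hy hz)

variable {c} in
/-- cancellation in subloops -/
theorem IsSub.of_add {S : Set Q} (hS : c.IsSub S) {x y : Q} (hx : x ∈ S) (h : c.l x y ∈ S) :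
    y ∈ S := by
  have := hS.add (hS.neg hx) h
  rwa [neg_cancel] at this

theorem Z3_span (a : Q) (T : Set Q) (h : ∀ s ∈ T, ∀ t ∈ T, c.Z3 a s t) :
    ∀ s ∈ c.span T, ∀ t ∈ c.span T, c.Z3 a s t := by
  have h1 : ∀ s ∈ T, ∀ t ∈ c.span T, c.Z3 a s t := fun s hs =>
    (c.Z3_sub a s).span_le (h s hs)
  intro s hs t ht
  exact ((c.Z3_sub a t).span_le (fun s hs => (h1 s hs t ht).s23) hs).s23

/-- the associator of three elements is central in the subloop they generate -/
theorem f_central (x y z : Q) :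
    ∀ s ∈ c.span {x, y, z}, ∀ t ∈ c.span {x, y, z}, c.Z3 (c.f x y z) s t := by
  apply c.Z3_span
  have xx : ∀ s, c.Z3 (c.f x y z) s s := fun s => D_r _ _ _
  have xy : c.Z3 (c.f x y z) x y := (Z3.s23 (x := x) (c.D_f12 x y z)).s12
  have xz : c.Z3 (c.f x y z) x z := (Z3.s23 (x := x) (c.D_f13 x y z)).s12
  have yz : c.Z3 (c.f x y z) y z := (Z3.s23 (x := y) (c.D_f23 x y z)).s12
  rintro s (rfl | rfl | rfl) t (rfl | rfl | rfl)
  · exact xx _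
  · exact xy
  · exact xz
  · exact xy.s23
  · exact xx _
  · exact yz
  · exact xz.s23
  · exact yz.s23
  · exact xx _

end CM
end DQ

namespace DQ
namespace CM

variable {Q : Type} (c : CM Q)

theorem l_pow (w : Q) (k : ℕ) : c.l ((c.l w ^ k) c.o) = c.l w ^ k := by
  induction k with
  | zero => simp [c.o_l]
  | succ k ih =>
    rw [pow_succ', Equiv.Perm.mul_apply, c.mouf, ih, mul_assoc, mul_assoc,
      ((Commute.refl (c.l w)).pow_left k).inv_right.eq, mul_inv_cancel_left, ← pow_succ']

variable (hQ : Nat.card Q = 243)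
include hQ

theorem finQ : Finite Q := (Nat.card_pos_iff.mp (by rw [hQ]; norm_num)).2

theorem odd_order (w : Q) : ∃ k, c.l w ^ (2 * k + 1) = 1 := by
  have := finQ hQ
  have hpos := (isOfFinOrder_of_finite (c.l w)).orderOf_pos
  rcases Nat.even_or_odd' (orderOf (c.l w)) with ⟨k, hk | hk⟩
  · exfalso
    have hk0 : 0 < k := by omega
    have h1 : (c.l w ^ k) ^ 2 ^ 1 = 1 := by
      rw [pow_one, ← pow_mul, mul_comm, ← hk, pow_orderOf_eq_one]
    have : Fintype Q := Fintype.ofFinite Q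
    have h2 : ¬ 2 ∣ Fintype.card Q := by
      rw [← Nat.card_eq_fintype_card, hQ]; norm_num
    have : Fact (Nat.Prime 2) := ⟨Nat.prime_two⟩
    obtain ⟨u, hu⟩ := Equiv.Perm.exists_fixed_point_of_prime h2 h1
    rw [← l_pow] at hu
    have h3 := c.eq_o hu
    have h4 := c.l_pow w k
    rw [h3, c.o_l] at h4
    have := orderOf_dvd_of_pow_eq_one h4.symm
    have := Nat.le_of_dvd hk0 this
    omega
  · exact ⟨k, by rw [← hk, pow_orderOf_eq_one]⟩

theorem half_mem {S : Set Q} (hS : c.IsSub S) {w : Q} (h : c.l w w ∈ S) : w ∈ S := by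
  obtain ⟨k, hk⟩ := c.odd_order hQ w
  have : ∀ n, (c.l w ^ (2 * n)) c.o ∈ S := by
    intro n
    induction n with
    | zero => simpa using hS.o
    | succ n ih =>
      have e : (c.l w ^ (2 * (n+1))) c.o = c.l (c.l w w) ((c.l w ^ (2 * n)) c.o) := by
        rw [dbl, ← Equiv.Perm.mul_apply]; congr 1
        rw [mul_add, pow_add, mul_one, ← pow_mul_comm]; rw [pow_two]
      rw [e]; exact hS.add h ih
  have h2 := this (k + 1)
  have e : 2 * (k + 1) = 2 * k + 1 + 1 := by ring
  rw [e, pow_succ, hk, one_mul, c.l_o] at h2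
  exact h2

theorem cosets {S : Set Q} (hS : c.IsSub S) {w : Q} (hw : w ∉ S) :
    (S ∪ (c.l w '' S ∪ c.l (c.neg w) '' S)).ncard = 3 * S.ncard := by
  have := finQ hQ
  rw [Set.ncard_union_eq, Set.ncard_union_eq, Set.ncard_image_of_injective _ (c.l w).injective,
    Set.ncard_image_of_injective _ (c.l _).injective]
  · ring
  · rw [Set.disjoint_left]
    rintro _ ⟨s, hs, rfl⟩ ⟨t, ht, h⟩
    have h2 : c.l (c.l w w) s ∈ S := by
      rw [dbl, Equiv.Perm.mul_apply, ← h, cancel_neg]; exact ht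
    rw [c.comm] at h2
    exact hw (c.half_mem hQ hS (hS.of_add hs h2))
  · rw [Set.disjoint_left]
    rintro u hu (⟨s, hs, rfl⟩ | ⟨s, hs, rfl⟩)
    · rw [c.comm] at hu; exact hw (hS.of_add hs hu)
    · rw [c.comm] at hu
      have := hS.neg (hS.of_add hs hu)
      rw [neg_neg] at this; exact hw this

theorem three_mul {S T : Set Q} (hS : c.IsSub S) (hT : c.IsSub T) (h : S ⊆ T) {w : Q} (hw : w ∉ S)
    (hwT : w ∈ T) : 3 * S.ncard ≤ T.ncard := by
  have := finQ hQ
  rw [← c.cosets hQ hS hw]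
  apply Set.ncard_le_ncard _ (Set.toFinite _)
  rintro u (hu | ⟨s, hs, rfl⟩ | ⟨s, hs, rfl⟩)
  · exact h hu
  · exact hT.add hwT (h hs)
  · exact hT.add (hT.neg hwT) (h hs)

theorem cover {S : Set Q} (hS : c.IsSub S) {w : Q} (hw : w ∉ S) (hc : 81 ≤ S.ncard) (u : Q) :
    u ∈ S ∨ c.l (c.neg w) u ∈ S ∨ c.l w u ∈ S := by
  have := finQ hQ
  have h := c.cosets hQ hS hw
  have h2 : S ∪ (c.l w '' S ∪ c.l (c.neg w) '' S) = Set.univ := by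
    apply Set.eq_of_subset_of_ncard_le (Set.subset_univ _)
    rw [h, Set.ncard_univ, hQ]; omega
  have h3 : u ∈ S ∪ (c.l w '' S ∪ c.l (c.neg w) '' S) := by rw [h2]; trivial
  rcases h3 with hu | ⟨s, hs, rfl⟩ | ⟨s, hs, rfl⟩
  · exact Or.inl hu
  · right; left; rwa [neg_cancel]
  · right; right; rwa [cancel_neg]

theorem univ_of {S T : Set Q} (hS : c.IsSub S) (hc : 81 ≤ S.ncard) (hT : c.IsSub T) (h : S ⊆ T)
    {w : Q} (hw : w ∉ S) (hwT : w ∈ T) (u : Q) : u ∈ T := by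
  rcases c.cover hQ hS hw hc u with hu | hu | hu
  · exact h hu
  · exact hT.of_add (hT.neg hwT) (h hu)
  · exact hT.of_add hwT (h hu)

theorem le81 {S : Set Q} (hS : c.IsSub S) {w : Q} (hw : w ∉ S) : S.ncard ≤ 81 := by
  have := finQ hQ
  have h := c.three_mul hQ hS (T := Set.univ) ⟨trivial, fun _ _ => trivial, fun _ => trivial⟩
    (Set.subset_univ _) hw trivial
  rw [Set.ncard_univ, hQ] at h; omega

theorem span_o {a : Q} (ha : a ≠ c.o) {T : Set Q} (hT : c.IsSub T) (h : a ∈ T) : 3 ≤ T.ncard := by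
  have h1 : c.IsSub {c.o} := ⟨rfl, by rintro x y rfl rfl; exact c.l_o _, by
    rintro x rfl; exact c.neg_o⟩
  have := c.three_mul hQ h1 hT (by rintro x rfl; exact hT.o) (w := a) ha h
  rwa [Set.ncard_singleton] at this

theorem chain9 {Z T : Set Q} (hT : c.IsSub T) (hZ : c.IsSub Z) (h : Z ⊆ T) {x y z : Q}
    (hy : y ∈ T) (hz : z ∈ T) (hx : x ∈ Z) (hf : c.f x y z ≠ c.o)
    (h1 : ∀ t ∈ Z, c.Z3 x z t) (h2 : ∀ t ∈ Z, c.Z3 x y t) : 9 * Z.ncard ≤ T.ncard := by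
  have e1 : y ∉ Z := fun hy' => hf (by
    have := (h1 y hy').s23; rwa [Z3_f] at this)
  have e2 : z ∉ c.span (insert y Z) := fun hz' => hf (by
    have h3 := (c.Z3_sub x y).span_le (T := insert y Z)
      (by rintro t (rfl | ht); exacts [c.D_r _ _, h2 t ht]) hz'
    exact c.Z3_f.mp h3)
  have k1 := c.three_mul hQ hZ (c.span_sub (insert y Z))
    ((Set.subset_insert _ _).trans (c.sub_span _)) e1 (c.sub_span _ (Set.mem_insert _ _))
  have k2 := c.three_mul hQ (c.span_sub (insert y Z)) hT
    (hT.span_le (Set.insert_subset hy h)) e2 hz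
  omega

theorem chain27 {Z T : Set Q} (hT : c.IsSub T) (hZ : c.IsSub Z) (h : Z ⊆ T) {x y z : Q}
    (hx : x ∈ T) (hy : y ∈ T) (hz : z ∈ T) (hf : c.f x y z ≠ c.o)
    (h0 : ∀ t ∈ Z, c.Z3 y z t) (h1 : ∀ t ∈ Z, c.Z3 x z t) (h2 : ∀ t ∈ Z, c.Z3 x y t) :
    27 * Z.ncard ≤ T.ncard := by
  have e1 : x ∉ Z := fun hx' => hf (by
    have := (h0 x hx').s23.s12; rwa [Z3_f] at this)
  have k1 := c.three_mul hQ hZ (c.span_sub (insert x Z))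
    ((Set.subset_insert _ _).trans (c.sub_span _)) e1 (c.sub_span _ (Set.mem_insert _ _))
  have k2 := c.chain9 hQ hT (c.span_sub (insert x Z)) (hT.span_le (Set.insert_subset hx h))
    hy hz (c.sub_span _ (Set.mem_insert _ _)) hf
    ((c.Z3_sub x z).span_le (by rintro t (rfl | ht); exacts [c.D_l _ _, h1 t ht]))
    ((c.Z3_sub x y).span_le (by rintro t (rfl | ht); exacts [c.D_l _ _, h2 t ht]))
  omega

theorem trip81 {T : Set Q} (hT : c.IsSub T) {x y z : Q}
    (hx : x ∈ T) (hy : y ∈ T) (hz : z ∈ T) (hf : c.f x y z ≠ c.o) : 81 ≤ T.ncard := by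
  have hs : ({c.f x y z} : Set Q) ⊆ T := Set.singleton_subset_iff.mpr (hT.f hx hy hz)
  have k := c.chain27 hQ hT (c.span_sub {c.f x y z}) (hT.span_le hs)
    hx hy hz hf ((c.Z3_sub y z).span_le (by rintro t rfl; exact c.D_f23 _ _ _))
    ((c.Z3_sub x z).span_le (by rintro t rfl; exact c.D_f13 _ _ _))
    ((c.Z3_sub x y).span_le (by rintro t rfl; exact c.D_f12 _ _ _))
  have := c.span_o hQ hf (c.span_sub {c.f x y z}) (c.sub_span _ rfl)
  omega

omit hQ in
theorem Z3_o (s t : Q) : c.Z3 c.o s t := by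
  have : c.Z3 s t c.o := c.D_o s t
  exact this.s23.s12

omit hQ in
theorem center_sub (S : Set Q) : c.IsSub {s | ∀ u ∈ S, ∀ v ∈ S, c.Z3 s u v} where
  o := fun u _ v _ => c.Z3_o u v
  add := fun {x y} hx hy u hu v hv => by
    have := (c.Z3_sub u v).add (x := x) (y := y) ((hx u hu v hv).s12.s23) ((hy u hu v hv).s12.s23)
    exact Z3.s12 (Z3.s23 this)
  neg := fun {x} hx u hu v hv => by
    have := (c.Z3_sub u v).neg (x := x) ((hx u hu v hv).s12.s23)
    exact Z3.s12 (Z3.s23 this)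

theorem class2 (x y z s t : Q) : c.Z3 (c.f x y z) s t := by
  have := finQ hQ
  by_contra hcon
  set a0 := c.f x y z with ha0
  have ha0o : a0 ≠ c.o := fun h => hcon (by rw [h]; exact c.Z3_o _ _)
  set S := c.span {x, y, z} with hSdef
  have hS : c.IsSub S := c.span_sub _
  have hxS : x ∈ S := c.sub_span _ (by simp)
  have hyS : y ∈ S := c.sub_span _ (by simp)
  have hzS : z ∈ S := c.sub_span _ (by simp)
  have hcen : ∀ s ∈ S, ∀ t ∈ S, c.Z3 a0 s t := c.f_central x y z
  have hS1 : 81 ≤ S.ncard := c.trip81 hQ hS hxS hyS hzS ha0o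
  have hSu : ∃ w, w ∉ S := by
    by_contra h; push Not at h; exact hcon (hcen s (h s) t (h t))
  have hS2 : S.ncard = 81 := le_antisymm (by
    obtain ⟨w, hw⟩ := hSu; exact c.le81 hQ hS hw) hS1
  have ha0S : a0 ∈ S := hS.f hxS hyS hzS
  clear_value S
  -- the centre of S
  set Z := {s | ∀ u ∈ S, ∀ v ∈ S, c.Z3 s u v} ∩ S with hZ
  have hZs : c.IsSub Z := by
    have := c.center_sub S
    exact ⟨⟨this.o, hS.o⟩, fun hx hy => ⟨this.add hx.1 hy.1, hS.add hx.2 hy.2⟩,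
      fun hx => ⟨this.neg hx.1, hS.neg hx.2⟩⟩
  have hZ3 : Z.ncard ≤ 3 := by
    have := c.chain27 hQ hS hZs Set.inter_subset_right hxS hyS hzS ha0o
      (fun t ht => (ht.1 y hyS z hzS).s12.s23) (fun t ht => (ht.1 x hxS z hzS).s12.s23)
      (fun t ht => (ht.1 x hxS y hyS).s12.s23)
    omega
  have hZspan : ∀ a ∈ Z, a ≠ c.o → c.span {a} = Z := fun a ha hao => by
    apply Set.eq_of_subset_of_ncard_le (hZs.span_le (Set.singleton_subset_iff.mpr ha))
    have := c.span_o hQ hao (c.span_sub {a}) (c.sub_span _ rfl)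
    omega
  -- any triple with nonzero associator inside S
  have htrip : ∀ x ∈ S, ∀ y ∈ S, ∀ z ∈ S, c.f x y z ≠ c.o →
      c.span {x, y, z} = S ∧ c.f x y z ∈ Z := fun x hx y hy z hz h => by
    have h1 : c.span {x, y, z} = S := by
      apply Set.eq_of_subset_of_ncard_le (hS.span_le (by
        rintro t (rfl | rfl | rfl) <;> assumption))
      rw [hS2]
      exact c.trip81 hQ (c.span_sub _) (c.sub_span _ (by simp)) (c.sub_span _ (by simp))
        (c.sub_span _ (by simp)) h
    refine ⟨h1, ?_, hS.f hx hy hz⟩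
    have := c.f_central x y z
    rw [h1] at this
    exact this
  have ha0Z : a0 ∈ Z := ⟨hcen, ha0S⟩
  obtain ⟨w, hw, x1, hx1, hm⟩ : ∃ w, w ∉ S ∧ ∃ s ∈ S, ¬ c.Z3 w a0 s := by
    by_contra h; push Not at h
    have h1 : ∀ w, ∀ s ∈ S, c.Z3 w a0 s := fun w s hs => by
      by_cases hw : w ∈ S
      · exact (hcen w hw s hs).s12
      · exact h w hw s hs
    apply hcon
    by_cases hs : s ∈ S
    · exact (h1 t s hs).s12.s23
    · have := c.univ_of hQ hS hS1 (c.Z3_sub s a0) (h1 s) hs (c.D_l _ _) t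
      exact Z3.s12 this
  have hx1Z : x1 ∉ Z := fun h => by
    rw [← hZspan a0 ha0Z ha0o] at h
    exact hm ((c.Z3_sub w a0).span_le (by rintro t rfl; exact c.D_r _ _) h)
  obtain ⟨y1, hy1, z1, hz1, hf1⟩ : ∃ y ∈ S, ∃ z ∈ S, c.f x1 y z ≠ c.o := by
    by_contra h; push Not at h
    exact hx1Z ⟨fun u hu v hv => c.Z3_f.mpr (h u hu v hv), hx1⟩
  obtain ⟨-, haZ⟩ := htrip x1 hx1 y1 hy1 z1 hz1 hf1
  set a := c.f x1 y1 z1 with ha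
  have hmw : ¬ c.Z3 x1 a w := fun h => by
    have h2 : a0 ∈ c.span {a} := by rw [hZspan a haZ hf1]; exact ha0Z
    have := (c.Z3_sub w x1).span_le (T := {a})
      (by rintro t rfl; exact h.s23.s12) h2
    exact hm (Z3.s23 this)
  have haS : a ∈ S := haZ.2
  -- forget the original triple
  clear hm hcon
  set d := c.f x1 a w with hd
  have hdo : d ≠ c.o := fun h => hmw (c.Z3_f.mpr h)
  have hdS : d ∈ S := by
    by_contra h
    exact hmw (c.univ_of hQ hS hS1 (c.Z3_sub x1 a) (fun t ht => (haZ.1 x1 hx1 t ht).s12) h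
      (c.D_f12 _ _ _) w)
  obtain ⟨t1, ht1, hmt⟩ : ∃ t ∈ S, ¬ c.Z3 x1 t d := by
    by_contra h; push Not at h
    have hx1a : x1 ∉ c.span {a} := by rw [hZspan a haZ hf1]; exact hx1Z
    have c3 := c.span_o hQ hf1 (c.span_sub {a}) (c.sub_span _ rfl)
    have c9 := c.three_mul hQ (c.span_sub {a}) (c.span_sub {a, x1})
      (c.span_mono (by simp)) hx1a (c.sub_span _ (by simp))
    have hdax : d ∈ c.span {a, x1} := by
      by_contra hda
      have c27 := c.three_mul hQ (c.span_sub {a, x1}) (c.span_sub {d, a, x1})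
        (c.span_mono (by simp)) hda (c.sub_span _ (by simp))
      obtain ⟨v, hv, hvS⟩ : ∃ v ∈ S, S ⊆ c.span {v, d, a, x1} := by
        by_cases hall : S ⊆ c.span {d, a, x1}
        · exact ⟨d, hdS, hall.trans (c.span_mono (by simp))⟩
        · obtain ⟨v, hv, hv'⟩ := Set.not_subset.mp hall
          refine ⟨v, hv, (Set.eq_of_subset_of_ncard_le (hS.span_le ?_) ?_).ge⟩
          · rintro t (rfl | rfl | rfl | rfl) <;> assumption
          · have := c.three_mul hQ (c.span_sub {d, a, x1}) (c.span_sub {v, d, a, x1})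
              (c.span_mono (by simp)) hv' (c.sub_span _ (by simp))
            omega
      have g1 : ∀ t ∈ S, c.Z3 x1 v t := fun t ht => by
        refine (c.Z3_sub x1 v).span_le ?_ (hvS ht)
        rintro u (rfl | rfl | rfl | rfl)
        · exact c.D_r _ _
        · exact h v hv
        · exact (haZ.1 x1 hx1 v hv).s12.s23
        · exact c.D_l _ _
      apply hx1Z
      refine ⟨fun t ht u hu => ?_, hx1⟩
      refine (c.Z3_sub x1 t).span_le ?_ (hvS hu)
      rintro u (rfl | rfl | rfl | rfl)
      · exact (g1 t ht).s23
      · exact h t ht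
      · exact (haZ.1 x1 hx1 t ht).s12.s23
      · exact c.D_l _ _
    have c9' := c.chain9 hQ hS (c.span_sub {a, x1})
      (hS.span_le (by rintro t (rfl | rfl) <;> assumption)) hy1 hz1 (c.sub_span _ (by simp)) hf1
      ((c.Z3_sub x1 z1).span_le (by
        rintro t (rfl | rfl); exacts [c.D_f13 _ _ _, c.D_l _ _]))
      ((c.Z3_sub x1 y1).span_le (by
        rintro t (rfl | rfl); exacts [c.D_f12 _ _ _, c.D_l _ _]))
    have hx1d : x1 ∉ c.span {d, a} := fun hx => hmw (by
      have : c.Z3 a w x1 := (c.Z3_sub a w).span_le (by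
        rintro t (rfl | rfl); exacts [c.D_f23 _ _ _, c.D_l _ _]) hx
      exact this.s23.s12)
    have c3' := c.three_mul hQ (c.span_sub {d, a}) (c.span_sub {a, x1})
      ((c.span_sub _).span_le (by
        rintro t (rfl | rfl); exacts [hdax, c.sub_span _ (by simp)]))
        hx1d (c.sub_span _ (by simp))
    have hda : c.span {a} = c.span {d, a} := by
      apply Set.eq_of_subset_of_ncard_le (c.span_mono (by simp))
      omega
    have hda' : d ∈ Z := by
      rw [← hZspan a haZ hf1, hda]; exact c.sub_span _ (by simp)
    have had : a ∈ c.span {d} := by rw [hZspan d hda' hdo]; exact haZ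
    have : c.Z3 x1 w a := (c.Z3_sub x1 w).span_le (by rintro t rfl; exact c.D_f13 _ _ _) had
    exact hmw this.s23
  have hbo : c.f x1 t1 d ≠ c.o := fun h => hmt (c.Z3_f.mpr h)
  obtain ⟨hSx, hbZ⟩ := htrip x1 hx1 t1 ht1 d hdS hbo
  set b := c.f x1 t1 d with hb
  have hab : a ∈ c.span {b} := by rw [hZspan b hbZ hbo]; exact haZ
  have αa : c.D x1 t1 a = a := (haZ.1 x1 hx1 t1 ht1).s12.s23
  have αd : c.D x1 t1 d = c.l d b := c.Df _ _ _
  have βa : c.D x1 w a = c.l a (c.neg d) := by rw [Df, f_swap23]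
  by_cases he : c.f x1 t1 w = c.o
  · have αw : c.D x1 t1 w = w := c.f_o.mp he
    have hcm := c.aut_D (c.D_aut x1 t1) x1 w
    rw [αw, D_l] at hcm
    have := DFunLike.congr_fun hcm a
    rw [Equiv.Perm.mul_apply, Equiv.Perm.mul_apply, αa, βa, c.D_aut, αa, (c.D_aut _ _).neg] at this
    exact hmt (c.neg_inj ((c.l a).injective this))
  set e := c.f x1 t1 w with hedef
  set T := c.span {x1, t1, w} with hT
  have hTs : c.IsSub T := c.span_sub _
  have hx1T : x1 ∈ T := c.sub_span _ (by simp)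
  have ht1T : t1 ∈ T := c.sub_span _ (by simp)
  have hwT : w ∈ T := c.sub_span _ (by simp)
  have hT81 := c.trip81 hQ hTs hx1T ht1T hwT he
  have hecen : ∀ s ∈ T, ∀ t ∈ T, c.Z3 e s t := c.f_central x1 t1 w
  clear_value T
  have hST : d ∈ T → S ⊆ T := fun hd => by
    rw [← hSx]; exact hTs.span_le (by rintro t (rfl | rfl | rfl) <;> assumption)
  by_cases haT : a ∈ T
  · have hdT : d ∈ T := hTs.f hx1T haT hwT
    have hall := c.univ_of hQ hS hS1 hTs (hST hdT) hw hwT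
    have hecen : ∀ s t, c.Z3 e s t := fun s t => hecen s (hall s) t (hall t)
    by_cases heS : e ∈ S
    · have heZ : e ∈ Z := ⟨fun s _ t _ => hecen s t, heS⟩
      have hae : a ∈ c.span {e} := by rw [hZspan e heZ he]; exact haZ
      have : c.Z3 x1 w a := (c.Z3_sub x1 w).span_le (by
        rintro t rfl; exact (hecen x1 w).s12.s23) hae
      exact hmw this.s23
    · exact hmw (c.univ_of hQ hS hS1 (c.Z3_sub x1 a) (fun t ht => (haZ.1 x1 hx1 t ht).s12) heS
        ((hecen x1 a).s12.s23) w)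
  · have hcalc : ∀ a' ∈ Z, c.D x1 t1 a' = a' → c.l a' d ∈ T → False := fun a' ha' hα hs => by
      have h1 := hTs.D hx1T ht1T hs
      rw [c.D_aut, hα, αd, c.assoc] at h1
      have h2 : c.D a' d b = b := ha'.1 d hdS b hbZ.2
      rw [h2] at h1
      have hbT := hTs.of_add hs h1
      exact haT (hTs.span_le (Set.singleton_subset_iff.mpr hbT) hab)
    rcases c.cover hQ hTs haT hT81 d with h | h | h
    · exact haT (hST h haS)
    · refine hcalc _ (hZs.neg haZ) ?_ h
      rw [(c.D_aut _ _).neg, αa]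
    · exact hcalc _ haZ αa h

end CM
end DQ

namespace DQ

/-- Coordinates. -/
abbrev V := Fin 3 → ZMod 3

/-- The cubic form. -/
def h (u v : V) : ZMod 3 := (u 2 - v 2) * (u 0 * v 1 - u 1 * v 0)

/-- determinant of three vectors -/
def det3 (u v w : V) : ZMod 3 :=
  u 0 * (v 1 * w 2 - v 2 * w 1) - u 1 * (v 0 * w 2 - v 2 * w 0) + u 2 * (v 0 * w 1 - v 1 * w 0)

theorem three0 : (3 : ZMod 3) = 0 := rfl

theorem h_cob (x y z : V) : det3 x y z + h y z + h x (y + z) = h x y + h (x + y) z := by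
  simp only [h, det3, Pi.add_apply]
  linear_combination (-x 0 * y 2 * z 1 + x 1 * y 2 * z 0) * three0

theorem h_comm (x y : V) : h x y = h y x := by simp only [h]; ring

theorem h_zero (x : V) : h x 0 = 0 := by simp [h]
theorem zero_h (x : V) : h 0 x = 0 := by simp [h]
theorem h_self (x : V) : h x x = 0 := by simp [h]
theorem h_neg (x : V) : h x (-x) = 0 := by simp [h]; right; ring
theorem h_two (x y : V) : h (x + x) (-y) = - h x y := by
  simp only [h, Pi.add_apply, Pi.neg_apply]
  linear_combination ((-2 * x 2 * (x 0 * y 1 - x 1 * y 0) + x 2 * (x 0 * y 1 - x 1 * y 0)) + 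
    (x 2 * (x 0 * y 1 - x 1 * y 0) * 0 - y 2 * (x 0 * y 1 - x 1 * y 0))) * three0

/-- An abelian presentation of the quasigroup. -/
structure Dat (G : Type) [AddCommGroup G] where
  π : G →+ V
  θ : G →+ G
  ι : ZMod 3 →+ G
  πs : Function.Surjective π
  ιi : Function.Injective ι
  πι : ∀ m, π (ι m) = 0
  θι : ∀ m, θ (ι m) = 0
  πθ : ∀ x, π (θ x) = 0

/-- The quasigroup operation of a presentation. -/
def Dat.op {G : Type} [AddCommGroup G] (d : Dat G) (x y : G) : G :=
  x + x - y - d.θ (x - y) - d.ι (h (d.π x) (d.π y))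

namespace CM
variable {Q : Type} (c : CM Q)

/-- central elements -/
def Cen (s : Q) : Prop := ∀ u v, c.Z3 s u v

variable {c} in
theorem Cen.ladd {s : Q} (hs : c.Cen s) (u : Q) : c.l (c.l s u) = c.l s * c.l u := by
  have : c.D s u = 1 := by ext v; exact hs u v
  rw [l_add, this]; simp

variable {c} in
theorem Cen.comm {s : Q} (hs : c.Cen s) (u : Q) : c.l s * c.l u = c.l u * c.l s := by
  have : c.D u s = 1 := by ext v; exact (hs u v).s12
  have e := c.l_add u s
  rw [this, c.comm, hs.ladd] at e
  simpa using e

variable {c} in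
theorem Cen.comm' {s : Q} (hs : c.Cen s) (u v : Q) : c.l u (c.l s v) = c.l s (c.l u v) := 
  (DFunLike.congr_fun (hs.comm u) v).symm

variable {c} in
theorem Cen.ladd' {s : Q} (hs : c.Cen s) (u v : Q) : c.l (c.l s u) v = c.l s (c.l u v) := by
  rw [hs.ladd]; rfl

theorem Cen_sub : c.IsSub {s | c.Cen s} := by
  have := c.center_sub Set.univ
  simpa [Cen] using this

theorem cen_of_comm {s : Q} (hs : ∀ y, c.l s * c.l y = c.l y * c.l s) : c.Cen s := by
  intro u v
  have : c.D s u = 1 := by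
    rw [D_eq', ← hs]; group
  change c.D s u v = v
  rw [this]; rfl

variable (hc : ∀ x y z, c.Cen (c.f x y z))
include hc

theorem f_add3 (x y u v : Q) : c.f x y (c.l u v) = c.l (c.f x y u) (c.f x y v) := by
  apply c.f_eq
  rw [c.D_aut, Df, Df]
  rw [c.comm u (c.f x y u), (hc x y u).ladd', c.comm v, (hc x y v).comm' u, ← (hc x y u).ladd',
    c.comm (c.l u v)]

theorem f_add1 (x y u v : Q) : c.f (c.l u v) x y = c.l (c.f u x y) (c.f v x y) := by
  rw [← f_cyc, f_add3 c hc, f_cyc c u, f_cyc c v]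

theorem f_add2 (x y u v : Q) : c.f x (c.l u v) y = c.l (c.f x u y) (c.f x v y) := by
  rw [f_swap23, f_add3 c hc, neg_add, ← f_swap23, ← f_swap23]

end CM

/-- a map out of `ZMod 3` -/
def zm {Q : Type} (o a b : Q) (m : ZMod 3) : Q := if m = 0 then o else if m = 1 then a else b

theorem zm0 {Q : Type} (o a b : Q) : zm o a b 0 = o := rfl
theorem zm1 {Q : Type} (o a b : Q) : zm o a b 1 = a := rfl
theorem zm2 {Q : Type} (o a b : Q) : zm o a b 2 = b := rfl

theorem z3cases (m : ZMod 3) : m = 0 ∨ m = 1 ∨ m = 2 := by revert m; decide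

namespace CM
variable {Q : Type} (c : CM Q)

/-- multiples of an element of order three -/
def k (a : Q) (m : ZMod 3) : Q := zm c.o a (c.neg a) m

variable {c} in
theorem IsSub.k {S : Set Q} (hS : c.IsSub S) {a : Q} (h : a ∈ S) (m : ZMod 3) : c.k a m ∈ S := by
  rcases z3cases m with rfl | rfl | rfl
  · exact hS.o
  · exact h
  · exact hS.neg h

theorem k_add {a : Q} (ha : c.l a (c.l a a) = c.o) (m n : ZMod 3) :
    c.k a (m + n) = c.l (c.k a m) (c.k a n) := by
  have h2 : c.l a a = c.neg a := by rw [← c.neg_cancel a (c.l a a), ha, c.l_o]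
  have e12 : (1 : ZMod 3) + 1 = 2 := rfl
  have e21 : (1 : ZMod 3) + 2 = 0 := rfl
  have e22 : (2 : ZMod 3) + 1 = 0 := rfl
  have e11 : (2 : ZMod 3) + 2 = 1 := rfl
  unfold k
  rcases z3cases m with rfl | rfl | rfl <;> rcases z3cases n with rfl | rfl | rfl <;>
    simp only [add_zero, zero_add, e12, e21, e22, e11, zm0, zm1, zm2, c.l_o, c.o_l', h2, add_neg]
  · rw [c.comm, add_neg]
  · rw [← neg_add, h2, neg_neg]

theorem neg_ne {a : Q} (ha : c.l a (c.l a a) = c.o) (h0 : a ≠ c.o) : a ≠ c.neg a := by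
  intro h
  have h2 : c.l a a = c.neg a := by rw [← c.neg_cancel a (c.l a a), ha, c.l_o]
  have h3 : c.l a a = c.o := by nth_rw 2 [h]; exact c.add_neg a
  rw [h2, neg_eq_o] at h3
  exact h0 h3

theorem k_inj {a : Q} (ha : c.l a (c.l a a) = c.o) (h0 : a ≠ c.o) :
    Function.Injective (c.k a) := by
  have h1 := c.neg_ne ha h0
  have h2 : c.neg a ≠ c.o := fun h => h0 (c.neg_eq_o.mp h)
  intro m n h
  unfold k at h
  rcases z3cases m with rfl | rfl | rfl <;> rcases z3cases n with rfl | rfl | rfl <;>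
    simp_all [zm0, zm1, zm2, eq_comm]

theorem k_range {a : Q} (ha : c.l a (c.l a a) = c.o) : c.IsSub (Set.range (c.k a)) where
  o := ⟨0, rfl⟩
  add := by rintro _ _ ⟨m, rfl⟩ ⟨n, rfl⟩; exact ⟨m + n, c.k_add ha m n⟩
  neg := by
    rintro _ ⟨m, rfl⟩
    refine ⟨-m, ?_⟩
    rw [← c.neg_cancel (c.k a m) (c.k a (-m)), ← k_add c ha, add_neg_cancel, show c.k a 0 = c.o from rfl, c.l_o]

end CM

theorem ext3 {Q : Type} (c : CM Q) (P : Q → Q → Q → Prop) (K : Set Q) (x y z : Q)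
    (sw12 : ∀ {p q r}, P p q r → P q p r) (sw23 : ∀ {p q r}, P p q r → P p r q)
    (d1 : ∀ p q, P p p q) (aR : P x y z) (kk : ∀ p ∈ K, ∀ q r, P p q r)
    (sub : ∀ p q, c.IsSub {r | P p q r}) (huB : ∀ u, u ∈ c.span ({x, y, z} ∪ K)) (p q r : Q) :
    P p q r := by
  have d2 : ∀ p q, P p q p := fun p q => sw23 (d1 p q)
  have d3 : ∀ p q, P p q q := fun p q => sw12 (d2 q p)
  have s0 : ∀ p ∈ {x, y, z} ∪ K, ∀ q ∈ {x, y, z} ∪ K, ∀ r ∈ {x, y, z} ∪ K, P p q r := by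
    intro p hp q hq r hr
    rcases hp with hp | hp
    · rcases hq with hq | hq
      · rcases hr with hr | hr
        · rcases hp with rfl | rfl | rfl <;> rcases hq with rfl | rfl | rfl <;>
            rcases hr with rfl | rfl | rfl <;>
            first
            | exact d1 _ _
            | exact d2 _ _
            | exact d3 _ _
            | exact aR
            | exact sw12 aR
            | exact sw23 aR
            | exact sw23 (sw12 aR)
            | exact sw12 (sw23 aR)
            | exact sw12 (sw23 (sw12 aR))
        · exact sw23 (sw12 (kk r hr p q))
      · exact sw12 (kk q hq p r)
    · exact kk p hp q r
  have s1 : ∀ p ∈ {x, y, z} ∪ K, ∀ q ∈ {x, y, z} ∪ K, ∀ r, P p q r := fun p hp q hq r =>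
    (sub p q).span_le (s0 p hp q hq) (huB r)
  have s2 : ∀ p ∈ {x, y, z} ∪ K, ∀ q r, P p q r := fun p hp q r =>
    sw23 ((sub p r).span_le (fun q hq => sw23 (s1 p hp q hq r)) (huB q))
  exact sw12 (sw23 ((sub q r).span_le (fun p hp => sw23 (sw12 (s2 p hp q r))) (huB p)))

/-- coordinates of a nonassociative loop of order 243 -/
theorem coords {Q : Type} (hQ : Nat.card Q = 243) (c : CM Q) {x y z : Q} (ha : c.f x y z ≠ c.o) :
    ∃ π : Q → V, (∀ u v, π (c.l u v) = π u + π v) ∧ Function.Surjective π ∧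
      (∀ u v w, c.f u v w = c.k (c.f x y z) (det3 (π u) (π v) (π w))) ∧
      (∀ s, c.Cen s → π s = 0) := by
  have := CM.finQ hQ
  have hc : ∀ x y z, c.Cen (c.f x y z) := fun x y z s t => c.class2 hQ x y z s t
  set a := c.f x y z with hadef
  have h3 : c.l a (c.l a a) = c.o := c.f_three x y z
  have hR := c.k_range h3
  have huniv : c.IsSub (Set.univ : Set Q) :=
    ⟨trivial, fun _ _ => trivial, fun _ => trivial⟩
  have memR : ∀ p q r, c.f p q r ∈ Set.range (c.k a) := by
    by_contra hcon
    push Not at hcon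
    obtain ⟨p, q, r, hpqr⟩ := hcon
    set a' := c.f p q r with ha'
    have hCs := c.Cen_sub
    have c9 : 9 ≤ {s | c.Cen s}.ncard := by
      have k1 := c.span_o hQ ha hR ⟨1, rfl⟩
      have k2 := c.three_mul hQ hR (c.span_sub (insert a' (Set.range (c.k a))))
        ((Set.subset_insert _ _).trans (c.sub_span _)) hpqr (c.sub_span _ (Set.mem_insert _ _))
      have k3 := Set.ncard_le_ncard (hCs.span_le (T := insert a' (Set.range (c.k a))) (by
        rintro t (rfl | ⟨m, rfl⟩)
        · exact hc p q r
        · exact hCs.k (hc x y z) m)) (Set.toFinite _)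
      omega
    set B : Set Q := {x, y, z} ∪ {s | c.Cen s} with hB
    have huB : ∀ u, u ∈ c.span B := by
      have k := c.chain27 hQ (c.span_sub B) hCs (Set.subset_union_right.trans (c.sub_span _))
        (x := x) (y := y) (z := z) (c.sub_span _ (by simp [hB])) (c.sub_span _ (by simp [hB]))
        (c.sub_span _ (by simp [hB])) ha (fun t ht => (ht y z).s12.s23)
        (fun t ht => (ht x z).s12.s23) (fun t ht => (ht x y).s12.s23)
      intro u
      by_contra hu
      have := c.le81 hQ (c.span_sub B) hu
      omega
    have ooR : ∀ {p q r}, c.Z3 p q r → c.f p q r ∈ Set.range (c.k a) := fun h => by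
      rw [c.Z3_f.mp h]; exact ⟨0, rfl⟩
    have sw12 : ∀ {p q r}, c.f p q r ∈ Set.range (c.k a) → c.f q p r ∈ Set.range (c.k a) :=
      fun h => by rw [c.f_swap12]; exact hR.neg h
    have sw23 : ∀ {p q r}, c.f p q r ∈ Set.range (c.k a) → c.f p r q ∈ Set.range (c.k a) :=
      fun h => by rw [c.f_swap23]; exact hR.neg h
    have sub : ∀ p q, c.IsSub {r | c.f p q r ∈ Set.range (c.k a)} := fun p q =>
      ⟨ooR (c.D_o _ _), fun {u v} hx hy => by
        change c.f p q (c.l u v) ∈ Set.range (c.k a); rw [c.f_add3 hc]; exact hR.add hx hy, fun {u} hx => by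
        have e : c.f p q (c.neg u) = c.neg (c.f p q u) := by
          have := c.f_add3 hc p q u (c.neg u)
          rw [c.add_neg, c.f_o.mpr (c.D_o p q)] at this
          rw [← c.neg_cancel (c.f p q u) (c.f p q _), ← this, c.l_o]
        change c.f p q (c.neg u) ∈ Set.range (c.k a); rw [e]; exact hR.neg hx⟩
    have aR : c.f x y z ∈ Set.range (c.k a) := ⟨1, rfl⟩
    exact hpqr (ext3 c (fun p q r => c.f p q r ∈ Set.range (c.k a)) {s | c.Cen s} x y z
      sw12 sw23 (fun p q => sw23 (ooR (c.D_l p q))) aR (fun p hp q r => ooR (hp q r)) sub huB p q r)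
  choose F hF using memR
  have kinj := c.k_inj h3 ha
  have kadd := c.k_add h3
  have F1 : ∀ p q u v, F (c.l u v) p q = F u p q + F v p q := fun p q u v => kinj (by
    rw [kadd, hF, hF, hF, c.f_add1 hc])
  have F2 : ∀ p q u v, F p (c.l u v) q = F p u q + F p v q := fun p q u v => kinj (by
    rw [kadd, hF, hF, hF, c.f_add2 hc])
  have F3 : ∀ p q u v, F p q (c.l u v) = F p q u + F p q v := fun p q u v => kinj (by
    rw [kadd, hF, hF, hF, c.f_add3 hc])
  have F0 : ∀ {p q r}, F p q r = 0 ↔ c.Z3 p q r := fun {p q r} => by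
    rw [c.Z3_f, ← hF, ← zm0 c.o a (c.neg a)]
    exact ⟨fun h => by rw [h]; rfl, fun h => kinj h⟩
  have Fs12 : ∀ p q r, F q p r = - F p q r := fun p q r => by
    rw [eq_neg_iff_add_eq_zero]
    apply kinj
    rw [kadd, hF, hF, c.f_swap12, c.comm, c.add_neg]; rfl
  have Fs23 : ∀ p q r, F p r q = - F p q r := fun p q r => by
    rw [eq_neg_iff_add_eq_zero]
    apply kinj
    rw [kadd, hF, hF, c.f_swap23, c.comm, c.add_neg]; rfl
  have Fxyz : F x y z = 1 := kinj (by rw [hF]; rfl)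
  have F11 : ∀ p q, F p p q = 0 := fun p q => F0.mpr (by
    have : c.Z3 p q p := c.D_l p q
    exact this.s23)
  have F22 : ∀ p q, F p q q = 0 := fun p q => F0.mpr (c.D_r p q)
  have F12 : ∀ p q, F p q p = 0 := fun p q => F0.mpr (c.D_l p q)
  set π : Q → V := fun u => ![F u y z, F x u z, F x y u] with hπ
  have πadd : ∀ u v, π (c.l u v) = π u + π v := fun u v => by
    simp only [hπ, F1, F2, F3]; ext i; fin_cases i <;> simp
  have πx : π x = ![1, 0, 0] := by simp only [hπ, Fxyz, F11, F12]
  have πy : π y = ![0, 1, 0] := by simp only [hπ, Fxyz, F11, F22]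
  have πz : π z = ![0, 0, 1] := by simp only [hπ, Fxyz, F22, F12]
  have πo : π c.o = 0 := by
    have := πadd c.o c.o; rw [c.l_o] at this; exact left_eq_add.mp this
  have πn : ∀ u, π (c.neg u) = - π u := fun u => by
    have := πadd u (c.neg u)
    rw [c.add_neg, πo] at this
    exact (neg_eq_of_add_eq_zero_right this.symm).symm
  have m2 : (2 : ZMod 3) = -1 := rfl
  have πk : ∀ u m, π (c.k u m) = m • π u := fun u m => by
    rcases z3cases m with rfl | rfl | rfl
    · rw [CM.k, zm0, πo, zero_smul]
    · rw [CM.k, zm1, one_smul]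
    · rw [CM.k, zm2, πn, m2, neg_smul, one_smul]
  have πsurj : Function.Surjective π := fun v =>
    ⟨c.l (c.k x (v 0)) (c.l (c.k y (v 1)) (c.k z (v 2))), by
      rw [πadd, πadd, πk, πk, πk, πx, πy, πz]; ext i; fin_cases i <;> simp⟩
  set K : Set Q := {u | π u = 0} with hK
  have hKs : c.IsSub K := ⟨πo, fun {u v} hu hv => by
    change π _ = 0; rw [πadd, hu, hv, add_zero], fun {u} hu => by
    change π _ = 0; rw [πn, hu, neg_zero]⟩
  have hK0 : ∀ {u}, u ∈ K → c.Z3 y z u ∧ c.Z3 x z u ∧ c.Z3 x y u := fun {u} hu => by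
    have e0 : F u y z = 0 := congr_fun hu 0
    have e1 : F x u z = 0 := congr_fun hu 1
    have e2 : F x y u = 0 := congr_fun hu 2
    rw [F0] at e0 e1 e2
    exact ⟨e0.s12.s23, e1.s23, e2⟩
  have hK9 : K.ncard ≤ 9 := by
    have := c.chain27 hQ huniv hKs (Set.subset_univ _) (x := x) (y := y) (z := z) trivial trivial
      trivial ha (fun t ht => (hK0 ht).1) (fun t ht => (hK0 ht).2.1) (fun t ht => (hK0 ht).2.2)
    rw [Set.ncard_univ, hQ] at this
    omega
  have hcK : ∀ s, c.Cen s → π s = 0 := fun s hs => by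
    simp only [hπ, F0.mpr (hs y z), F0.mpr (hs x z).s12, F0.mpr (hs x y).s12.s23]
    ext i; fin_cases i <;> rfl
  have haK : a ∈ K := hcK a (hc x y z)
  have hKK : ∀ u, ∀ s ∈ K, ∀ t ∈ K, c.Z3 u s t := by
    intro u
    have hRK : Set.range (c.k a) ⊆ K := by rintro _ ⟨m, rfl⟩; exact hKs.k haK m
    have hcR : ∀ m, c.Cen (c.k a m) := fun m => c.Cen_sub.k (hc x y z) m
    by_cases hkr : K ⊆ Set.range (c.k a)
    · intro s hs t _
      obtain ⟨m, rfl⟩ := hkr hs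
      exact (hcR m u t).s12
    · obtain ⟨k0, hk0, hk0'⟩ := Set.not_subset.mp hkr
      have e1 := c.span_o hQ ha hR ⟨1, rfl⟩
      have e2 := c.three_mul hQ hR (c.span_sub (insert k0 (Set.range (c.k a))))
        ((Set.subset_insert _ _).trans (c.sub_span _)) hk0' (c.sub_span _ (Set.mem_insert _ _))
      have e3 : c.span (insert k0 (Set.range (c.k a))) = K := by
        apply Set.eq_of_subset_of_ncard_le (hKs.span_le (Set.insert_subset hk0 hRK))
        omega
      rw [← e3]
      apply c.Z3_span
      rintro s (rfl | ⟨m, rfl⟩) t (rfl | ⟨n, rfl⟩)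
      · exact c.D_r _ _
      · exact (hcR n u _).s12.s23
      · exact (hcR m u _).s12
      · exact (hcR m u _).s12
  set B : Set Q := {x, y, z} ∪ K with hB
  have huB : ∀ u, u ∈ c.span B := fun u => by
    have hs := c.span_sub B
    have hx : x ∈ c.span B := c.sub_span _ (by simp [hB])
    have hy : y ∈ c.span B := c.sub_span _ (by simp [hB])
    have hz : z ∈ c.span B := c.sub_span _ (by simp [hB])
    apply hs.of_add (hs.k hz (- π u 2))
    apply hs.of_add (hs.k hy (- π u 1))
    apply hs.of_add (hs.k hx (- π u 0))
    apply c.sub_span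
    right
    change π _ = 0
    rw [πadd, πadd, πadd, πk, πk, πk, πx, πy, πz]; ext i
    generalize π u = v
    fin_cases i <;> simp [Matrix.vecHead, Matrix.vecTail]
  have hKc : ∀ s ∈ K, c.Cen s := by
    intro s hs
    have := c.Z3_span s B (by
      have e := hK0 hs
      have xy := e.2.2.s23.s12
      have xz := e.2.1.s23.s12
      have yz := e.1.s23.s12
      rintro p (hp | hp) q (hq | hq)
      · rcases hp with rfl | rfl | rfl <;> rcases hq with rfl | rfl | rfl <;>
          first
          | exact c.D_r _ _
          | exact xy
          | exact xz
          | exact yz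
          | exact xy.s23
          | exact xz.s23
          | exact yz.s23
      · exact (hKK p s hs q hq).s12
      · exact (hKK q s hs p hp).s12.s23
      · exact hKK s p hp q hq)
    exact fun u v => this u (huB u) v (huB v)
  refine ⟨π, πadd, πsurj, ?_, hcK⟩
  suffices hdet : ∀ u v w, F u v w = det3 (π u) (π v) (π w) by
    intro u v w; rw [← hdet, hF]
  have G0 : ∀ p, F p = F p := fun _ => rfl
  have sub : ∀ p q, c.IsSub {r | F p q r = det3 (π p) (π q) (π r)} := fun p q =>
    ⟨by
      change F p q c.o = _
      rw [F0.mpr (c.D_o p q), πo]; simp [det3], fun {u v} hu hv => by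
      change F p q (c.l u v) = _
      change F p q u = _ at hu
      change F p q v = _ at hv
      rw [F3, hu, hv, πadd]; simp only [det3, Pi.add_apply]; ring, fun {u} hu => by
      change F p q (c.neg u) = _
      change F p q u = _ at hu
      have e : F p q (c.neg u) = - F p q u := by
        have := F3 p q u (c.neg u)
        rw [c.add_neg, F0.mpr (c.D_o p q)] at this
        exact (neg_eq_of_add_eq_zero_right this.symm).symm
      rw [e, hu, πn]; simp only [det3, Pi.neg_apply]; ring⟩
  have sw12 : ∀ {p q r}, F p q r = det3 (π p) (π q) (π r) → F q p r = det3 (π q) (π p) (π r) :=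
    fun {p q r} h => by rw [Fs12, h]; simp only [det3]; ring
  have sw23 : ∀ {p q r}, F p q r = det3 (π p) (π q) (π r) → F p r q = det3 (π p) (π r) (π q) :=
    fun {p q r} h => by rw [Fs23, h]; simp only [det3]; ring
  have kk : ∀ {p} q r, p ∈ K → F p q r = det3 (π p) (π q) (π r) := fun {p} q r hp => by
    have e : π p = 0 := hp
    rw [F0.mpr (hKc p hp q r), e]; simp [det3]
  have aR : F x y z = det3 (π x) (π y) (π z) := by
    rw [Fxyz, πx, πy, πz]; simp [det3]
  exact ext3 c (fun p q r => F p q r = det3 (π p) (π q) (π r)) K x y z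
      sw12 sw23 (fun p q => by rw [F11]; simp only [det3]; ring) aR (fun p hp q r => kk q r hp)
      sub huB

end DQ

open Quasigroup

namespace DQ

theorem CM.aut_f {Q : Type} (c : CM Q) {α : Equiv.Perm Q} (h : c.Aut α) (x y z : Q) :
    α (c.f x y z) = c.f (α x) (α y) (α z) := by
  have := DFunLike.congr_fun (c.aut_D h x y) z
  simp only [Equiv.Perm.mul_apply] at this
  rw [CM.f, h, h.neg, this]; rfl

/-- Abelian presentation of nonmedial distributive quasigroups of order 243. -/
theorem exists_dat {Q : Type} (hQ : Nat.card Q = 243) (q : Quasigroup Q) (hd : Distributive q)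
    (hm : ¬ Medial q) : ∃ (_ : AddCommGroup Q) (d : Dat Q), ∀ x y, q.mul x y = d.op x y := by
  have := CM.finQ hQ
  have : Nonempty Q := by
    by_contra h
    rw [not_nonempty_iff] at h
    rw [Nat.card_of_isEmpty] at hQ
    omega
  obtain ⟨c, L, R, hmul, hid, hL, hR, hw, hLR⟩ := exists_cm (Classical.arbitrary Q) q hd
  have hcomm : ∀ x, L (R x) = R (L x) := fun x => by
    have e1 : c.l (L (R x)) (L (L x)) = L x := by rw [← hL, hid]
    have e2 := hid (L x)
    apply (c.l (L (L x))).injective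
    rw [c.comm, e1, c.comm, e2]
  obtain ⟨x0, y0, z0, ha⟩ : ∃ x y z, c.f x y z ≠ c.o := by
    by_contra hcon
    push Not at hcon
    apply hm
    have hC : ∀ s, c.Cen s := fun s u v => c.Z3_f.mpr (hcon s u v)
    intro x y u v
    simp only [hmul, hL, hR]
    rw [(hC _).ladd', (hC _).ladd', hcomm, hcomm, (hC _).comm' (R (L y))]
  have hc : ∀ x y z, c.Cen (c.f x y z) := fun x y z s t => c.class2 hQ x y z s t
  obtain ⟨π, πadd, πs, hf, hcen⟩ := coords hQ c ha
  set a := c.f x0 y0 z0 with hadef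
  have h3 : c.l a (c.l a a) = c.o := c.f_three _ _ _
  have kinj := c.k_inj h3 ha
  have kadd := c.k_add h3
  have kcen : ∀ m, c.Cen (c.k a m) := fun m => c.Cen_sub.k (hc _ _ _) m
  have πk : ∀ m, π (c.k a m) = 0 := fun m => hcen _ (kcen m)
  have kl : ∀ m n w, c.l (c.k a m) (c.l (c.k a n) w) = c.l (c.k a (m + n)) w := fun m n w => by
    rw [kadd, (kcen m).ladd']
  have k0 : ∀ w, c.l (c.k a 0) w = w := fun w => c.o_l' w
  have πo : π c.o = 0 := by
    have := πadd c.o c.o; rw [c.l_o] at this; exact left_eq_add.mp this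
  have πn : ∀ u, π (c.neg u) = - π u := fun u => by
    have := πadd u (c.neg u)
    rw [c.add_neg, πo] at this
    exact (neg_eq_of_add_eq_zero_right this.symm).symm
  -- the map θ
  set t : Q → Q := fun x => c.l x (L x) with ht
  have tcen : ∀ x, c.Cen (t x) := fun x => by
    have e1 : c.l x = c.l (R x) * c.l (L x) := by
      conv_lhs => rw [← hid x]
      rw [c.mouf, mul_assoc (c.l (R x)), ← hLR, mul_assoc, mul_assoc, mul_inv_cancel,
        mul_one, hLR]
    have e2 : c.D x (L x) = 1 := by
      rw [c.D_eq', e1]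
      have := hLR x
      rw [← mul_assoc, this]; group
    have e3 : c.l (t x) = (c.l (L x) * (c.l (R x))⁻¹)⁻¹ * (c.l (L x) * c.l (L x) * c.l (L x)) := by
      rw [ht, c.l_add, e2, e1]; group
    apply c.cen_of_comm
    intro y
    have g1 : Commute (c.l (L x) * (c.l (R x))⁻¹) (c.l y) := hw x y
    have g2 : Commute (c.l (L x) * c.l (L x) * c.l (L x)) (c.l y) := c.cube (L x) y
    rw [e3]
    exact (g1.inv_left.mul_left g2).eq
  have hLt : ∀ x, L x = c.l (t x) (c.neg x) := fun x => by
    rw [ht, c.comm]; exact (c.neg_cancel x (L x)).symm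
  have tadd : ∀ x y, t (c.l x y) = c.l (t x) (t y) := fun x y => by
    have e : L (c.l x y) = c.l (c.l (t x) (t y)) (c.neg (c.l x y)) := by
      rw [hL, hLt, hLt y, (tcen x).ladd', (tcen y).comm', ← c.neg_add, (tcen x).ladd']
    change c.l (c.l x y) (L (c.l x y)) = _
    rw [e, (c.Cen_sub.add (tcen x) (tcen y)).comm', c.add_neg, c.l_o]
  have hLn : ∀ x, π (L x) = - π x := fun x => by
    rw [hLt, πadd, hcen _ (tcen x), πn, zero_add]
  have hLa : L a = c.neg a := by
    rw [hadef, c.aut_f hL, hf, hf x0 y0 z0, hLn, hLn, hLn]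
    have : det3 (-π x0) (-π y0) (-π z0) = - det3 (π x0) (π y0) (π z0) := by
      simp only [det3, Pi.neg_apply]; ring
    rw [this, ← c.neg_cancel (c.k a (det3 (π x0) (π y0) (π z0))) (c.k a (-_)), ← kadd,
      add_neg_cancel, show c.k a 0 = c.o from rfl, c.l_o]
  have to0 : t c.o = c.o := by
    have hLA : c.Aut L := hL
    rw [ht]; change c.l c.o (L c.o) = c.o
    rw [hLA.o, c.l_o]
  have ta : t a = c.o := by
    change c.l a (L a) = c.o
    rw [hLa, c.add_neg]
  have tk : ∀ m, t (c.k a m) = c.o := fun m => by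
    have e2 : c.k a 2 = c.l a a := kadd 1 1
    rcases z3cases m with rfl | rfl | rfl
    · exact to0
    · exact ta
    · rw [e2, tadd, ta, c.l_o]
  -- the group
  let add : Q → Q → Q := fun x y => c.l (c.k a (h (π x) (π y))) (c.l x y)
  have hπa : ∀ x y, π (add x y) = π x + π y := fun x y => by
    simp only [add, πadd, πk, zero_add]
  have addcen : ∀ {s} u, c.Cen s → add s u = c.l s u := fun {s} u hs => by
    simp only [add, hcen s hs, zero_h]; exact k0 _
  let i0 : Add Q := ⟨add⟩
  let i1 : Zero Q := ⟨c.o⟩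
  let i2 : Neg Q := ⟨c.neg⟩
  have hadd : ∀ x y, x + y = c.l (c.k a (h (π x) (π y))) (c.l x y) := fun _ _ => rfl
  let i3 : AddGroup Q := AddGroup.ofLeftAxioms
    (fun x y z => by
      rw [hadd (x + y), hadd x (y + z)]
      rw [show π (x + y) = π x + π y from hπa x y, show π (y + z) = π y + π z from hπa y z]
      rw [hadd x y, hadd y z, (kcen _).ladd', (kcen _).comm' x, kl, kl, c.assoc x y z, c.Df x y z,
        c.comm z, hf x y z, (kcen _).comm' (c.l x y), kl]
      congr 3
      rw [add_comm (h _ _), ← h_cob]; ring)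
    (fun x => by
      change c.l (c.k a (h (π c.o) (π x))) (c.l c.o x) = x
      rw [πo, zero_h, c.o_l']; exact k0 x)
    (fun x => by
      change c.l (c.k a (h (π (c.neg x)) (π x))) (c.l (c.neg x) x) = c.o
      rw [πn, h_comm, h_neg, c.comm (c.neg x), c.add_neg]; exact k0 _)
  let i4 : AddCommGroup Q := { i3 with
    add_comm := fun x y => by rw [hadd, hadd, h_comm, c.comm x] }
  have hneg : ∀ x : Q, -x = c.neg x := fun _ => rfl
  have hzero : (0 : Q) = c.o := rfl
  have hcadd : ∀ {s} u, c.Cen s → s + u = c.l s u := addcen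
  let d : Dat Q := {
    π := { toFun := π, map_zero' := πo, map_add' := hπa }
    θ := { toFun := t, map_zero' := to0, map_add' := fun x y => by
            rw [hadd, hcadd _ (tcen x), tadd, tk, tadd, c.o_l'] }
    ι := { toFun := fun m => c.k a (-m), map_zero' := by rw [neg_zero]; rfl,
           map_add' := fun m n => by rw [hcadd _ (kcen _), ← kadd, _root_.neg_add] }
    πs := πs
    ιi := fun m n e => neg_injective (kinj e)
    πι := fun m => πk _
    θι := fun m => tk _
    πθ := fun x => hcen _ (tcen x) }
  refine ⟨i4, d, fun x y => ?_⟩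
  have hRt : ∀ x, R x = c.l (c.neg (t x)) (c.l x x) := fun x => by
    apply (c.l (L x)).injective
    rw [c.comm, hid, hLt, (tcen x).ladd', (c.Cen_sub.neg (tcen x)).comm', c.cancel_neg, c.comm,
      c.dbl]
    change _ = c.l x (c.l x _)
    rw [c.add_neg, c.l_o]
  have e1 : d.op x y = c.k a (h (π x) (π y)) + (-(t x) + (t y + ((x + x) + -y))) := by
    have : d.ι (h (π x) (π y)) = - c.k a (h (π x) (π y)) := by
      rw [eq_neg_iff_add_eq_zero]
      change c.k a (-h (π x) (π y)) + _ = _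
      rw [hcadd _ (kcen _), ← kadd, neg_add_cancel]; rfl
    change x + x - y - d.θ (x - y) - d.ι (h (π x) (π y)) = _
    rw [this, map_sub]
    change x + x - y - (t x - t y) - _ = _
    abel
  rw [e1, hmul, hRt, hLt, hcadd _ (kcen _), hneg, hcadd _ (c.Cen_sub.neg (tcen x)),
    hcadd _ (tcen y), hadd (x + x), show π (x + x) = π x + π x from hπa x x, hneg, πn, h_two,
    hadd x x, h_self, k0, (c.Cen_sub.neg (tcen x)).ladd', (tcen y).comm', (kcen _).comm' (t y),
    (kcen _).comm' (c.neg (t x)), kl, add_neg_cancel, k0]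

end DQ

open Quasigroup

namespace DQ

/-- The quasigroup attached to a presentation. -/
noncomputable def Dat.quasi {G : Type} [AddCommGroup G] (d : Dat G) (hG : Nat.card G = 243)
    (hθ : ∀ x, d.θ (d.θ (d.θ x)) = 0) : Quasigroup G :=
  have : Finite G := Nat.finite_of_card_ne_zero (by omega)
  have ht : ∀ x : G, (243 : ℤ) • x = 0 := fun x => by
    have := card_nsmul_eq_zero' (G := G) (x := x)
    rw [hG] at this
    exact_mod_cast this
  { mul := d.op
    leftBij := fun x => by
      rw [← Finite.injective_iff_bijective]
      intro y z (e : d.op x y = d.op x z)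
      have e0 : d.π y = d.π z := by
        have := congrArg d.π e
        simpa [Dat.op, d.πι, d.πθ] using this
      unfold Dat.op at e
      rw [e0] at e
      have e1 : d.θ (y - z) = y - z := by
        rw [map_sub] at e ⊢
        rw [map_sub] at e
        have e2 := sub_left_inj.mp e
        rw [← sub_eq_zero] at e2 ⊢
        rw [← e2]; abel
      have e2 := hθ (y - z)
      rw [e1, e1, e1] at e2
      exact sub_eq_zero.mp e2
    rightBij := fun x => by
      rw [← Finite.injective_iff_bijective]
      intro y z (e : d.op y x = d.op z x)
      have e0 : d.π y = d.π z := by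
        have := congrArg d.π e
        simp only [Dat.op, map_sub, map_add, d.πι, d.πθ, sub_zero, sub_left_inj] at this
        have h3 : ∀ p q : V, p + p = q + q → p = q := by decide +kernel
        exact h3 _ _ this
      unfold Dat.op at e
      rw [e0] at e
      have e1 : d.θ (y - z) = (2 : ℤ) • (y - z) := by
        rw [map_sub] at e ⊢
        rw [map_sub] at e
        have e2 := sub_left_inj.mp e
        rw [← sub_eq_zero] at e2 ⊢
        rw [← neg_eq_zero, ← e2]; abel
      have e2 := hθ (y - z)
      rw [e1, map_zsmul, map_zsmul, e1, map_zsmul, e1, smul_smul, smul_smul] at e2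
      have e3 := ht (y - z)
      have : (y - z) = (-91 : ℤ) • ((2 * 2 * 2 : ℤ) • (y - z)) + (3 : ℤ) • ((243 : ℤ) • (y - z)) := by
        rw [smul_smul, smul_smul, ← add_smul]; norm_num
      rw [e2, e3] at this
      simpa [sub_eq_zero] using this }

theorem Dat.op_eq {G : Type} [AddCommGroup G] (d : Dat G) (x y : G) :
    d.op x y = x + x - y - d.θ (x - y) - d.ι (h (d.π x) (d.π y)) := rfl

theorem Dat.π_op {G : Type} [AddCommGroup G] (d : Dat G) (x y : G) :
    d.π (d.op x y) = - d.π x - d.π y := by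
  have h3 : ∀ p q : V, p + p - q = -p - q := by decide +kernel
  simp only [Dat.op, map_sub, map_add, d.πι, d.πθ, sub_zero, h3]

theorem Dat.quasi_dist {G : Type} [AddCommGroup G] (d : Dat G) (hG : Nat.card G = 243)
    (hθ : ∀ x, d.θ (d.θ (d.θ x)) = 0) : Distributive (d.quasi hG hθ) := by
  have key : ∀ a b c : ZMod 3, a = b → d.ι a = d.ι b := fun a b _ e => by rw [e]
  constructor
  · intro x y z
    change d.op x (d.op y z) = d.op (d.op x y) (d.op x z)
    have e1 : d.op x (d.op y z) = x + x - (y + y - z - d.θ (y - z)) - d.θ (x - (y + y - z - d.θ (y - z)))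
        + d.ι (h (d.π y) (d.π z) - h (d.π x) (- d.π y - d.π z)) := by
      rw [d.op_eq x (d.op y z), d.π_op, d.op_eq y z]
      simp only [map_sub, map_add, d.θι]; abel
    have e2 : d.op (d.op x y) (d.op x z) =
        (x + x - y - d.θ (x - y)) + (x + x - y - d.θ (x - y)) - (x + x - z - d.θ (x - z))
        - d.θ ((x + x - y - d.θ (x - y)) - (x + x - z - d.θ (x - z)))
        + d.ι (- h (d.π x) (d.π y) - h (d.π x) (d.π y) + h (d.π x) (d.π z)
          - h (- d.π x - d.π y) (- d.π x - d.π z)) := by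
      rw [d.op_eq (d.op x y), d.π_op, d.π_op, d.op_eq x y, d.op_eq x z]
      simp only [map_sub, map_add, map_neg, d.θι]; abel
    have e3 : h (d.π y) (d.π z) - h (d.π x) (- d.π y - d.π z) =
        - h (d.π x) (d.π y) - h (d.π x) (d.π y) + h (d.π x) (d.π z)
          - h (- d.π x - d.π y) (- d.π x - d.π z) := by
      generalize d.π x = u; generalize d.π y = v; generalize d.π z = w
      simp only [h, Pi.sub_apply, Pi.neg_apply]
      linear_combination (u 2 * (u 0 * v 1 - u 1 * v 0) - v 2 * (u 0 * v 1 - u 1 * v 0) -(v 2 * v 0 * u 1) + v 2 * v 1 * u 0  + w 2 * w 1 * u 0  - w 2 * w 0 * u 1 ) * three0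
    rw [e1, e2, e3]
    simp only [map_sub, map_add]; abel
  · intro x y z
    change d.op (d.op x y) z = d.op (d.op x z) (d.op y z)
    have e1 : d.op (d.op x y) z = (x + x - y - d.θ (x - y)) + (x + x - y - d.θ (x - y)) - z
        - d.θ ((x + x - y - d.θ (x - y)) - z)
        + d.ι (- h (d.π x) (d.π y) - h (d.π x) (d.π y) - h (- d.π x - d.π y) (d.π z)) := by
      rw [d.op_eq (d.op x y) z, d.π_op, d.op_eq x y]
      simp only [map_sub, map_add, map_neg, d.θι]; abel
    have e2 : d.op (d.op x z) (d.op y z) =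
        (x + x - z - d.θ (x - z)) + (x + x - z - d.θ (x - z)) - (y + y - z - d.θ (y - z))
        - d.θ ((x + x - z - d.θ (x - z)) - (y + y - z - d.θ (y - z)))
        + d.ι (- h (d.π x) (d.π z) - h (d.π x) (d.π z) + h (d.π y) (d.π z)
          - h (- d.π x - d.π z) (- d.π y - d.π z)) := by
      rw [d.op_eq (d.op x z), d.π_op, d.π_op, d.op_eq x z, d.op_eq y z]
      simp only [map_sub, map_add, map_neg, d.θι]; abel
    have e3 : - h (d.π x) (d.π y) - h (d.π x) (d.π y) - h (- d.π x - d.π y) (d.π z) =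
        - h (d.π x) (d.π z) - h (d.π x) (d.π z) + h (d.π y) (d.π z)
          - h (- d.π x - d.π z) (- d.π y - d.π z) := by
      generalize d.π x = u; generalize d.π y = v; generalize d.π z = w
      simp only [h, Pi.sub_apply, Pi.neg_apply]
      linear_combination (-(u 2 * u 0 * v 1 ) + u 2 * u 1 * v 0  + v 2 * u 0 * v 1  + v 2 * v 1 * w 0 - v 2 * u 1 * v 0  - v 2 * v 0 * w 1  - u 0 * w 2 * w 1  + u 1 * w 2 * w 0) * three0
    rw [e1, e2, e3]
    simp only [map_sub, map_add]; abel

theorem Dat.quasi_not_medial {G : Type} [AddCommGroup G] (d : Dat G) (hG : Nat.card G = 243)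
    (hθ : ∀ x, d.θ (d.θ (d.θ x)) = 0) : ¬ Medial (d.quasi hG hθ) := by
  intro hm
  obtain ⟨x, hx⟩ := d.πs ![1, 0, 0]
  obtain ⟨y, hy⟩ := d.πs ![0, 1, 0]
  obtain ⟨u, hu⟩ := d.πs ![0, 0, 1]
  have e : d.op (d.op x y) (d.op u 0) = d.op (d.op x u) (d.op y 0) := hm x y u 0
  have e2 : ∀ x y u, d.op (d.op x y) (d.op u 0) =
        (x + x - y - d.θ (x - y)) + (x + x - y - d.θ (x - y)) - (u + u - 0 - d.θ (u - 0))
        - d.θ ((x + x - y - d.θ (x - y)) - (u + u - 0 - d.θ (u - 0)))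
        + d.ι (- h (d.π x) (d.π y) - h (d.π x) (d.π y) + h (d.π u) (d.π 0)
          - h (- d.π x - d.π y) (- d.π u - d.π 0)) := by
    intro x y u
    rw [d.op_eq (d.op x y), d.π_op, d.π_op, d.op_eq x y, d.op_eq u 0]
    simp only [map_sub, map_add, map_neg, d.θι]; abel
  rw [e2, e2 x u y, ← sub_eq_zero] at e
  rw [hx, hy, hu, map_zero d.π] at e
  have n1 : -h ![1, 0, 0] ![0, 1, 0] - h ![1, 0, 0] ![0, 1, 0] + h ![0, 0, 1] 0
          - h (- ![1, 0, 0] - ![0, 1, 0]) (- ![0, 0, 1] - 0) = 0 := by decide +kernel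
  have n2 : -h ![1, 0, 0] ![0, 0, 1] - h ![1, 0, 0] ![0, 0, 1] + h ![0, 1, 0] 0
          - h (- ![1, 0, 0] - ![0, 0, 1]) (- ![0, 1, 0] - 0) = 1 := by decide +kernel
  rw [n1, n2] at e
  have e3 : d.ι 1 = 0 := by
    rw [← neg_eq_zero, ← e]; simp only [map_sub, map_add, map_zero]; abel
  have := d.ιi (e3.trans (map_zero d.ι).symm)
  exact absurd this (by decide)

/-- Elementary coordinate change. -/
def T (i j : Fin 3) : V →+ V where
  toFun u := fun l => if l = i then u i - u j else u l
  map_zero' := by ext l; simp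
  map_add' u v := by ext l; by_cases e : l = i <;> simp [e]; ring

theorem rho (i j : Fin 3) (hij : i ≠ j) : ∃ ρ : V → ZMod 3, (∀ u, ρ (-u) = - ρ u) ∧
    ∀ u v, h (T i j u) (T i j v) = h u v + ρ (u + v) - ρ u - ρ v := by
  have t : (3 : ZMod 3) = 0 := rfl
  fin_cases i <;> fin_cases j <;> first | exact absurd rfl hij | skip
  · refine ⟨fun _ => 0, by simp, fun u v => ?_⟩
    simp [h, T]; left; ring
  · refine ⟨fun u => - (u 2 ^ 2 * u 1), fun u => by simp, fun u v => ?_⟩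
    simp [h, T]; linear_combination (u 1 * u 2 * v 2 + u 2 * v 1 * v 2) * t
  · refine ⟨fun _ => 0, by simp, fun u v => ?_⟩
    simp [h, T]; left; ring
  · refine ⟨fun u => (u 2 ^ 2 * u 0), fun u => by simp, fun u v => ?_⟩
    simp [h, T]; linear_combination (-u 0 * u 2 * v 2 - u 2 * v 0 * v 2) * t
  · refine ⟨fun u => - (u 0 ^ 2 * u 1), fun u => by simp, fun u v => ?_⟩
    simp [h, T]; linear_combination (u 1 * u 0 * v 0 + u 0 * v 1 * v 0) * t
  · refine ⟨fun u => (u 1 ^ 2 * u 0), fun u => by simp, fun u v => ?_⟩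
    simp [h, T]; linear_combination (-u 0 * u 1 * v 1 - u 1 * v 0 * v 1) * t

/-- Changing the coordinates of a presentation. -/
def Dat.tr {G : Type} [AddCommGroup G] (d : Dat G) (i j : Fin 3) (hij : i ≠ j) : Dat G where
  π := (T i j).comp d.π
  θ := d.θ
  ι := d.ι
  πs := fun v => by
    obtain ⟨x, hx⟩ := d.πs (fun l => if l = i then v i + v j else v l)
    refine ⟨x, ?_⟩
    simp only [AddMonoidHom.comp_apply, hx]
    ext l; by_cases e : l = i <;> simp [T, e, hij.symm]
  ιi := d.ιi
  πι := fun m => by simp [d.πι]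
  θι := d.θι
  πθ := fun x => by simp [d.πθ]

theorem Dat.tr_iso {G : Type} [AddCommGroup G] (d : Dat G) (i j : Fin 3) (hij : i ≠ j) :
    ∃ f : G ≃ G, ∀ x y, f (d.op x y) = (d.tr i j hij).op (f x) (f y) := by
  obtain ⟨ρ, ho, hρ⟩ := rho i j hij
  refine ⟨⟨fun x => x + d.ι (ρ (d.π x)), fun x => x - d.ι (ρ (d.π x)), fun x => ?_, fun x => ?_⟩,
    fun x y => ?_⟩
  · simp [d.πι]
  · simp [d.πι]
  · change d.op x y + d.ι (ρ (d.π (d.op x y))) = (d.tr i j hij).op (x + d.ι (ρ (d.π x))) (y + d.ι (ρ (d.π y)))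
    rw [d.π_op, ← neg_add', ho]
    have e : ∀ z, (d.tr i j hij).π (z + d.ι (ρ (d.π z))) = T i j (d.π z) := fun z => by
      simp [Dat.tr, d.πι]
    conv_rhs => unfold Dat.op
    rw [e, e, hρ]
    change _ = _ - d.θ _ - d.ι _
    unfold Dat.op
    have e4 : ∀ m, d.ι m + d.ι m = - d.ι m := fun m => by
      rw [← map_add, ← map_neg]; congr 1; revert m; decide
    have e5 := e4 (ρ (d.π x))
    simp only [map_sub, map_add, map_neg, d.θι]
    have : d.ι (ρ (d.π x)) = - (d.ι (ρ (d.π x)) + d.ι (ρ (d.π x))) := by rw [e5, neg_neg]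
    rw [← sub_eq_zero] at e5 ⊢
    rw [← neg_eq_zero, ← e5]
    abel

end DQ

open Quasigroup

namespace DQ

/-- The kernel part of a model. -/
structure Base (K : Type) [AddCommGroup K] where
  φ : K →+ K
  ι : ZMod 3 →+ K
  ιi : Function.Injective ι
  φι : ∀ m, φ (ι m) = 0
  φφ : ∀ x, φ (φ x) = 0

/-- carry -/
def cr (x y : ZMod 3) : ℕ := (x.val + y.val) / 3

theorem cr_val (x y : ZMod 3) : x.val + y.val = (x + y).val + 3 * cr x y := by
  revert x y; decide
theorem cr_comm (x y : ZMod 3) : cr x y = cr y x := by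
  revert x y; decide
theorem cr_assoc (x y z : ZMod 3) : cr x y + cr (x + y) z = cr y z + cr x (y + z) := by
  revert x y z; decide
theorem cr_zero (x : ZMod 3) : cr 0 x = 0 := by
  revert x; decide

/-- natural linear combinations -/
def lc {K : Type} [AddCommGroup K] (κ : Fin 3 → K) (f : Fin 3 → ℕ) : K := ∑ i, f i • κ i

theorem lc_add {K : Type} [AddCommGroup K] (κ : Fin 3 → K) (f g : Fin 3 → ℕ) :
    lc κ (fun i => f i + g i) = lc κ f + lc κ g := by
  simp only [lc, add_smul, Finset.sum_add_distrib]

theorem lc_map {K G : Type} [AddCommGroup K] [AddCommGroup G] (F : K →+ G) (κ : Fin 3 → K)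
    (f : Fin 3 → ℕ) : F (lc κ f) = lc (fun i => F (κ i)) f := by
  simp only [lc, map_sum, map_nsmul]

theorem lc_three {K : Type} [AddCommGroup K] (κ : Fin 3 → K) (f : Fin 3 → ℕ) :
    lc κ (fun i => 3 * f i) = lc (fun i => 3 • κ i) f := by
  simp only [lc]
  exact Finset.sum_congr rfl fun i _ => by rw [smul_smul, mul_comm]

theorem lc_val {K : Type} [AddCommGroup K] (κ : Fin 3 → K) (u v : V) :
    lc κ (fun i => (u i).val) + lc κ (fun i => (v i).val) =
      lc κ (fun i => ((u + v) i).val) + lc (fun i => 3 • κ i) (fun i => cr (u i) (v i)) := by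
  rw [← lc_add, ← lc_three, ← lc_add]
  congr 1; ext i; exact cr_val _ _

/-- Extension of `V` by `K`. -/
@[ext] structure Ext {K : Type} (κ : Fin 3 → K) where
  v : V
  k : K

namespace Ext
variable {K : Type} [AddCommGroup K] (κ : Fin 3 → K)

noncomputable instance : Add (Ext κ) :=
  ⟨fun x y => ⟨x.v + y.v, x.k + y.k + lc κ (fun i => cr (x.v i) (y.v i))⟩⟩
noncomputable instance : Zero (Ext κ) := ⟨⟨0, 0⟩⟩
noncomputable instance : Neg (Ext κ) :=
  ⟨fun x => ⟨-x.v, -x.k - lc κ (fun i => cr (-x.v i) (x.v i))⟩⟩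

theorem add_v (x y : Ext κ) : (x + y).v = x.v + y.v := rfl
theorem add_k (x y : Ext κ) : (x + y).k = x.k + y.k + lc κ (fun i => cr (x.v i) (y.v i)) := rfl
theorem zero_v : (0 : Ext κ).v = 0 := rfl
theorem zero_k : (0 : Ext κ).k = 0 := rfl
theorem neg_v (x : Ext κ) : (-x).v = - x.v := rfl
theorem neg_k (x : Ext κ) : (-x).k = -x.k - lc κ (fun i => cr (-x.v i) (x.v i)) := rfl

noncomputable instance : AddGroup (Ext κ) := AddGroup.ofLeftAxioms
  (fun x y z => by
    ext1
    · simp only [add_v, add_assoc]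
    · simp only [add_k, add_v]
      have e : lc κ (fun i => cr (x.v i) (y.v i)) + lc κ (fun i => cr ((x.v + y.v) i) (z.v i)) =
          lc κ (fun i => cr (y.v i) (z.v i)) + lc κ (fun i => cr (x.v i) ((y.v + z.v) i)) := by
        rw [← lc_add, ← lc_add]; congr 1; ext i; exact cr_assoc _ _ _
      have : ∀ a b c p q : K, a + b + p + c + q = a + b + c + (p + q) := by intros; abel
      rw [this, e]; abel)
  (fun x => by
    ext1
    · simp only [add_v, zero_v, zero_add]
    · simp only [add_k, zero_v, zero_k, Pi.zero_apply, cr_zero]; simp [lc])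
  (fun x => by
    ext1
    · simp only [add_v, neg_v, zero_v, neg_add_cancel]
    · simp only [add_k, neg_k, neg_v, zero_k, Pi.neg_apply]; abel)

noncomputable instance : AddCommGroup (Ext κ) := { (inferInstance : AddGroup (Ext κ)) with
  add_comm := fun x y => by
    ext1
    · simp only [add_v, add_comm]
    · simp only [add_k, cr_comm (x.v _), add_comm x.k] }

/-- as a product -/
def equivProd : Ext κ ≃ V × K := ⟨fun x => (x.v, x.k), fun p => ⟨p.1, p.2⟩, fun _ => rfl, fun _ => rfl⟩

theorem card_eq (h9 : Nat.card K = 9) : Nat.card (Ext κ) = 243 := by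
  rw [Nat.card_congr (equivProd κ), Nat.card_prod, h9]
  simp

/-- the model presentation -/
noncomputable def dat (B : Base K) (τ : Fin 3 → K) (hκ : ∀ i, B.φ (κ i) = 3 • τ i) : Dat (Ext κ) where
  π := { toFun := fun x => x.v, map_zero' := rfl, map_add' := fun _ _ => rfl }
  θ := { toFun := fun x => ⟨0, lc τ (fun i => (x.v i).val) + B.φ x.k⟩
         map_zero' := by
          ext1
          · rfl
          · simp [zero_v, zero_k, lc]
         map_add' := fun x y => by
          ext1
          · simp only [add_v, add_zero]
          · simp only [add_k, add_v, Pi.zero_apply, cr_zero, map_add, lc_map, hκ]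
            have := lc_val τ x.v y.v
            have e : lc κ (fun _ => 0) = 0 := by simp [lc]
            rw [e]
            have : ∀ p q a b c d : K, a + b = c + d → c + (p + q + d) = a + p + (b + q) + 0 := by
              intro p q a b c d e
              have : c + (p + q + d) = (c + d) + p + q := by abel
              rw [this, ← e]; abel
            exact this _ _ _ _ _ _ (lc_val τ x.v y.v) }
  ι := { toFun := fun m => ⟨0, B.ι m⟩
         map_zero' := by rw [map_zero]; rfl
         map_add' := fun m n => by
          ext1
          · simp only [add_v, add_zero]
          · simp only [add_k, map_add, Pi.zero_apply, cr_zero]; simp [lc] }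
  πs := fun v => ⟨⟨v, 0⟩, rfl⟩
  ιi := fun m n e => B.ιi (congrArg Ext.k e)
  πι := fun _ => rfl
  θι := fun m => by
    ext1
    · rfl
    · change lc τ (fun i => ((0 : V) i).val) + B.φ (B.ι m) = 0
      rw [B.φι]; simp [lc]
  πθ := fun _ => rfl

theorem dat_θ (B : Base K) (τ : Fin 3 → K) (hκ : ∀ i, B.φ (κ i) = 3 • τ i) (x : Ext κ) :
    (dat κ B τ hκ).θ x = ⟨0, lc τ (fun i => (x.v i).val) + B.φ x.k⟩ := rfl

theorem dat_nil (B : Base K) (τ : Fin 3 → K) (hκ : ∀ i, B.φ (κ i) = 3 • τ i) (x : Ext κ) :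
    (dat κ B τ hκ).θ ((dat κ B τ hκ).θ ((dat κ B τ hκ).θ x)) = 0 := by
  simp only [dat_θ]
  ext1
  · rfl
  · have : ∀ t : K, lc τ (fun i => ((0 : V) i).val) + t = t := fun t => by simp [lc]
    simp only [this, B.φφ]; rfl

end Ext

/-- A presentation realizes given parameters. -/
structure Rl {K : Type} [AddCommGroup K] (B : Base K) (κ τ : Fin 3 → K) {G : Type} [AddCommGroup G]
    (d : Dat G) where
  e : Fin 3 → G
  j : K →+ G
  ji : Function.Injective j
  πe : ∀ i, d.π (e i) = Pi.single i 1
  πj : ∀ k, d.π (j k) = 0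
  js : ∀ x, d.π x = 0 → ∃ k, j k = x
  jι : ∀ m, j (B.ι m) = d.ι m
  e3 : ∀ i, 3 • e i = j (κ i)
  θe : ∀ i, d.θ (e i) = j (τ i)
  θj : ∀ k, d.θ (j k) = j (B.φ k)

theorem op_hom {G H : Type} [AddCommGroup G] [AddCommGroup H] (d : Dat G) (d' : Dat H)
    (F : G →+ H) (h1 : ∀ x, d'.π (F x) = d.π x) (h2 : ∀ x, d'.θ (F x) = F (d.θ x))
    (h3 : ∀ m, F (d.ι m) = d'.ι m) (x y : G) : F (d.op x y) = d'.op (F x) (F y) := by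
  simp only [Dat.op, map_sub, map_add, h1, h2, h3]

section
variable {K : Type} [AddCommGroup K] {B : Base K} {κ τ : Fin 3 → K} {G : Type} [AddCommGroup G]
  {d : Dat G}

theorem Rl.hκ (r : Rl B κ τ d) (i : Fin 3) : B.φ (κ i) = 3 • τ i := by
  apply r.ji
  rw [← r.θj, ← r.e3, map_nsmul, r.θe, map_nsmul]

theorem Rl.iso (r : Rl B κ τ d) :
    ∃ f : Ext κ ≃ G, ∀ x y, f ((Ext.dat κ B τ r.hκ).op x y) = d.op (f x) (f y) := by
  let F : Ext κ →+ G := AddMonoidHom.mk' (fun x => lc r.e (fun i => (x.v i).val) + r.j x.k)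
    (fun x y => by
      simp only [Ext.add_v, Ext.add_k, map_add, lc_map, ← r.e3]
      have : ∀ p q a b c d : G, a + b = c + d → c + (p + q + d) = a + p + (b + q) := by
        intro p q a b c d e
        have : c + (p + q + d) = (c + d) + p + q := by abel
        rw [this, ← e]; abel
      exact this _ _ _ _ _ _ (lc_val r.e x.v y.v))
  have Fx : ∀ x, F x = lc r.e (fun i => (x.v i).val) + r.j x.k := fun _ => rfl
  have πl : ∀ v : V, d.π (lc r.e (fun i => (v i).val)) = v := fun v => by
    rw [lc_map]
    simp only [r.πe, lc]
    have : ∀ v : V, ∑ i, (v i).val • (Pi.single i 1 : V) = v := by decide +kernel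
    exact this v
  have πF : ∀ x, d.π (F x) = x.v := fun x => by rw [Fx, map_add, πl, r.πj, add_zero]
  have z0 : lc r.e (fun i => ((0 : V) i).val) = 0 := by simp [lc]
  have bij : Function.Bijective F := by
    constructor
    · rw [injective_iff_map_eq_zero]
      intro x hx
      have hv : x.v = 0 := by rw [← πF, hx, map_zero]
      rw [Fx, hv, z0, zero_add] at hx
      have : x.k = 0 := r.ji (by rw [hx, map_zero])
      ext1
      · exact hv
      · exact this
    · intro g
      obtain ⟨k, hk⟩ := r.js (g - lc r.e (fun i => (d.π g i).val)) (by
        rw [map_sub, πl, sub_self])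
      exact ⟨⟨d.π g, k⟩, by rw [Fx, hk]; abel⟩
  refine ⟨Equiv.ofBijective F bij, fun x y => ?_⟩
  refine op_hom _ d F πF (fun x => ?_) (fun m => ?_) x y
  · rw [Ext.dat_θ, Fx, Fx, z0, zero_add, map_add, lc_map]
    simp only [r.θe, r.θj, map_add, lc_map]
  · change lc r.e (fun i => ((0 : V) i).val) + r.j (B.ι m) = d.ι m
    rw [z0, r.jι, zero_add]

/-- shifting the basis -/
def Rl.shift (r : Rl B κ τ d) (s : Fin 3 → K) :
    Rl B (fun i => κ i + 3 • s i) (fun i => τ i + B.φ (s i)) d where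
  e := fun i => r.e i + r.j (s i)
  j := r.j
  ji := r.ji
  πe := fun i => by rw [map_add, r.πe, r.πj, add_zero]
  πj := r.πj
  js := r.js
  jι := r.jι
  e3 := fun i => by rw [smul_add, r.e3, map_add, map_nsmul]
  θe := fun i => by rw [map_add, r.θe, r.θj, map_add]
  θj := r.θj

/-- elementary column operation -/
def tv {K : Type} [Add K] (i j : Fin 3) (κ : Fin 3 → K) : Fin 3 → K :=
  fun l => if l = j then κ j + κ i else κ l

/-- transforming the basis -/
def Rl.tr (r : Rl B κ τ d) (i j : Fin 3) (hij : i ≠ j) :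
    Rl B (tv i j κ) (tv i j τ) (d.tr i j hij) where
  e := tv i j r.e
  j := r.j
  ji := r.ji
  πe := fun l => by
    change T i j (d.π (tv i j r.e l)) = _
    unfold tv
    split_ifs with e
    · rw [map_add, r.πe, r.πe, e]
      ext p
      by_cases hp : p = i
      · simp [T, hp, hij]
      · simp [T, hp]
    · rw [r.πe]
      ext p
      by_cases hp : p = i
      · simp [T, hp, Pi.single_apply, Ne.symm e]
      · simp [T, hp]
  πj := fun k => by change T i j (d.π (r.j k)) = _; rw [r.πj, map_zero]
  js := fun x hx => r.js x (by
    change T i j (d.π x) = 0 at hx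
    have hj : d.π x j = 0 := by
      have := congr_fun hx j
      simpa [T, hij.symm] using this
    ext l
    by_cases e : l = i
    · have := congr_fun hx i
      simp [T, hj] at this
      rw [e, this]; rfl
    · have := congr_fun hx l
      simpa [T, e] using this)
  jι := r.jι
  e3 := fun l => by unfold tv; split_ifs <;> simp [r.e3]
  θe := fun l => by
    change d.θ _ = _
    unfold tv; split_ifs <;> simp [r.θe]
  θj := r.θj

/-- changing the kernel identification -/
def Rl.aut (r : Rl B κ τ d) (σ : K ≃+ K) (hι : ∀ m, σ (B.ι m) = B.ι m)
    (hφ : ∀ k, B.φ (σ k) = σ (B.φ k)) :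
    Rl B (fun i => σ (κ i)) (fun i => σ (τ i)) d where
  e := r.e
  j := r.j.comp σ.symm.toAddMonoidHom
  ji := fun x y h => σ.symm.injective (r.ji h)
  πe := r.πe
  πj := fun k => r.πj _
  js := fun x hx => by
    obtain ⟨k, hk⟩ := r.js x hx
    exact ⟨σ k, by simp [hk]⟩
  jι := fun m => by rw [← r.jι]; conv_lhs => rw [← hι m]
                    simp
  e3 := fun i => by simp [r.e3]
  θe := fun i => by simp [r.θe]
  θj := fun k => by
    have := hφ (σ.symm k)
    simp at this
    simp [r.θj, this]

end

/-- realizability of parameters by a quasigroup -/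
def Rz {K : Type} [AddCommGroup K] (B : Base K) {Q : Type} (q : Quasigroup Q) (κ τ : Fin 3 → K) :
    Prop :=
  ∃ (G : Type) (_ : AddCommGroup G) (d : Dat G) (_ : Rl B κ τ d) (f : Q ≃ G),
    ∀ x y, f (q.mul x y) = d.op (f x) (f y)

section
variable {K : Type} [AddCommGroup K] {B : Base K} {κ τ : Fin 3 → K} {Q : Type} {q : Quasigroup Q}

theorem Rz.hκ (r : Rz B q κ τ) (i : Fin 3) : B.φ (κ i) = 3 • τ i := by
  obtain ⟨G, _, d, r, -⟩ := r
  exact r.hκ i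

theorem Rz.shift (r : Rz B q κ τ) (s : Fin 3 → K) :
    Rz B q (fun i => κ i + 3 • s i) (fun i => τ i + B.φ (s i)) := by
  obtain ⟨G, i, d, r, f, hf⟩ := r
  exact ⟨G, i, d, r.shift s, f, hf⟩

theorem Rz.aut (r : Rz B q κ τ) (σ : K ≃+ K) (hι : ∀ m, σ (B.ι m) = B.ι m)
    (hφ : ∀ k, B.φ (σ k) = σ (B.φ k)) :
    Rz B q (fun i => σ (κ i)) (fun i => σ (τ i)) := by
  obtain ⟨G, i, d, r, f, hf⟩ := r
  exact ⟨G, i, d, r.aut σ hι hφ, f, hf⟩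

theorem Rz.tr (r : Rz B q κ τ) (i j : Fin 3) (hij : i ≠ j) : Rz B q (tv i j κ) (tv i j τ) := by
  obtain ⟨G, I, d, r, f, hf⟩ := r
  obtain ⟨F, hF⟩ := d.tr_iso i j hij
  exact ⟨G, I, d.tr i j hij, r.tr i j hij, f.trans F, fun x y => by simp [hf, hF]⟩

theorem Rz.iso (r : Rz B q κ τ) :
    ∃ f : Q ≃ Ext κ, ∀ x y, f (q.mul x y) = (Ext.dat κ B τ r.hκ).op (f x) (f y) := by
  obtain ⟨G, I, d, r, f, hf⟩ := r
  obtain ⟨F, hF⟩ := r.iso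
  refine ⟨f.trans F.symm, fun x y => ?_⟩
  simp only [Equiv.trans_apply, hf]
  rw [Equiv.symm_apply_eq, hF]
  simp

end

end DQ

open Quasigroup

namespace DQ

/-- cyclic kernel -/
def B9 (ε : ZMod 3) : Base (ZMod 9) where
  φ := AddMonoidHom.mulLeft ((3 * ε.val : ℕ) : ZMod 9)
  ι := AddMonoidHom.mk' (fun m => ((3 * m.val : ℕ) : ZMod 9)) (by decide)
  ιi := by
    have : ∀ m n : ZMod 3, ((3 * m.val : ℕ) : ZMod 9) = ((3 * n.val : ℕ) : ZMod 9) → m = n := by decide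
    exact fun m n => this m n
  φι := by
    have : ∀ ε m : ZMod 3, ((3 * ε.val : ℕ) : ZMod 9) * ((3 * m.val : ℕ) : ZMod 9) = 0 := by decide
    exact this ε
  φφ := by
    have : ∀ (ε : ZMod 3) (x : ZMod 9),
      ((3 * ε.val : ℕ) : ZMod 9) * (((3 * ε.val : ℕ) : ZMod 9) * x) = 0 := by decide
    exact this ε

theorem B9_φ (ε : ZMod 3) (x : ZMod 9) : (B9 ε).φ x = ((3 * ε.val : ℕ) : ZMod 9) * x := rfl
theorem B9_ι (ε : ZMod 3) (m : ZMod 3) : (B9 ε).ι m = ((3 * m.val : ℕ) : ZMod 9) := rfl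

/-- elementary abelian kernel -/
def B3 (ε : ZMod 3) : Base (ZMod 3 × ZMod 3) where
  φ := AddMonoidHom.mk' (fun x => (0, ε * x.1)) (fun x y => by simp [mul_add])
  ι := AddMonoidHom.mk' (fun m => (0, m)) (fun x y => by simp)
  ιi := fun m n e => (Prod.ext_iff.mp e).2
  φι := fun m => by simp
  φφ := fun m => by simp

theorem B3_φ (ε : ZMod 3) (x : ZMod 3 × ZMod 3) : (B3 ε).φ x = (0, ε * x.1) := rfl
theorem B3_ι (ε : ZMod 3) (m : ZMod 3) : (B3 ε).ι m = (0, m) := rfl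

theorem three_prod (s : ZMod 3 × ZMod 3) : 3 • s = 0 := by
  revert s; decide

section
variable {G : Type} [AddCommGroup G] (d : Dat G)

theorem card_ker (hG : Nat.card G = 243) : Nat.card d.π.ker = 9 := by
  have h1 := d.π.ker.card_mul_index
  rw [AddSubgroup.index_ker, AddMonoidHom.range_eq_top.mpr d.πs, hG] at h1
  have : Nat.card (⊤ : AddSubgroup V) = 27 := by
    rw [Nat.card_congr AddSubgroup.topEquiv.toEquiv]; simp
  rw [this] at h1
  omega

theorem mk_Rl {K : Type} [AddCommGroup K] (hK : Nat.card K = 9) (hG : Nat.card G = 243) (B : Base K)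
    (j : K →+ G) (ji : ∀ k, j k = 0 → k = 0) (πj : ∀ k, d.π (j k) = 0) (jι : ∀ m, j (B.ι m) = d.ι m)
    (θj : ∀ k, d.θ (j k) = j (B.φ k)) : ∃ κ τ, Nonempty (Rl B κ τ d) := by
  have ji : Function.Injective j := (injective_iff_map_eq_zero j).mpr ji
  have hk := card_ker d hG
  have js : ∀ x, d.π x = 0 → ∃ k, j k = x := by
    let J : K → d.π.ker := fun k => ⟨j k, πj k⟩
    have : Finite d.π.ker := Nat.finite_of_card_ne_zero (by omega)
    have hJ : Function.Bijective J := by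
      have : Finite K := Nat.finite_of_card_ne_zero (by omega)
      rw [Nat.bijective_iff_injective_and_card]
      exact ⟨fun a b e => ji (congrArg Subtype.val e), by omega⟩
    intro x hx
    obtain ⟨k, e⟩ := hJ.2 ⟨x, hx⟩
    exact ⟨k, congrArg Subtype.val e⟩
  choose e he using fun i : Fin 3 => d.πs (Pi.single i 1)
  choose κ hκ using fun i => js (3 • e i) (by
    rw [map_nsmul, he]
    have : ∀ v : V, 3 • v = 0 := by decide +kernel
    exact this _)
  choose τ hτ using fun i => js (d.θ (e i)) (d.πθ _)
  exact ⟨κ, τ, ⟨⟨e, j, ji, he, πj, js, jι, fun i => (hκ i).symm, fun i => (hτ i).symm, θj⟩⟩⟩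

theorem exists_b (hG : Nat.card G = 243) (hl : Function.Injective (d.op 0))
    (hr : Function.Injective (fun x => d.op x 0)) :
    ∃ b, d.π b = 0 ∧ (∀ m, d.ι m ≠ b) ∧ (∃ δ, 3 • b = d.ι δ) ∧ ∃ ε, d.θ b = d.ι ε := by
  have hk := card_ker d hG
  have : Finite d.π.ker := Nat.finite_of_card_ne_zero (by omega)
  obtain ⟨b, hb, hb'⟩ : ∃ b, d.π b = 0 ∧ ∀ m, d.ι m ≠ b := by
    by_contra! hn
    let J : ZMod 3 → d.π.ker := fun k => ⟨d.ι k, d.πι k⟩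
    have hJ : Function.Surjective J := fun x => by
      obtain ⟨m, hm⟩ := hn x x.2
      exact ⟨m, Subtype.ext hm⟩
    have := Nat.card_le_card_of_surjective J hJ
    rw [hk, Nat.card_zmod] at this; omega
  have b9 : 9 • b = 0 := by
    have := card_nsmul_eq_zero' (G := d.π.ker) (x := ⟨b, hb⟩)
    rw [hk] at this
    exact congrArg Subtype.val this
  have b2 : ∀ m, d.ι m ≠ 2 • b := fun m e => hb' (5 • m) (by
    rw [map_nsmul, e, smul_smul]
    have : (5 * 2) • b = 9 • b + b := by rw [← succ_nsmul]
    rw [this, b9, zero_add])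
  have dec : ∀ x, d.π x = 0 → ∃ m n : ZMod 3, m.val • b + d.ι n = x := by
    let J : ZMod 3 × ZMod 3 → d.π.ker := fun k => ⟨k.1.val • b + d.ι k.2, by
      change d.π _ = 0
      rw [map_add, map_nsmul, hb, d.πι]; simp⟩
    have hJ : Function.Bijective J := by
      rw [Nat.bijective_iff_injective_and_card]
      refine ⟨?_, by rw [hk]; simp⟩
      rintro ⟨m, n⟩ ⟨m', n'⟩ e
      have e : m.val • b + d.ι n = m'.val • b + d.ι n' := congrArg Subtype.val e
      by_cases hm : m = m'
      · subst hm
        rw [d.ιi (add_left_cancel e)]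
      · exfalso
        have key : ∀ (k : ℕ) (p : G) (a c : ZMod 3), k • b + p + d.ι a = p + d.ι c → k = 1 ∨ k = 2 →
            False := by
          intro k p a c e hk
          have e : d.ι (c - a) = k • b := by
            rw [map_sub, ← sub_eq_zero]
            rw [← sub_eq_zero] at e
            rw [← neg_eq_zero, ← e]; abel
          rcases hk with rfl | rfl
          · exact hb' _ (by rw [e, one_smul])
          · exact b2 _ e
        have : m.val < m'.val ∨ m'.val < m.val := by
          rcases lt_trichotomy m.val m'.val with h | h | h
          · exact Or.inl h
          · exact absurd (ZMod.val_injective 3 h) hm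
          · exact Or.inr h
        have l1 := ZMod.val_lt m
        have l2 := ZMod.val_lt m'
        rcases this with h | h
        · refine key (m'.val - m.val) (m.val • b) n' n ?_ (by omega)
          rw [← add_smul, Nat.sub_add_cancel h.le, e]
        · refine key (m.val - m'.val) (m'.val • b) n n' ?_ (by omega)
          rw [← add_smul, Nat.sub_add_cancel h.le, e]
    intro x hx
    obtain ⟨k, e⟩ := hJ.2 ⟨x, hx⟩
    exact ⟨k.1, k.2, congrArg Subtype.val e⟩
  refine ⟨b, hb, hb', ?_, ?_⟩
  · obtain ⟨m, n, e⟩ := dec (3 • b) (by rw [map_nsmul, hb, smul_zero])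
    rcases z3cases m with rfl | rfl | rfl
    · exact ⟨n, by rw [← e]; simp⟩
    · refine absurd ?_ (b2 n)
      have : (1 : ZMod 3).val = 1 := rfl
      rw [this] at e
      have : d.ι n = 3 • b - 1 • b := by rw [← e]; abel
      rw [this]; abel
    · refine absurd ?_ (hb' n)
      have : (2 : ZMod 3).val = 2 := rfl
      rw [this] at e
      have : d.ι n = 3 • b - 2 • b := by rw [← e]; abel
      rw [this]; abel
  · have L : ∀ y, d.op 0 y = - y + d.θ y := fun y => by
      simp only [Dat.op, map_zero, zero_h, map_sub]; abel
    have R : ∀ y, d.op y 0 = y + y - d.θ y := fun y => by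
      simp only [Dat.op, map_zero, h_zero, map_sub]; abel
    obtain ⟨m, n, e⟩ := dec (d.θ b) (d.πθ b)
    rcases z3cases m with rfl | rfl | rfl
    · exact ⟨n, by rw [← e]; simp⟩
    · have : (1 : ZMod 3).val = 1 := rfl
      rw [this] at e
      refine absurd (hl ?_) (hb' (-n))
      rw [L, L, ← e, d.θι, map_neg]; abel
    · have : (2 : ZMod 3).val = 2 := rfl
      rw [this] at e
      refine absurd (hr ?_) (hb' n)
      change d.op _ _ = d.op _ _
      rw [R, R, ← e, d.θι]
      have : ∀ n : ZMod 3, n + n = - n := by decide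
      rw [← map_add, this, map_neg]; abel

theorem base_dat (hG : Nat.card G = 243) (hl : Function.Injective (d.op 0))
    (hr : Function.Injective (fun x => d.op x 0)) :
    (∃ ε κ τ, Nonempty (Rl (B9 ε) κ τ d)) ∨ (∃ κ τ, Nonempty (Rl (B3 1) κ τ d)) ∨
      (∃ κ τ, Nonempty (Rl (B3 0) κ τ d)) := by
  obtain ⟨b, hb, hb', ⟨δ, hδ⟩, ε, hε⟩ := exists_b d hG hl hr
  have c9 : ∀ b ε, d.π b = 0 → 3 • b = d.ι 1 → d.θ b = d.ι ε →
      ∃ ε κ τ, Nonempty (Rl (B9 ε) κ τ d) := by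
    intro b ε hb h3 hθ
    refine ⟨ε, ?_⟩
    have b9 : 9 • b = 0 := by
      have : 9 • b = 3 • 3 • b := by rw [smul_smul]; rfl
      rw [this, h3, ← map_nsmul]
      have : 3 • (1 : ZMod 3) = 0 := rfl
      rw [this, map_zero]
    let j : ZMod 9 →+ G := ZMod.lift 9 ⟨zmultiplesHom G b, by simpa using (natCast_zsmul b 9).trans b9⟩
    have hj : ∀ n : ℕ, j (n : ZMod 9) = n • b := fun n => by
      have := ZMod.lift_castAddHom 9 ⟨zmultiplesHom G b, by simpa using (natCast_zsmul b 9).trans b9⟩ (n : ℤ)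
      simpa using this
    have hjk : ∀ k, ∃ n : ℕ, (n : ZMod 9) = k := fun k => ⟨k.val, by simp⟩
    refine mk_Rl d (by simp) hG (B9 ε) j ?_ ?_ ?_ ?_
    · intro k hk
      by_contra hne
      have : ∀ k : ZMod 9, k ≠ 0 → ∃ c : ℕ, c • k = ((3 : ℕ) : ZMod 9) := by
        intro k hk
        have : ∀ k : ZMod 9, k ≠ 0 → ∃ c : Fin 9, c.val • k = ((3 : ℕ) : ZMod 9) := by decide
        obtain ⟨c, hc⟩ := this k hk
        exact ⟨_, hc⟩
      obtain ⟨c, hc⟩ := this k hne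
      have := hj 3
      rw [← hc, map_nsmul, hk, smul_zero, h3] at this
      have := d.ιi ((map_zero d.ι).trans this)
      exact absurd this (by decide)
    · intro k
      obtain ⟨n, rfl⟩ := hjk k
      rw [hj, map_nsmul, hb, smul_zero]
    · intro m
      rw [B9_ι, hj, mul_comm, mul_smul, h3, ← map_nsmul]
      congr 1; simp
    · intro k
      obtain ⟨n, rfl⟩ := hjk k
      rw [B9_φ, ← Nat.cast_mul, hj, hj, map_nsmul, hθ]
      have : 3 * ε.val * n = n * (ε.val * 3) := by ring
      rw [this, mul_smul, mul_smul, h3, ← map_nsmul d.ι ε.val]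
      congr 2; simp
  have c3 : ∀ b ε, d.π b = 0 → (∀ m, d.ι m ≠ b) → 3 • b = 0 → d.θ b = d.ι ε →
      ∃ κ τ, Nonempty (Rl (B3 ε) κ τ d) := by
    intro b ε hb hb' h3 hθ
    let j0 : ZMod 3 →+ G := ZMod.lift 3 ⟨zmultiplesHom G b, by simpa using (natCast_zsmul b 3).trans h3⟩
    have hj0 : ∀ n : ℕ, j0 (n : ZMod 3) = n • b := fun n => by
      have := ZMod.lift_castAddHom 3 ⟨zmultiplesHom G b, by simpa using (natCast_zsmul b 3).trans h3⟩ (n : ℤ)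
      simpa using this
    have hjk : ∀ k, ∃ n : ℕ, (n : ZMod 3) = k := fun k => ⟨k.val, by simp⟩
    let j : ZMod 3 × ZMod 3 →+ G := j0.coprod d.ι
    have hj : ∀ m n, j (m, n) = j0 m + d.ι n := fun m n => AddMonoidHom.coprod_apply _ _ _
    refine mk_Rl d (by simp) hG (B3 ε) j ?_ ?_ ?_ ?_
    · rintro ⟨m, n⟩ e
      rw [hj] at e
      rcases z3cases m with rfl | rfl | rfl
      · rw [map_zero, zero_add] at e
        rw [d.ιi (e.trans (map_zero _).symm)]; rfl
      · exfalso
        have := hj0 1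
        rw [Nat.cast_one] at this
        rw [this, one_smul] at e
        refine hb' (-n) ?_
        rw [map_neg]; exact (eq_neg_of_add_eq_zero_left e).symm
      · exfalso
        have := hj0 2
        rw [Nat.cast_two] at this
        rw [this] at e
        refine hb' n ?_
        have e2 : b + d.ι n + b = 0 := by rw [← e]; abel
        have : d.ι n = (2 • b + d.ι n) - 3 • b + b := by abel
        rw [this, e, h3]; abel
    · rintro ⟨m, n⟩
      obtain ⟨k, rfl⟩ := hjk m
      rw [hj, hj0, map_add, map_nsmul, hb, d.πι]; simp
    · intro m
      rw [B3_ι, hj, map_zero, zero_add]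
    · rintro ⟨m, n⟩
      obtain ⟨k, rfl⟩ := hjk m
      rw [B3_φ, hj, hj, hj0, map_add, map_nsmul, hθ, d.θι, map_zero, zero_add, add_zero, ← map_nsmul]
      congr 1; simp [mul_comm]
  rcases z3cases δ with rfl | rfl | rfl
  · right
    rw [map_zero] at hδ
    rcases z3cases ε with rfl | rfl | rfl
    · exact Or.inr (c3 b 0 hb hb' hδ hε)
    · exact Or.inl (c3 b 1 hb hb' hδ hε)
    · refine Or.inl (c3 (-b) 1 (by rw [map_neg, hb, neg_zero]) (fun m e => hb' (-m) ?_)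
        (by rw [smul_neg, hδ, neg_zero]) (by rw [map_neg, hε, ← map_neg]; rfl))
      rw [map_neg, e, neg_neg]
  · exact Or.inl (c9 b ε hb hδ hε)
  · exact Or.inl (c9 (-b) (-ε) (by rw [map_neg, hb, neg_zero])
      (by rw [smul_neg, hδ, ← map_neg]; rfl) (by rw [map_neg, hε, ← map_neg]))

end

theorem exists_base {Q : Type} (hQ : Nat.card Q = 243) (q : Quasigroup Q) (hd : Distributive q)
    (hm : ¬ Medial q) : (∃ ε κ τ, Rz (B9 ε) q κ τ) ∨ (∃ κ τ, Rz (B3 1) q κ τ) ∨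
      (∃ κ τ, Rz (B3 0) q κ τ) := by
  obtain ⟨I, d, hop⟩ := exists_dat hQ q hd hm
  have hl : Function.Injective (d.op 0) := fun x y e => (q.leftBij 0).1 (by simpa [hop] using e)
  have hr : Function.Injective (fun x => d.op x 0) :=
    fun x y e => (q.rightBij 0).1 (by simpa [hop] using e)
  rcases base_dat d hQ hl hr with ⟨ε, κ, τ, ⟨r⟩⟩ | ⟨κ, τ, ⟨r⟩⟩ | ⟨κ, τ, ⟨r⟩⟩
  · exact Or.inl ⟨ε, κ, τ, Q, I, d, r, Equiv.refl _, hop⟩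
  · exact Or.inr (Or.inl ⟨κ, τ, Q, I, d, r, Equiv.refl _, hop⟩)
  · exact Or.inr (Or.inr ⟨κ, τ, Q, I, d, r, Equiv.refl _, hop⟩)

end DQ

namespace DQ

/-- base three digit -/
def dg (t n : ℕ) : ℕ := n / 3 ^ t % 3

/-- coding of a row -/
def encN (x y z : ℕ) : ℕ := x % 3 + 3 * (y % 3) + 9 * (z % 3)

/-- decoding of a row -/
def dec (n : ℕ) : V := fun i => ((n / 3 ^ i.val : ℕ) : ZMod 3)

theorem dec_dg (n : ℕ) (i : Fin 3) : dec n i = (dg i.val n : ZMod 3) := by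
  simp [dec, dg]

theorem dec_encN (x y z : ℕ) : dec (encN x y z) = ![(x : ZMod 3), (y : ZMod 3), (z : ZMod 3)] := by
  ext i
  fin_cases i
  · simp only [dec, encN]
    have : (x % 3 + 3 * (y % 3) + 9 * (z % 3)) / 3 ^ 0 = x % 3 + 3 * (y % 3) + 3 * (3 * (z % 3)) := by omega
    simp only [Fin.zero_eta, Fin.val_zero, this]
    push_cast
    have t : (3 : ZMod 3) = 0 := rfl
    simp [t]
  · simp only [dec, encN]
    have : (x % 3 + 3 * (y % 3) + 9 * (z % 3)) / 3 ^ 1 = y % 3 + 3 * (z % 3) := by omega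
    simp only [Fin.mk_one, Fin.val_one, this]
    push_cast
    have t : (3 : ZMod 3) = 0 := rfl
    simp [t]
  · simp only [dec, encN]
    have : (x % 3 + 3 * (y % 3) + 9 * (z % 3)) / 3 ^ 2 = z % 3 := by omega
    change (((x % 3 + 3 * (y % 3) + 9 * (z % 3)) / 3 ^ 2 : ℕ) : ZMod 3) = _
    rw [this]
    simp

theorem encN_lt (x y z : ℕ) : encN x y z < 27 := by unfold encN; omega

theorem dec_surj (v : V) : ∃ n, n < 27 ∧ dec n = v := by
  refine ⟨encN (v 0).val (v 1).val (v 2).val, encN_lt _ _ _, ?_⟩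
  rw [dec_encN]
  ext i
  fin_cases i <;> simp

/-- column operations on codes -/
def appOp (k n : ℕ) : ℕ :=
  match k with
  | 1 => encN (dg 0 n) (dg 1 n + dg 0 n) (dg 2 n)
  | 2 => encN (dg 0 n) (dg 1 n) (dg 2 n + dg 0 n)
  | 3 => encN (dg 0 n + dg 1 n) (dg 1 n) (dg 2 n)
  | 5 => encN (dg 0 n) (dg 1 n) (dg 2 n + dg 1 n)
  | 6 => encN (dg 0 n + dg 2 n) (dg 1 n) (dg 2 n)
  | 7 => encN (dg 0 n) (dg 1 n + dg 2 n) (dg 2 n)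
  | _ => n

/-- column operations -/
def tvO {K : Type} [Add K] (k : ℕ) : (Fin 3 → K) → (Fin 3 → K) :=
  match k with
  | 1 => tv 0 1
  | 2 => tv 0 2
  | 3 => tv 1 0
  | 5 => tv 1 2
  | 6 => tv 2 0
  | 7 => tv 2 1
  | _ => id

theorem dec_appOp (k n : ℕ) : dec (appOp k n) = tvO k (dec n) := by
  unfold appOp tvO
  split <;> first | rfl | skip
  all_goals
    rw [dec_encN]
    ext i
    fin_cases i <;> simp [tv, dec_dg]

theorem appOp_lt (k n : ℕ) (hn : n < 27) : appOp k n < 27 := by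
  unfold appOp
  split <;> first | exact encN_lt _ _ _ | exact hn

/-- a predicate closed under column operations -/
def Cl (P : List ℕ → Prop) : Prop := ∀ k l, P l → P (l.map (appOp k))

/-- sequences of column operations -/
def appL (ops : List ℕ) (n : ℕ) : ℕ := ops.foldl (fun x k => appOp k x) n

theorem appL_lt (ops : List ℕ) (n : ℕ) (hn : n < 27) : appL ops n < 27 := by
  induction ops generalizing n with
  | nil => exact hn
  | cons k ops ih => exact ih _ (appOp_lt _ _ hn)

theorem Cl.appL {P : List ℕ → Prop} (hP : Cl P) (ops l : List ℕ) (hl : P l) : P (l.map (appL ops)) := by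
  induction ops generalizing l with
  | nil =>
    have : DQ.appL [] = id := rfl
    simpa [this] using hl
  | cons k ops ih =>
    have := ih _ (hP k l hl)
    rw [List.map_map] at this
    exact this

/-- pivots -/
def piv : ℕ → List ℕ
  | 0 => [1]
  | 1 => [3]
  | 2 => [9, 18]
  | _ => []

/-- reduction table -/
def redT : List (List (List ℕ)) :=
  [[[], [], [1, 3, 1], [3, 1, 1], [1, 1], [1, 1, 3, 1], [3, 3, 1], [1], [3, 1], [6, 2, 2], [2, 2], [1, 2, 3, 1], [3, 1, 5, 1], [1, 5, 1], [5, 1, 6, 2], [6, 5, 1], [5, 1], [2, 3, 1], [6, 6, 2], [2], [6, 2], [3, 7, 2], [7, 2], [1, 6, 2], [3, 3, 1, 2], [1, 2], [3, 1, 2]],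
   [[], [], [], [], [3, 3], [3], [5, 7, 5], [3, 5, 7, 5], [5, 7, 3, 5], [7, 5, 5], [7, 5, 6, 5], [6, 7, 5, 5], [5, 5], [5, 6, 5], [3, 5, 5], [5, 5, 7, 5], [3, 5, 5, 7, 5], [5, 5, 7, 3, 5], [7, 7, 5], [6, 7, 7, 5], [7, 7, 3, 5], [5], [6, 5], [3, 5], [7, 5], [3, 7, 5], [7, 3, 5]],
   [[], [], [], [], [], [], [], [], [], [], [6, 6], [6], [7, 7], [6, 6, 7, 7], [6, 7, 7], [7], [6, 6, 7], [6, 7], [], [6], [6, 6], [7], [6, 7], [6, 6, 7], [7, 7], [6, 7, 7], [6, 6, 7, 7]]]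

/-- reduction -/
def red (p r : ℕ) : List ℕ := (redT.getD p []).getD r []

theorem red_spec (p : Fin 4) (r : Fin 27) :
    (appL (red p.val r.val) r.val < 3 ^ p.val ∨ appL (red p.val r.val) r.val ∈ piv p.val) ∧
      ∀ x : Fin 27, x.val < 3 ^ p.val → appL (red p.val r.val) x.val = x.val := by
  revert p r
  decide +kernel

/-- normal forms -/
def forms : ℕ → ℕ → List (List ℕ)
  | 0, _ => [[]]
  | n + 1, p => (List.range (3 ^ p)).flatMap (fun s => (forms n p).map (s :: ·)) ++
      (piv p).flatMap (fun s => (forms n (p + 1)).map (s :: ·))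

theorem piv_lt (p : ℕ) (x : ℕ) (hx : x ∈ piv p) : x < 3 ^ (p + 1) ∧ p < 3 := by
  unfold piv at hx
  split at hx <;> simp at hx <;> omega

theorem exists_form {P : List ℕ → Prop} (hP : Cl P) (n : ℕ) : ∀ (p : ℕ) (hp : p < 4) (dn rest : List ℕ),
    (∀ x ∈ dn, x < 3 ^ p) → rest.length = n → (∀ x ∈ rest, x < 27) → P (dn ++ rest) →
    ∃ f ∈ forms n p, P (dn ++ f) := by
  induction n with
  | zero =>
    intro p hp dn rest h1 h2 h3 h4
    rw [List.length_eq_zero_iff] at h2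
    subst h2
    exact ⟨[], by simp [forms], h4⟩
  | succ n ih =>
    intro p hp dn rest h1 h2 h3 h4
    obtain _ | ⟨r, rest⟩ := rest
    · simp at h2
    have hr : r < 27 := h3 r (by simp)
    obtain ⟨s1, s2⟩ := red_spec ⟨p, hp⟩ ⟨r, hr⟩
    simp only at s1 s2
    set ops := red p r with hops
    have h5 := hP.appL ops _ h4
    have p27 : 3 ^ p ≤ 27 := by
      have : 3 ^ p ≤ 3 ^ 3 := Nat.pow_le_pow_right (by norm_num) (by omega)
      simpa using this
    have e1 : dn.map (appL ops) = dn := by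
      conv_rhs => rw [← List.map_id dn]
      apply List.map_congr_left
      intro x hx
      exact s2 ⟨x, (h1 x hx).trans_le p27⟩ (h1 x hx)
    rw [List.map_append, e1, List.map_cons] at h5
    have h5 : P ((dn ++ [appL ops r]) ++ rest.map (appL ops)) := by simpa using h5
    have l2 : (rest.map (appL ops)).length = n := by simpa using h2
    have l3 : ∀ x ∈ rest.map (appL ops), x < 27 := by
      intro x hx
      obtain ⟨y, hy, rfl⟩ := List.mem_map.mp hx
      exact appL_lt _ _ (h3 y (by simp [hy]))
    rcases s1 with s1 | s1
    · obtain ⟨f, hf, hPf⟩ := ih p hp (dn ++ [appL ops r]) _ (by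
        intro x hx
        rcases List.mem_append.mp hx with hx | hx
        · exact h1 x hx
        · rw [List.mem_singleton.mp hx]; exact s1) l2 l3 h5
      refine ⟨appL ops r :: f, ?_, by simpa using hPf⟩
      rw [forms, List.mem_append, List.mem_flatMap]
      exact Or.inl ⟨_, List.mem_range.mpr s1, List.mem_map.mpr ⟨f, hf, rfl⟩⟩
    · obtain ⟨t1, t2⟩ := piv_lt _ _ s1
      obtain ⟨f, hf, hPf⟩ := ih (p + 1) (by omega) (dn ++ [appL ops r]) _ (by
        intro x hx
        rcases List.mem_append.mp hx with hx | hx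
        · exact (h1 x hx).trans (Nat.pow_lt_pow_right (by norm_num) (by omega))
        · rw [List.mem_singleton.mp hx]; exact t1) l2 l3 h5
      refine ⟨appL ops r :: f, ?_, by simpa using hPf⟩
      rw [forms, List.mem_append, List.mem_flatMap]
      exact Or.inr (List.mem_flatMap.mpr ⟨_, s1, List.mem_map.mpr ⟨f, hf, rfl⟩⟩)

/-- the six normal forms with two rows -/
def f6 : Fin 6 → ℕ × ℕ := ![(0, 0), (0, 1), (1, 0), (1, 1), (1, 2), (1, 3)]

theorem forms_two (f : List ℕ) (hf : f ∈ forms 2 0) : ∃ i, f = [(f6 i).1, (f6 i).2] := by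
  revert f
  decide +kernel

/-- linear combinations of codes -/
def linN (x a y c : ℕ) : ℕ := encN (x * dg 0 a + y * dg 0 c) (x * dg 1 a + y * dg 1 c) (x * dg 2 a + y * dg 2 c)

theorem dec_linN (x a y c : ℕ) (i : Fin 3) : dec (linN x a y c) i = x * dec a i + y * dec c i := by
  rw [linN, dec_encN]
  fin_cases i <;> simp [dec_dg]

/-- the additional row moves -/
def Dm (b g : ℕ) : List ℕ → List ℕ
  | [k', t', k, t] => [linN b k' 0 0, linN b t' 0 0, linN 1 k g k', linN 1 t g t']
  | l => l

/-- echelon form -/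
def ech : ℕ → ℕ → ℕ → List ℕ → List ℕ
  | 0, _, _, l => l
  | n + 1, k, p, l =>
    (fun l' => ech n (k + 1) (if (piv p).contains (l'.getD k 0) then p + 1 else p) l')
      (l.map (appL (red p (l.getD k 0))))

theorem Cl.ech {P : List ℕ → Prop} (hP : Cl P) (n : ℕ) : ∀ k p l, P l → P (ech n k p l) := by
  induction n with
  | zero => intro k p l hl; exact hl
  | succ n ih => intro k p l hl; exact ih _ _ _ (hP.appL _ _ hl)

/-- the moves -/
def Ds : List (ℕ × ℕ) := [(1, 0), (1, 1), (1, 2), (2, 0), (2, 1), (2, 2)]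

/-- representatives with four rows -/
def c68 : List (ℕ × ℕ × ℕ × ℕ) :=
  [(0, 0, 0, 0), (0, 0, 0, 1), (0, 0, 1, 0), (0, 0, 1, 1), (0, 0, 1, 2), (0, 0, 1, 3), (0, 1, 0, 0), (0, 1, 0, 3),
   (0, 1, 1, 0), (0, 1, 1, 3), (0, 1, 3, 0), (0, 1, 3, 3), (0, 1, 3, 6), (0, 1, 3, 9), (1, 0, 0, 0), (1, 0, 0, 1),
   (1, 0, 0, 3), (1, 0, 3, 0), (1, 0, 3, 1), (1, 0, 3, 3), (1, 0, 3, 6), (1, 0, 3, 9), (1, 1, 0, 0), (1, 1, 0, 1),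
   (1, 1, 0, 3), (1, 1, 3, 0), (1, 1, 3, 3), (1, 1, 3, 4), (1, 1, 3, 6), (1, 1, 3, 9), (1, 2, 0, 0), (1, 2, 0, 1),
   (1, 2, 0, 3), (1, 2, 3, 0), (1, 2, 3, 3), (1, 2, 3, 6), (1, 2, 3, 7), (1, 2, 3, 9), (1, 3, 0, 0), (1, 3, 0, 1),
   (1, 3, 0, 3), (1, 3, 0, 4), (1, 3, 0, 5), (1, 3, 0, 9), (1, 3, 0, 18), (1, 3, 3, 0), (1, 3, 3, 1), (1, 3, 3, 2),
   (1, 3, 3, 3), (1, 3, 3, 4), (1, 3, 3, 5), (1, 3, 3, 6), (1, 3, 3, 7), (1, 3, 3, 8), (1, 3, 3, 9), (1, 3, 3, 18),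
   (1, 3, 9, 0), (1, 3, 9, 1), (1, 3, 9, 9), (1, 3, 9, 10), (1, 3, 9, 18), (1, 3, 9, 19), (1, 3, 18, 0), (1, 3, 18, 1),
   (1, 3, 18, 9), (1, 3, 18, 10), (1, 3, 18, 18), (1, 3, 18, 19)]

/-- as lists -/
def toL (x : ℕ × ℕ × ℕ × ℕ) : List ℕ := [x.1, x.2.1, x.2.2.1, x.2.2.2]

theorem forms_four : (forms 4 0).all (fun f => Ds.any (fun D =>
    (c68.map toL).contains (ech 4 0 0 (Dm D.1 D.2 f)))) = true := by
  decide +kernel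

end DQ

open Quasigroup

namespace DQ

/-- first family -/
def κA (a : ℕ) : Fin 3 → ZMod 9 := fun i => ((dec a i).val : ZMod 9)
/-- first family -/
def τA (ε : ZMod 3) (a b : ℕ) : Fin 3 → ZMod 9 :=
  fun i => (ε.val : ZMod 9) * κA a i + (B9 ε).ι (dec b i)
/-- second family -/
def κB (b : ℕ) : Fin 3 → ZMod 3 × ZMod 3 := fun i => (0, dec b i)
/-- second family -/
def τB (a : ℕ) : Fin 3 → ZMod 3 × ZMod 3 := fun i => (dec a i, 0)
/-- third family -/
def κC (a b : ℕ) : Fin 3 → ZMod 3 × ZMod 3 := fun i => (dec a i, dec b i)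

theorem hA (ε : ZMod 3) (a b : ℕ) (i : Fin 3) : (B9 ε).φ (κA a i) = 3 • τA ε a b i := by
  simp only [τA, B9_φ, B9_ι]
  generalize κA a i = k
  generalize dec b i = m
  revert ε k m
  decide +kernel

theorem hB (a b : ℕ) (i : Fin 3) : (B3 1).φ (κB b i) = 3 • τB a i := by
  rw [three_prod, B3_φ]; simp [κB]

theorem hC (a b c d : ℕ) (i : Fin 3) : (B3 0).φ (κC a c i) = 3 • κC b d i := by
  rw [three_prod, B3_φ]; simp

/-- Transport of a model to `Fin 243`. -/
noncomputable def mkQ {K : Type} [AddCommGroup K] (h9 : Nat.card K = 9) (κ : Fin 3 → K) (B : Base K)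
    (τ : Fin 3 → K) (hκ : ∀ i, B.φ (κ i) = 3 • τ i) : Quasigroup (Fin 243) :=
  have : Finite (Ext κ) := Nat.finite_of_card_ne_zero (by rw [Ext.card_eq κ h9]; norm_num)
  let E : Ext κ ≃ Fin 243 := Finite.equivFinOfCardEq (Ext.card_eq κ h9)
  let q := (Ext.dat κ B τ hκ).quasi (Ext.card_eq κ h9) (Ext.dat_nil κ B τ hκ)
  { mul := fun x y => E (q.mul (E.symm x) (E.symm y))
    leftBij := fun x => E.bijective.comp ((q.leftBij (E.symm x)).comp E.symm.bijective)
    rightBij := fun x => E.bijective.comp ((q.rightBij (E.symm x)).comp E.symm.bijective) }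

section
variable {K : Type} [AddCommGroup K] (h9 : Nat.card K = 9) (κ : Fin 3 → K) (B : Base K)
    (τ : Fin 3 → K) (hκ : ∀ i, B.φ (κ i) = 3 • τ i)

theorem mkQ_equiv : ∃ E : Ext κ ≃ Fin 243, ∀ x y, E ((Ext.dat κ B τ hκ).op x y) =
    (mkQ h9 κ B τ hκ).mul (E x) (E y) := by
  have : Finite (Ext κ) := Nat.finite_of_card_ne_zero (by rw [Ext.card_eq κ h9]; norm_num)
  refine ⟨Finite.equivFinOfCardEq (Ext.card_eq κ h9), fun x y => ?_⟩
  simp only [mkQ, Equiv.symm_apply_apply]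
  rfl

theorem mkQ_dist : Distributive (mkQ h9 κ B τ hκ) := by
  obtain ⟨E, hE⟩ := mkQ_equiv h9 κ B τ hκ
  obtain ⟨h1, h2⟩ := (Ext.dat κ B τ hκ).quasi_dist (Ext.card_eq κ h9) (Ext.dat_nil κ B τ hκ)
  constructor
  · intro x y z
    obtain ⟨x, rfl⟩ := E.surjective x
    obtain ⟨y, rfl⟩ := E.surjective y
    obtain ⟨z, rfl⟩ := E.surjective z
    simp only [← hE]
    exact congrArg E (h1 x y z)
  · intro x y z
    obtain ⟨x, rfl⟩ := E.surjective x
    obtain ⟨y, rfl⟩ := E.surjective y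
    obtain ⟨z, rfl⟩ := E.surjective z
    simp only [← hE]
    exact congrArg E (h2 x y z)

theorem mkQ_not_medial : ¬ Medial (mkQ h9 κ B τ hκ) := by
  intro hm
  obtain ⟨E, hE⟩ := mkQ_equiv h9 κ B τ hκ
  refine (Ext.dat κ B τ hκ).quasi_not_medial (Ext.card_eq κ h9) (Ext.dat_nil κ B τ hκ) ?_
  intro x y u v
  have := hm (E x) (E y) (E u) (E v)
  simp only [← hE] at this
  exact E.injective this

theorem mkQ_iso {Q : Type} {q : Quasigroup Q} (r : Rz B q κ τ) : Iso q (mkQ h9 κ B τ hκ) := by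
  obtain ⟨E, hE⟩ := mkQ_equiv h9 κ B τ hκ
  obtain ⟨f, hf⟩ := r.iso
  exact ⟨f.trans E, fun x y => by
    rw [Equiv.trans_apply, hf, hE]; rfl⟩

end

theorem card_Z9 : Nat.card (ZMod 9) = 9 := by simp
theorem card_Z33 : Nat.card (ZMod 3 × ZMod 3) = 9 := by simp

/-- first family -/
noncomputable def qA (ε : ZMod 3) (a b : ℕ) : Quasigroup (Fin 243) :=
  mkQ card_Z9 (κA a) (B9 ε) (τA ε a b) (hA ε a b)
/-- second family -/
noncomputable def qB (a b : ℕ) : Quasigroup (Fin 243) :=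
  mkQ card_Z33 (κB b) (B3 1) (τB a) (hB a b)
/-- third family -/
noncomputable def qC (a b c d : ℕ) : Quasigroup (Fin 243) :=
  mkQ card_Z33 (κC a c) (B3 0) (κC b d) (hC a b c d)

theorem Rz.trO {K : Type} [AddCommGroup K] {B : Base K} {κ τ : Fin 3 → K} {Q : Type}
    {q : Quasigroup Q} (r : Rz B q κ τ) (k : ℕ) : Rz B q (tvO k κ) (tvO k τ) := by
  unfold tvO
  split <;> first | exact r | exact r.tr _ _ (by decide)

theorem tvO_map {K L : Type} [AddCommGroup K] [AddCommGroup L] (k : ℕ) (F : K →+ L) (κ : Fin 3 → K)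
    (i : Fin 3) : F (tvO k κ i) = tvO k (fun i => F (κ i)) i := by
  unfold tvO
  split <;> first | rfl | skip
  all_goals
    unfold tv
    split_ifs
    · exact map_add _ _ _
    · rfl

theorem tvO_map2 {K L : Type} [AddCommGroup K] [AddCommGroup L] (k : ℕ) (F : K × K →+ L)
    (κ τ : Fin 3 → K) (i : Fin 3) :
    F (tvO k κ i, tvO k τ i) = tvO k (fun i => F (κ i, τ i)) i := by
  have e : (tvO k κ i, tvO k τ i) = tvO k (fun i => (κ i, τ i)) i := by
    ext
    · exact (tvO_map k (AddMonoidHom.fst K K) (fun i => (κ i, τ i)) i).symm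
    · exact (tvO_map k (AddMonoidHom.snd K K) (fun i => (κ i, τ i)) i).symm
  rw [e, tvO_map]

section
variable {Q : Type} {q : Quasigroup Q}

/-- reduction modulo three -/
def rd : ZMod 9 →+ ZMod 3 := (ZMod.castHom (by norm_num : 3 ∣ 9) (ZMod 3)).toAddMonoidHom

/-- the difference -/
def dfA (ε : ZMod 3) : ZMod 9 × ZMod 9 →+ ZMod 9 :=
  (AddMonoidHom.snd _ _) - (AddMonoidHom.mulLeft (ε.val : ZMod 9)).comp (AddMonoidHom.fst _ _)

theorem dfA_eq (ε : ZMod 3) (x y : ZMod 9) : dfA ε (x, y) = y - ε.val * x := rfl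

/-- predicate for the first family -/
def PA (q : Quasigroup Q) (ε : ZMod 3) (l : List ℕ) : Prop := ∃ a b, l = [a, b] ∧
  ∃ κ τ, Rz (B9 ε) q κ τ ∧ (∀ i, rd (κ i) = dec a i) ∧ ∀ i, dfA ε (κ i, τ i) = (B9 ε).ι (dec b i)

theorem PA_cl (ε : ZMod 3) : Cl (PA q ε) := by
  rintro k l ⟨a, b, rfl, κ, τ, r, h1, h2⟩
  refine ⟨appOp k a, appOp k b, rfl, _, _, r.trO k, fun i => ?_, fun i => ?_⟩
  · rw [tvO_map, dec_appOp]
    simp only [h1]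
  · rw [tvO_map2, dec_appOp, tvO_map]
    simp only [h2]

theorem complA {ε : ZMod 3} {κ τ : Fin 3 → ZMod 9} (r : Rz (B9 ε) q κ τ) :
    ∃ i, Iso q (qA ε (f6 i).1 (f6 i).2) := by
  have h0 : ∀ (ε : ZMod 3) (x y : ZMod 9), ((3 * ε.val : ℕ) : ZMod 9) * x = 3 • y →
    ∃ m : ZMod 3, y - ε.val * x = ((3 * m.val : ℕ) : ZMod 9) := by decide +kernel
  choose m hm using fun i => h0 ε (κ i) (τ i) (r.hκ i)
  obtain ⟨a, ha, ha'⟩ := dec_surj (fun i => rd (κ i))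
  obtain ⟨b, hb, hb'⟩ := dec_surj m
  have hP : PA q ε ([] ++ [a, b]) := ⟨a, b, rfl, κ, τ, r, fun i => by rw [ha'], fun i => by
    rw [dfA_eq, hm, hb', B9_ι]⟩
  obtain ⟨f, hf, hP⟩ := exists_form (PA_cl ε) 2 0 (by norm_num) [] [a, b] (by simp) rfl
    (by simp [ha, hb]) hP
  obtain ⟨i, rfl⟩ := forms_two f hf
  refine ⟨i, ?_⟩
  obtain ⟨a, b, e, κ, τ, r, h1, h2⟩ := hP
  have e1 : (f6 i).1 = a ∧ (f6 i).2 = b := by simpa using e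
  rw [e1.1, e1.2]
  have h3 : ∀ x : ZMod 9, ∃ s : ZMod 9, x + 3 • s = ((rd x).val : ZMod 9) := by decide +kernel
  choose s hs using fun i => h3 (κ i)
  have r2 := r.shift s
  have k1 : (fun i => κ i + 3 • s i) = κA a := by
    ext i
    rw [hs, h1]; rfl
  have k2 : (fun i => τ i + (B9 ε).φ (s i)) = τA ε a b := by
    ext i
    rw [τA, ← k1, ← h2, B9_φ, dfA_eq]
    push_cast
    simp only [nsmul_eq_mul]
    push_cast
    ring
  rw [k1, k2] at r2
  exact mkQ_iso card_Z9 _ _ _ _ r2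

/-- predicate for the second family -/
def PB (q : Quasigroup Q) (l : List ℕ) : Prop := ∃ a b, l = [a, b] ∧
  ∃ κ τ, Rz (B3 1) q κ τ ∧ (∀ i, (τ i).1 = dec a i) ∧ ∀ i, (κ i).2 = dec b i

theorem PB_cl : Cl (PB q) := by
  rintro k l ⟨a, b, rfl, κ, τ, r, h1, h2⟩
  refine ⟨appOp k a, appOp k b, rfl, _, _, r.trO k, fun i => ?_, fun i => ?_⟩
  · have := tvO_map k (AddMonoidHom.fst _ _) τ i
    rw [dec_appOp]
    refine this.trans ?_
    congr 1; ext i; exact h1 i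
  · have := tvO_map k (AddMonoidHom.snd _ _) κ i
    rw [dec_appOp]
    refine this.trans ?_
    congr 1; ext i; exact h2 i

theorem complB {κ τ : Fin 3 → ZMod 3 × ZMod 3} (r : Rz (B3 1) q κ τ) :
    ∃ i, Iso q (qB (f6 i).1 (f6 i).2) := by
  obtain ⟨a, ha, ha'⟩ := dec_surj (fun i => (τ i).1)
  obtain ⟨b, hb, hb'⟩ := dec_surj (fun i => (κ i).2)
  have hP : PB q ([] ++ [a, b]) := ⟨a, b, rfl, κ, τ, r, fun i => by rw [ha'], fun i => by rw [hb']⟩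
  obtain ⟨f, hf, hP⟩ := exists_form PB_cl 2 0 (by norm_num) [] [a, b] (by simp) rfl
    (by simp [ha, hb]) hP
  obtain ⟨i, rfl⟩ := forms_two f hf
  refine ⟨i, ?_⟩
  obtain ⟨a, b, e, κ, τ, r, h1, h2⟩ := hP
  have e1 : (f6 i).1 = a ∧ (f6 i).2 = b := by simpa using e
  rw [e1.1, e1.2]
  have r2 := r.shift (fun i => (-(τ i).2, 0))
  have k1 : (fun i => κ i + 3 • ((-(τ i).2, 0) : ZMod 3 × ZMod 3)) = κB b := by
    ext1 i
    have := r.hκ i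
    rw [three_prod, B3_φ, one_mul] at this
    rw [three_prod, add_zero]
    exact Prod.ext (Prod.ext_iff.mp this).2 (h2 i)
  have k2 : (fun i => τ i + (B3 1).φ ((-(τ i).2, 0) : ZMod 3 × ZMod 3)) = τB a := by
    ext1 i
    rw [B3_φ]
    exact Prod.ext (by simp [h1, τB]) (by simp [τB])
  rw [k1, k2] at r2
  exact mkQ_iso card_Z33 _ _ _ _ r2

/-- predicate for the third family -/
def PC (q : Quasigroup Q) (l : List ℕ) : Prop := ∃ a b c d, l = [a, b, c, d] ∧
  Rz (B3 0) q (κC a c) (κC b d)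

theorem κC_tv (k a b : ℕ) : tvO k (κC a b) = κC (appOp k a) (appOp k b) := by
  ext1 i
  refine Prod.ext ?_ ?_
  · have := tvO_map k (AddMonoidHom.fst _ _) (κC a b) i
    refine this.trans ?_
    simp only [κC, dec_appOp]; rfl
  · have := tvO_map k (AddMonoidHom.snd _ _) (κC a b) i
    refine this.trans ?_
    simp only [κC, dec_appOp]; rfl

theorem PC_cl : Cl (PC q) := by
  rintro k l ⟨a, b, c, d, rfl, r⟩
  refine ⟨_, _, _, _, rfl, ?_⟩
  have := r.trO k
  rw [κC_tv, κC_tv] at this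
  exact this

/-- kernel automorphisms -/
def sg (b g : ZMod 3) (hb : b * b = 1) : ZMod 3 × ZMod 3 ≃+ ZMod 3 × ZMod 3 where
  toFun x := (b * x.1, x.2 + g * x.1)
  invFun x := (b * x.1, x.2 - g * (b * x.1))
  left_inv x := Prod.ext (by simp only; rw [← mul_assoc, hb, one_mul])
    (by simp only; rw [← mul_assoc b, hb, one_mul]; ring)
  right_inv x := Prod.ext (by simp only; rw [← mul_assoc, hb, one_mul]) (by simp)
  map_add' x y := Prod.ext (by simp only [Prod.fst_add]; ring)
    (by simp only [Prod.fst_add, Prod.snd_add]; ring)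

theorem κC_sg (b g : ℕ) (hb) (x y : ℕ) :
    (fun i => sg b g hb (κC x y i)) = κC (linN b x 0 0) (linN 1 y g x) := by
  ext1 i
  refine Prod.ext ?_ ?_
  · simp [sg, κC, dec_linN]
  · simp [sg, κC, dec_linN]

theorem PC_Dm (D : ℕ × ℕ) (hD : D ∈ Ds) (l : List ℕ) (hl : PC q l) : PC q (Dm D.1 D.2 l) := by
  obtain ⟨a, b, c, d, rfl, r⟩ := hl
  have hb : ((D.1 : ℕ) : ZMod 3) * (D.1 : ZMod 3) = 1 := by
    revert D; decide
  refine ⟨_, _, _, _, rfl, ?_⟩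
  have := r.aut (sg D.1 D.2 hb) (fun m => by simp [sg, B3_ι]) (fun k => by simp [sg, B3_φ])
  rw [κC_sg, κC_sg] at this
  exact this

theorem complC {κ τ : Fin 3 → ZMod 3 × ZMod 3} (r : Rz (B3 0) q κ τ) :
    ∃ x ∈ c68, Iso q (qC x.1 x.2.1 x.2.2.1 x.2.2.2) := by
  obtain ⟨a, ha, ha'⟩ := dec_surj (fun i => (κ i).1)
  obtain ⟨b, hb, hb'⟩ := dec_surj (fun i => (τ i).1)
  obtain ⟨c, hc, hc'⟩ := dec_surj (fun i => (κ i).2)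
  obtain ⟨d, hd, hd'⟩ := dec_surj (fun i => (τ i).2)
  have hP : PC q ([] ++ [a, b, c, d]) := ⟨a, b, c, d, rfl, by
    unfold κC
    rw [ha', hb', hc', hd']
    exact r⟩
  obtain ⟨f, hf, hP⟩ := exists_form PC_cl 4 0 (by norm_num) [] [a, b, c, d] (by simp) rfl
    (by simp [ha, hb, hc, hd]) hP
  have := forms_four
  rw [List.all_eq_true] at this
  have := this f hf
  rw [List.any_eq_true] at this
  obtain ⟨D, hD, h⟩ := this
  rw [List.contains_iff_mem, List.mem_map] at h
  obtain ⟨x, hx, e⟩ := h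
  have hP := PC_cl.ech 4 0 0 _ (PC_Dm D hD _ hP)
  rw [List.nil_append, ← e] at hP
  obtain ⟨a, b, c, d, e, r⟩ := hP
  simp only [toL, List.cons.injEq, and_true] at e
  obtain ⟨rfl, rfl, rfl, rfl⟩ := e
  exact ⟨x, hx, mkQ_iso card_Z33 _ _ _ _ r⟩

theorem compl (hQ : Nat.card Q = 243) (hd : Distributive q) (hm : ¬ Medial q) :
    (∃ ε i, Iso q (qA ε (f6 i).1 (f6 i).2)) ∨ (∃ i, Iso q (qB (f6 i).1 (f6 i).2)) ∨
      ∃ x ∈ c68, Iso q (qC x.1 x.2.1 x.2.2.1 x.2.2.2) := by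
  rcases exists_base hQ q hd hm with ⟨ε, κ, τ, r⟩ | ⟨κ, τ, r⟩ | ⟨κ, τ, r⟩
  · exact Or.inl ⟨ε, complA r⟩
  · exact Or.inr (Or.inl (complB r))
  · exact Or.inr (Or.inr (complC r))

end

end DQ

open Quasigroup

namespace DQ

theorem det3_zero (u : V) (hu : ∀ v w, det3 u v w = 0) : u = 0 := by
  ext i
  fin_cases i
  · simpa [det3] using hu ![0, 1, 0] ![0, 0, 1]
  · simpa [det3] using hu ![0, 0, 1] ![1, 0, 0]
  · simpa [det3] using hu ![1, 0, 0] ![0, 1, 0]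

theorem h_neg_neg (u v : V) : h (-u) (-v) = - h u v := by
  simp only [h, Pi.neg_apply]; ring

theorem h_dbl (u : V) : h (u + u) u = 0 := by
  simp only [h, Pi.add_apply]; ring

/-- the loop operation -/
def Dat.s {G : Type} [AddCommGroup G] (d : Dat G) (x y : G) : G := x + y + d.ι (h (d.π x) (d.π y))

section
variable {G H : Type} [AddCommGroup G] [AddCommGroup H] (d : Dat G) (d' : Dat H)

theorem Dat.π_s (x y : G) : d.π (d.s x y) = d.π x + d.π y := by
  simp only [Dat.s, map_add, d.πι, add_zero]

theorem Dat.op_L (y : G) : d.op 0 y = - y + d.θ y := by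
  simp only [Dat.op, map_zero, zero_h, map_sub]; abel

theorem Dat.op_R (y : G) : d.op y 0 = y + y - d.θ y := by
  simp only [Dat.op, map_zero, h_zero, map_sub]; abel

theorem Dat.op_s (x y : G) : d.op x y = d.s (d.op x 0) (d.op 0 y) := by
  rw [Dat.s, d.π_op, d.π_op, map_zero]
  simp only [neg_zero, sub_zero, zero_sub, h_neg_neg, map_neg, d.op_L, d.op_R]
  simp only [Dat.op, map_sub]; abel

theorem Dat.s_inj (x y z : G) (e : d.s x y = d.s x z) : y = z := by
  have e1 := congrArg d.π e
  rw [d.π_s, d.π_s] at e1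
  have e1 := add_left_cancel e1
  rw [Dat.s, Dat.s, e1] at e
  exact add_left_cancel (add_right_cancel e)

theorem Dat.s_ι (x : G) (m : ZMod 3) : d.s x (d.ι m) = x + d.ι m := by
  simp only [Dat.s, d.πι, h_zero, map_zero, add_zero]

theorem Dat.s_assoc (x y z : G) :
    d.s (d.s x y) z = d.s (d.s x (d.s y z)) (d.ι (det3 (d.π x) (d.π y) (d.π z))) := by
  rw [d.s_ι]
  have := congrArg d.ι (h_cob (d.π x) (d.π y) (d.π z))
  rw [Dat.s, d.π_s, Dat.s, Dat.s, d.π_s, Dat.s]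
  simp only [map_add] at this
  have e : ∀ x y z p q r s t : G, p + q + r = s + t → x + y + s + z + t = x + (y + z + q) + r + p := by
    intro x y z p q r s t e
    have : x + (y + z + q) + r + p = x + y + z + (p + q + r) := by abel
    rw [this, e]; abel
  exact e _ _ _ _ _ _ _ _ this

/-- what an isomorphism fixing zero satisfies -/
structure NI (F : G ≃ H) (α : ZMod 3) (g : V →+ V) : Prop where
  ι : ∀ m, F (d.ι m) = d'.ι (α * m)
  α0 : α ≠ 0
  π : ∀ x, d'.π (F x) = g (d.π x)
  det : ∀ u v w, det3 (g u) (g v) (g w) = α * det3 u v w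
  three : ∀ x, F (3 • x) = 3 • F x
  θ : ∀ x, F (d.θ x) = d'.θ (F x)
  ker : ∀ x y, d.π x = 0 → d.π y = 0 → F (x + y) = F x + F y

theorem exists_NI (F : G ≃ H) (hF : ∀ x y, F (d.op x y) = d'.op (F x) (F y)) (F0 : F 0 = 0)
    (hl : Function.Surjective (d.op 0)) (hr : Function.Surjective (fun x => d.op x 0)) :
    ∃ α g, NI d d' F α g := by
  have Fs : ∀ x y, F (d.s x y) = d'.s (F x) (F y) := by
    intro x y
    obtain ⟨x, rfl⟩ := hr x
    obtain ⟨y, rfl⟩ := hl y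
    have := hF x y
    rw [d.op_s, d'.op_s] at this
    have e1 := hF x 0
    have e2 := hF 0 y
    rw [F0] at e1 e2
    rw [← e1, ← e2] at this
    exact this
  have Fdet : ∀ x y z, F (d.ι (det3 (d.π x) (d.π y) (d.π z))) =
      d'.ι (det3 (d'.π (F x)) (d'.π (F y)) (d'.π (F z))) := by
    intro x y z
    have e := congrArg F (d.s_assoc x y z)
    simp only [Fs] at e
    rw [d'.s_assoc] at e
    exact (d'.s_inj _ _ _ e).symm
  obtain ⟨x0, hx0⟩ := d.πs ![1, 0, 0]
  obtain ⟨y0, hy0⟩ := d.πs ![0, 1, 0]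
  obtain ⟨z0, hz0⟩ := d.πs ![0, 0, 1]
  obtain ⟨α, hα⟩ : ∃ α, F (d.ι 1) = d'.ι α := by
    have := Fdet x0 y0 z0
    rw [hx0, hy0, hz0] at this
    have e : det3 ![1, 0, 0] ![0, 1, 0] ![0, 0, 1] = 1 := by decide
    rw [e] at this
    exact ⟨_, this⟩
  have Fι : ∀ m, F (d.ι m) = d'.ι (α * m) := by
    intro m
    rcases z3cases m with rfl | rfl | rfl
    · rw [map_zero, F0, mul_zero, map_zero]
    · rw [hα, mul_one]
    · have e : d.ι 2 = d.s (d.ι 1) (d.ι 1) := by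
        rw [d.s_ι, ← map_add]; rfl
      rw [e, Fs, hα, d'.s_ι, ← map_add, mul_two]
  have α0 : α ≠ 0 := by
    rintro rfl
    rw [map_zero, ← F0] at hα
    have := d.ιi ((F.injective hα).trans (map_zero _).symm)
    exact absurd this (by decide)
  have det1 : ∀ x y z, det3 (d'.π (F x)) (d'.π (F y)) (d'.π (F z)) =
      α * det3 (d.π x) (d.π y) (d.π z) := by
    intro x y z
    apply d'.ιi
    rw [← Fdet, Fι]
  have Fk : ∀ x, d.π x = 0 → d'.π (F x) = 0 := by
    intro x hx
    apply det3_zero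
    intro v w
    obtain ⟨v, rfl⟩ := d'.πs v
    obtain ⟨w, rfl⟩ := d'.πs w
    obtain ⟨v, rfl⟩ := F.surjective v
    obtain ⟨w, rfl⟩ := F.surjective w
    rw [det1, hx]
    simp [det3]
  have Fadd : ∀ x y, F (x + y) = F x + F y +
      (d'.ι (h (d'.π (F x)) (d'.π (F y))) - d'.ι (α * h (d.π x) (d.π y))) := by
    intro x y
    have e := Fs x y
    have e2 : d.s x y = d.s (x + y) (d.ι (h (d.π x) (d.π y))) := by rw [d.s_ι]; rfl
    rw [e2, Fs, Fι, d'.s_ι, Dat.s] at e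
    rw [← add_sub_assoc, ← e]; abel
  have πadd : ∀ x y, d'.π (F (x + y)) = d'.π (F x) + d'.π (F y) := by
    intro x y
    rw [Fadd, map_add, map_sub, d'.πι, d'.πι, map_add]; simp
  let P : G →+ V := AddMonoidHom.mk' (fun x => d'.π (F x)) πadd
  have hP : ∀ x y, d.π x = d.π y → P x = P y := by
    intro x y e
    have : P (x - y) = 0 := Fk _ (by rw [map_sub, e, sub_self])
    rw [map_sub, sub_eq_zero] at this
    exact this
  choose sec hsec using d.πs
  let g : V →+ V := AddMonoidHom.mk' (fun v => P (sec v)) (fun u v => by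
    rw [← map_add]
    apply hP
    rw [map_add, hsec, hsec, hsec])
  have hg : ∀ x, d'.π (F x) = g (d.π x) := fun x => hP _ _ (by rw [hsec])
  have Fneg : ∀ y, F (-y) = - F y := by
    intro y
    have e := Fadd y (-y)
    have e2 : d'.π (F (-y)) = - d'.π (F y) := by rw [hg, hg, map_neg, map_neg]
    rw [e2, map_neg d.π, h_neg, h_neg, mul_zero, map_zero, sub_zero, add_zero, add_neg_cancel, F0] at e
    exact (neg_eq_of_add_eq_zero_right e.symm).symm
  refine ⟨α, g, Fι, α0, hg, ?_, ?_, ?_, ?_⟩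
  · intro u v w
    obtain ⟨u, rfl⟩ := d.πs u
    obtain ⟨v, rfl⟩ := d.πs v
    obtain ⟨w, rfl⟩ := d.πs w
    rw [← hg, ← hg, ← hg, det1]
  · intro x
    have e1 := Fadd x x
    rw [h_self, h_self, mul_zero, map_zero, sub_zero, add_zero] at e1
    have e2 := Fadd (x + x) x
    rw [e1, map_add d.π, map_add d'.π, h_dbl, h_dbl, mul_zero, map_zero, sub_zero, add_zero] at e2
    have t : ∀ {G : Type} [AddCommGroup G] (x : G), 3 • x = x + x + x := fun x => by abel
    rw [t, t, e2]
  · intro x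
    have e := hF 0 x
    rw [F0, d.op_L, d'.op_L, Fadd, d.πθ, Fk _ (d.πθ x), h_zero, h_zero, mul_zero, map_zero, sub_zero,
      add_zero, Fneg] at e
    exact add_left_cancel e
  · intro x y hx hy
    rw [Fadd, hx, hy, Fk x hx, Fk y hy, h_zero, mul_zero, map_zero, sub_zero, add_zero]

/-- moving an isomorphism to fix zero -/
theorem fix_zero (F : G ≃ H) (hF : ∀ x y, F (d.op x y) = d'.op (F x) (F y)) (q : Quasigroup H)
    (hq : Distributive q) (hqm : ∀ x y, q.mul x y = d'.op x y) :
    ∃ F : G ≃ H, (∀ x y, F (d.op x y) = d'.op (F x) (F y)) ∧ F 0 = 0 := by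
  obtain ⟨z, hz⟩ := (q.rightBij (F 0)).2 0
  refine ⟨F.trans (Equiv.ofBijective _ (q.leftBij z)), fun x y => ?_, hz⟩
  simp only [Equiv.trans_apply, Equiv.ofBijective_apply]
  rw [hF, ← hqm, hq.1, hqm (q.mul z _)]

end

theorem Ext.three {K : Type} [AddCommGroup K] (κ : Fin 3 → K) (x : Ext κ) :
    3 • x = ⟨0, 3 • x.k + lc κ (fun i => (x.v i).val)⟩ := by
  have t : ∀ {G : Type} [AddCommGroup G] (x : G), 3 • x = x + x + x := fun x => by abel
  rw [t]
  have hv : ∀ v : V, v + v + v = 0 := by decide +kernel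
  have hc : ∀ a : ZMod 3, a.val = cr a a + cr (a + a) a := by decide
  ext1
  · simp only [add_v, hv]
  · simp only [add_k, add_v, Pi.add_apply, t]
    have : lc κ (fun i => (x.v i).val) = lc κ (fun i => cr (x.v i) (x.v i)) +
        lc κ (fun i => cr (x.v i + x.v i) (x.v i)) := by
      rw [← lc_add]; congr 1; ext i; exact hc _
    rw [this]; abel

theorem model_NI {K K' : Type} [AddCommGroup K] [AddCommGroup K'] (h9 : Nat.card K = 9)
    (h9' : Nat.card K' = 9) (κ τ : Fin 3 → K) (B : Base K) (κ' τ' : Fin 3 → K') (B' : Base K')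
    (hκ : ∀ i, B.φ (κ i) = 3 • τ i) (hκ' : ∀ i, B'.φ (κ' i) = 3 • τ' i)
    (hi : Iso (mkQ h9 κ B τ hκ) (mkQ h9' κ' B' τ' hκ')) :
    ∃ (σ : K →+ K') (α : ZMod 3) (g : V →+ V), Function.Injective σ ∧ α ≠ 0 ∧
      (∀ m, σ (B.ι m) = B'.ι (α * m)) ∧ (∀ k, σ (B.φ k) = B'.φ (σ k)) ∧
      (∀ u v w, det3 (g u) (g v) (g w) = α * det3 u v w) ∧
      ∀ v, ∃ s, σ (lc κ (fun i => (v i).val)) = 3 • s + lc κ' (fun i => (g v i).val) ∧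
        σ (lc τ (fun i => (v i).val)) = lc τ' (fun i => (g v i).val) + B'.φ s := by
  obtain ⟨E, hE⟩ := mkQ_equiv h9 κ B τ hκ
  obtain ⟨E', hE'⟩ := mkQ_equiv h9' κ' B' τ' hκ'
  obtain ⟨f, hf⟩ := hi
  set d := Ext.dat κ B τ hκ with hd
  set d' := Ext.dat κ' B' τ' hκ' with hd'
  obtain ⟨F, hF, F0⟩ := fix_zero d d' (E.trans (f.trans E'.symm)) (fun x y => by
    simp only [Equiv.trans_apply, hE, hf]
    rw [Equiv.symm_apply_eq, hE']; simp) _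
    (d'.quasi_dist (Ext.card_eq κ' h9') (Ext.dat_nil κ' B' τ' hκ')) (fun _ _ => rfl)
  let qd := d.quasi (Ext.card_eq κ h9) (Ext.dat_nil κ B τ hκ)
  obtain ⟨α, g, n⟩ := exists_NI d d' F hF F0 (qd.leftBij 0).2 (qd.rightBij 0).2
  have hv : ∀ x, (F x).v = g x.v := n.π
  have hv0 : ∀ k, (F ⟨0, k⟩).v = 0 := fun k => by rw [hv, map_zero]
  have z0 : ∀ {K : Type} [AddCommGroup K] (κ : Fin 3 → K), lc κ (fun i => ((0 : V) i).val) = 0 :=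
    fun κ => by simp [lc]
  let σ : K →+ K' := AddMonoidHom.mk' (fun k => (F ⟨0, k⟩).k) (fun a b => by
    have e : (⟨0, a + b⟩ : Ext κ) = ⟨0, a⟩ + ⟨0, b⟩ := by
      ext1
      · simp [Ext.add_v]
      · simp only [Ext.add_k, Pi.zero_apply, cr_zero]; simp [lc]
    rw [e, n.ker _ _ rfl rfl, Ext.add_k, hv0]
    simp only [Pi.zero_apply, cr_zero]; simp [lc])
  have hσ : ∀ k, F ⟨0, k⟩ = ⟨0, σ k⟩ := fun k => by
    ext1
    · exact hv0 k
    · rfl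
  refine ⟨σ, α, g, ?_, n.α0, ?_, ?_, n.det, ?_⟩
  · intro a b e
    have : F ⟨0, a⟩ = F ⟨0, b⟩ := by rw [hσ, hσ, e]
    exact congrArg Ext.k (F.injective this)
  · intro m
    exact congrArg Ext.k (n.ι m)
  · intro k
    have := congrArg Ext.k (n.θ ⟨0, k⟩)
    rw [hσ, Ext.dat_θ, Ext.dat_θ, z0, z0, hσ, zero_add, zero_add] at this
    exact this
  · intro v
    have hw := hv ⟨v, 0⟩
    refine ⟨(F ⟨v, 0⟩).k, ?_, ?_⟩
    · have := congrArg Ext.k (n.three ⟨v, 0⟩)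
      rw [Ext.three, Ext.three, smul_zero, zero_add, hσ, hw] at this
      exact this
    · have := congrArg Ext.k (n.θ ⟨v, 0⟩)
      rw [Ext.dat_θ, Ext.dat_θ, map_zero, add_zero, hσ, hw] at this
      exact this

end DQ

open Quasigroup

namespace DQ

/-- dot product -/
def dot (r v : V) : ZMod 3 := r 0 * v 0 + r 1 * v 1 + r 2 * v 2

theorem lc_dot (r v : V) : lc r (fun i => (v i).val) = dot r v := by
  simp only [lc, Fin.sum_univ_three, dot, nsmul_eq_mul, ZMod.natCast_val, ZMod.cast_id', id]
  ring

/-- equivalence of row systems -/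
def Rel (r r' : Fin 4 → V) : Prop :=
  ∃ g : V → V, (∀ u v w, det3 (g u) (g v) (g w) = det3 u v w) ∧
    ∀ k v, dot (r k) v = dot (r' k) (g v)

theorem Rel.mk' (r r' : Fin 4 → V) (g : V → V) (α : ZMod 3) (hα : α ≠ 0)
    (h1 : ∀ u v w, det3 (g u) (g v) (g w) = α * det3 u v w)
    (h2 : ∀ k v, α * dot (r k) v = dot (r' k) (g v)) : Rel r r' := by
  have a2 : α * α = 1 := (by decide : ∀ α : ZMod 3, α ≠ 0 → α * α = 1) α hα
  refine ⟨fun v => α • g v, fun u v w => ?_, fun k v => ?_⟩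
  · have e : det3 (α • g u) (α • g v) (α • g w) = (α * α) * α * det3 (g u) (g v) (g w) := by
      simp only [det3, Pi.smul_apply, smul_eq_mul]; ring
    rw [e, h1, a2, one_mul, ← mul_assoc, a2, one_mul]
  · have e : dot (r' k) (α • g v) = α * dot (r' k) (g v) := by
      simp only [dot, Pi.smul_apply, smul_eq_mul]; ring
    rw [e, ← h2, ← mul_assoc, a2, one_mul]

theorem dot_zero (r x y z : V) (hd : det3 x y z = 1) (hx : dot r x = 0) (hy : dot r y = 0)
    (hz : dot r z = 0) : r = 0 := by
  have e : ∀ i, r i = r i * det3 x y z := fun i => by rw [hd, mul_one]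
  ext i
  rw [e]
  simp only [det3, dot] at *
  fin_cases i
  · simp only [Fin.zero_eta, Pi.zero_apply]
    linear_combination (y 1 * z 2 - y 2 * z 1) * hx + (z 1 * x 2 - z 2 * x 1) * hy +
      (x 1 * y 2 - x 2 * y 1) * hz
  · simp only [Fin.mk_one, Pi.zero_apply]
    linear_combination (y 2 * z 0 - y 0 * z 2) * hx + (z 2 * x 0 - z 0 * x 2) * hy +
      (x 2 * y 0 - x 0 * y 2) * hz
  · simp only [Fin.reduceFinMk, Pi.zero_apply]
    linear_combination (y 0 * z 1 - y 1 * z 0) * hx + (z 0 * x 1 - z 1 * x 0) * hy +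
      (x 0 * y 1 - x 1 * y 0) * hz

/-- linear combination of four rows -/
def cmb (w : Fin 4 → ZMod 3) (r : Fin 4 → V) : V := fun i => ∑ k, w k * r k i

theorem dot_cmb (w : Fin 4 → ZMod 3) (r : Fin 4 → V) (v : V) :
    dot (cmb w r) v = ∑ k, w k * dot (r k) v := by
  simp only [dot, cmb, Fin.sum_univ_four]; ring

theorem Rel.ann {r r' : Fin 4 → V} (h : Rel r r') (w : Fin 4 → ZMod 3) :
    cmb w r = 0 ↔ cmb w r' = 0 := by
  obtain ⟨g, h1, h2⟩ := h
  have e : ∀ v, dot (cmb w r) v = dot (cmb w r') (g v) := fun v => by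
    rw [dot_cmb, dot_cmb]; simp only [h2]
  have dz : ∀ v, dot 0 v = 0 := fun v => by simp [dot]
  constructor
  · intro h0
    refine dot_zero _ (g ![1, 0, 0]) (g ![0, 1, 0]) (g ![0, 0, 1]) (by rw [h1]; decide) ?_ ?_ ?_ <;>
      rw [← e, h0, dz]
  · intro h0
    refine dot_zero _ ![1, 0, 0] ![0, 1, 0] ![0, 0, 1] (by decide) ?_ ?_ ?_ <;>
      rw [e, h0, dz]

theorem binet (a b c x y z : V) : det3 a b c * det3 x y z =
    det3 ![dot a x, dot a y, dot a z] ![dot b x, dot b y, dot b z] ![dot c x, dot c y, dot c z] := by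
  change _ = dot a x * (dot b y * dot c z - dot b z * dot c y) -
    dot a y * (dot b x * dot c z - dot b z * dot c x) + dot a z * (dot b x * dot c y - dot b y * dot c x)
  simp only [det3, dot]
  ring

theorem Rel.minor {r r' : Fin 4 → V} (h : Rel r r') (i j k : Fin 4) :
    det3 (r i) (r j) (r k) = det3 (r' i) (r' j) (r' k) := by
  obtain ⟨g, h1, h2⟩ := h
  have d1 : det3 ![1, 0, 0] ![0, 1, 0] ![0, 0, 1] = 1 := by decide
  have e1 := binet (r i) (r j) (r k) ![1, 0, 0] ![0, 1, 0] ![0, 0, 1]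
  have e2 := binet (r' i) (r' j) (r' k) (g ![1, 0, 0]) (g ![0, 1, 0]) (g ![0, 0, 1])
  simp only [h2] at e1
  rw [h1] at e2
  rw [← e1, d1, mul_one, mul_one] at e2
  exact e2.symm

/-- rows from codes -/
def rw4 (a b c d : ℕ) : Fin 4 → V := ![dec a, dec b, dec c, dec d]

/-- annihilator test -/
def annB (a b c d w : ℕ) (t : ℕ) : Bool :=
  (w % 3 * dg t a + w / 3 % 3 * dg t b + w / 9 % 3 * dg t c + w / 27 * dg t d) % 3 == 0

/-- determinants of codes -/
def dN (a b c : ℕ) : ℕ :=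
  (dg 0 a * (dg 1 b * dg 2 c + 2 * (dg 2 b * dg 1 c)) +
    2 * (dg 1 a * (dg 0 b * dg 2 c + 2 * (dg 2 b * dg 0 c))) +
    dg 2 a * (dg 0 b * dg 1 c + 2 * (dg 1 b * dg 0 c))) % 3

/-- the invariant -/
def invN (a b c d : ℕ) : ℕ :=
  ((List.range 81).foldl (fun m w => 2 * m +
    (annB a b c d w 0 && annB a b c d w 1 && annB a b c d w 2).toNat) 0) * 81 +
    (dN a b c + 3 * dN a b d + 9 * dN a c d + 27 * dN b c d)

theorem dN_eq (a b c : ℕ) : dN a b c = (det3 (dec a) (dec b) (dec c)).val := by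
  have : ((dN a b c : ℕ) : ZMod 3) = det3 (dec a) (dec b) (dec c) := by
    simp only [det3, dec_dg, dN, ZMod.natCast_mod]
    push_cast
    simp only [Fin.val_zero, Fin.val_one, Fin.val_two]
    generalize (dg 0 a : ZMod 3) = a0
    generalize (dg 1 a : ZMod 3) = a1
    generalize (dg 2 a : ZMod 3) = a2
    generalize (dg 0 b : ZMod 3) = b0
    generalize (dg 1 b : ZMod 3) = b1
    generalize (dg 2 b : ZMod 3) = b2
    generalize (dg 0 c : ZMod 3) = c0
    generalize (dg 1 c : ZMod 3) = c1
    generalize (dg 2 c : ZMod 3) = c2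
    linear_combination (a0 * b2 * c1 + a1 * (b0 * c2 + b2 * c0) + a2 * b1 * c0) * three0
  rw [← this, ZMod.val_natCast, dN, Nat.mod_mod]

theorem annB_iff (a b c d w : ℕ) (t : Fin 3) : annB a b c d w t.val = true ↔
    cmb ![(w : ZMod 3), ((w / 3 : ℕ) : ZMod 3), ((w / 9 : ℕ) : ZMod 3), ((w / 27 : ℕ) : ZMod 3)]
      (rw4 a b c d) t = 0 := by
  simp only [annB, beq_iff_eq, cmb, Fin.sum_univ_four]
  change _ ↔ (w : ZMod 3) * dec a t + ((w / 3 : ℕ) : ZMod 3) * dec b t +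
    ((w / 9 : ℕ) : ZMod 3) * dec c t + ((w / 27 : ℕ) : ZMod 3) * dec d t = 0
  rw [← Nat.dvd_iff_mod_eq_zero, ← ZMod.natCast_eq_zero_iff]
  simp only [dec_dg, Nat.cast_add, Nat.cast_mul, ZMod.natCast_mod]

theorem annB_iff' (a b c d w : ℕ) :
    (annB a b c d w 0 && annB a b c d w 1 && annB a b c d w 2) = true ↔
    cmb ![(w : ZMod 3), ((w / 3 : ℕ) : ZMod 3), ((w / 9 : ℕ) : ZMod 3), ((w / 27 : ℕ) : ZMod 3)]
      (rw4 a b c d) = 0 := by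
  rw [Bool.and_eq_true, Bool.and_eq_true, funext_iff, Fin.forall_fin_succ, Fin.forall_fin_two]
  have := annB_iff a b c d w 0
  have h0 := annB_iff a b c d w 0
  have h1 := annB_iff a b c d w 1
  have h2 := annB_iff a b c d w 2
  rw [and_assoc]
  exact and_congr h0 (and_congr h1 h2)

theorem invN_eq {a b c d a' b' c' d' : ℕ} (h : Rel (rw4 a b c d) (rw4 a' b' c' d')) :
    invN a b c d = invN a' b' c' d' := by
  have m := h.minor
  have m1 : det3 (dec a) (dec b) (dec c) = det3 (dec a') (dec b') (dec c') := m 0 1 2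
  have m2 : det3 (dec a) (dec b) (dec d) = det3 (dec a') (dec b') (dec d') := m 0 1 3
  have m3 : det3 (dec a) (dec c) (dec d) = det3 (dec a') (dec c') (dec d') := m 0 2 3
  have m4 : det3 (dec b) (dec c) (dec d) = det3 (dec b') (dec c') (dec d') := m 1 2 3
  have e : ∀ w, (annB a b c d w 0 && annB a b c d w 1 && annB a b c d w 2) =
      (annB a' b' c' d' w 0 && annB a' b' c' d' w 1 && annB a' b' c' d' w 2) := fun w => by
    rw [Bool.eq_iff_iff, annB_iff', annB_iff']
    exact h.ann _
  simp only [invN, dN_eq, m1, m2, m3, m4, e]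

theorem f6_sep : ∀ i j, invN (f6 i).1 (f6 i).2 0 0 = invN (f6 j).1 (f6 j).2 0 0 → i = j := by
  decide +kernel

end DQ
namespace DQ
theorem c68_sep : c68.all (fun x => Ds.all (fun D => c68.all (fun y => 
    (x == y) || !(Nat.beq (invN (linN D.1 x.1 0 0) (linN D.1 x.2.1 0 0) (linN 1 x.2.2.1 D.2 x.1) (linN 1 x.2.2.2 D.2 x.2.1))
     (invN y.1 y.2.1 y.2.2.1 y.2.2.2))))) = true := by
  decide +kernel
end DQ

open Quasigroup

namespace DQ

theorem iso_symm {Q₁ Q₂ : Type} {q₁ : Quasigroup Q₁} {q₂ : Quasigroup Q₂} (h : Iso q₁ q₂) :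
    Iso q₂ q₁ := by
  obtain ⟨f, hf⟩ := h
  refine ⟨f.symm, fun x y => ?_⟩
  rw [Equiv.symm_apply_eq, hf, Equiv.apply_symm_apply, Equiv.apply_symm_apply]

theorem rel_four {a b c d a' b' c' d' : ℕ} (g : V → V) (α : ZMod 3) (hα : α ≠ 0)
    (h1 : ∀ u v w, det3 (g u) (g v) (g w) = α * det3 u v w)
    (ha : ∀ v, α * dot (dec a) v = dot (dec a') (g v))
    (hb : ∀ v, α * dot (dec b) v = dot (dec b') (g v))
    (hc : ∀ v, α * dot (dec c) v = dot (dec c') (g v))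
    (hd : ∀ v, α * dot (dec d) v = dot (dec d') (g v)) :
    invN a b c d = invN a' b' c' d' := by
  refine invN_eq (Rel.mk' _ _ g α hα h1 fun k v => ?_)
  match k with
  | 0 => exact ha v
  | 1 => exact hb v
  | 2 => exact hc v
  | 3 => exact hd v

theorem dot_dec_zero (v : V) : dot (dec 0) v = 0 := by simp [dot, dec]

theorem rd_κA (a : ℕ) (v : V) : rd (lc (κA a) (fun i => (v i).val)) = dot (dec a) v := by
  rw [lc_map, ← lc_dot]
  congr 1
  ext i
  exact (by decide : ∀ x : ZMod 3, rd ((x.val : ℕ) : ZMod 9) = x) _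

theorem lc_τA (ε : ZMod 3) (a b : ℕ) (v : V) : lc (τA ε a b) (fun i => (v i).val) =
    (ε.val : ZMod 9) * lc (κA a) (fun i => (v i).val) + (B9 ε).ι (dot (dec b) v) := by
  have e1 : (ε.val : ZMod 9) * lc (κA a) (fun i => (v i).val) =
      lc (fun i => (ε.val : ZMod 9) * κA a i) (fun i => (v i).val) :=
    lc_map (AddMonoidHom.mulLeft (ε.val : ZMod 9)) _ _
  rw [← lc_dot, lc_map, e1]
  simp only [lc, τA, smul_add, Finset.sum_add_distrib]

theorem isoA {ε ε' : ZMod 3} {a b a' b' : ℕ} (hi : Iso (qA ε a b) (qA ε' a' b')) :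
    ε = ε' ∧ invN a b 0 0 = invN a' b' 0 0 := by
  obtain ⟨σ, α, g, _, hα, hι, hφ, hd, hr⟩ := model_NI _ _ _ _ _ _ _ _ _ _ hi
  have hσ : ∀ k, σ k = σ 1 * k := fun k => by
    have e : k = k.val • (1 : ZMod 9) := by simp
    conv_lhs => rw [e, map_nsmul]
    rw [nsmul_eq_mul, mul_comm]
    simp
  have hc : rd (σ 1) = α := by
    have := hι 1
    rw [hσ] at this
    simp only [B9_ι] at this
    generalize σ 1 = c at this
    clear hr hφ hι hi hd
    revert c α
    decide +kernel
  have he : ε = ε' := by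
    have := hφ 1
    rw [hσ] at this
    simp only [B9_φ] at this
    have hc' : rd (σ 1) ≠ 0 := hc ▸ hα
    generalize σ 1 = c at this hc'
    clear hr hφ hι hi
    revert c ε ε'
    decide +kernel
  subst he
  refine ⟨rfl, rel_four g α hα hd (fun v => ?_) (fun v => ?_) (fun v => ?_) (fun v => ?_)⟩
  · obtain ⟨s, h1, -⟩ := hr v
    have := congrArg rd h1
    rw [map_add, rd_κA, hσ] at this
    have e1 : rd (3 • s) = 0 := (by decide : ∀ s : ZMod 9, rd (3 • s) = 0) s
    have e2 : ∀ x y, rd (x * y) = rd x * rd y := by decide +kernel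
    rw [e1, zero_add, e2, hc, rd_κA] at this
    exact this
  · obtain ⟨s, h1, h2⟩ := hr v
    rw [lc_τA, lc_τA, map_add, hι] at h2
    apply (B9 ε).ιi
    rw [hσ] at h1 h2
    rw [B9_φ, mul_left_comm, h1] at h2
    simp only [nsmul_eq_mul] at h2
    push_cast at h2
    linear_combination h2
  · rw [dot_dec_zero, dot_dec_zero, mul_zero]
  · rw [dot_dec_zero, dot_dec_zero, mul_zero]

theorem lc_κC (a b : ℕ) (v : V) :
    lc (κC a b) (fun i => (v i).val) = (dot (dec a) v, dot (dec b) v) := by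
  refine Prod.ext ?_ ?_
  · exact (lc_map (AddMonoidHom.fst _ _) (κC a b) _).trans (lc_dot (dec a) v)
  · exact (lc_map (AddMonoidHom.snd _ _) (κC a b) _).trans (lc_dot (dec b) v)

theorem κB_eq (b : ℕ) : κB b = κC 0 b := by
  ext1 i; simp [κB, κC, dec]
theorem τB_eq (b : ℕ) : τB b = κC b 0 := by
  ext1 i; simp [τB, κC, dec]

theorem isoB {a b a' b' : ℕ} (hi : Iso (qB a b) (qB a' b')) :
    invN a b 0 0 = invN a' b' 0 0 := by
  obtain ⟨σ, α, g, _, hα, hι, hφ, hd, hr⟩ := model_NI _ _ _ _ _ _ _ _ _ _ hi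
  simp only [κB_eq, τB_eq, lc_κC, dot_dec_zero, three_prod, zero_add, B3_φ, B3_ι, one_mul] at hι hφ hr
  refine rel_four g α hα hd (fun v => ?_) (fun v => ?_) (fun v => ?_) (fun v => ?_)
  · obtain ⟨s, -, h2⟩ := hr v
    have e := hφ (dot (dec a) v, 0)
    rw [hι, h2] at e
    have := congrArg Prod.snd e
    simpa using this
  · obtain ⟨s, h1, -⟩ := hr v
    rw [hι] at h1
    exact congrArg Prod.snd h1
  · rw [dot_dec_zero, dot_dec_zero, mul_zero]
  · rw [dot_dec_zero, dot_dec_zero, mul_zero]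

theorem dot_linN (x a y c : ℕ) (v : V) :
    dot (dec (linN x a y c)) v = x * dot (dec a) v + y * dot (dec c) v := by
  simp only [dot, dec_linN]; ring

theorem isoC {a b c d a' b' c' d' : ℕ} (hi : Iso (qC a b c d) (qC a' b' c' d')) :
    ∃ D ∈ Ds, invN (linN D.1 a 0 0) (linN D.1 b 0 0) (linN 1 c D.2 a) (linN 1 d D.2 b) =
      invN a' b' c' d' := by
  obtain ⟨σ, α, g, inj, hα, hι, hφ, hd, hr⟩ := model_NI _ _ _ _ _ _ _ _ _ _ hi
  simp only [lc_κC, three_prod, zero_add, B3_φ, B3_ι, zero_mul, Prod.mk_zero_zero, add_zero] at hι hφ hr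
  have hσ : ∀ m n, σ (m, n) = (m * (σ (1, 0)).1, m * (σ (1, 0)).2 + α * n) := fun m n => by
    have e : ((m, n) : ZMod 3 × ZMod 3) = m.val • ((1, 0) : ZMod 3 × ZMod 3) + (0, n) := by
      ext <;> simp
    conv_lhs => rw [e, map_add, map_nsmul, hι]
    ext <;> simp
  have hβ : (σ (1, 0)).1 ≠ 0 := fun h0 => by
    have h1 := hσ 1 (- α * (σ (1, 0)).2)
    have a2 : α * α = 1 := (by decide : ∀ α : ZMod 3, α ≠ 0 → α * α = 1) α hα
    have h2 : σ (1, - α * (σ (1, 0)).2) = σ 0 := by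
      rw [h1, h0, map_zero]
      refine Prod.ext (by simp) ?_
      simp only [Prod.snd_zero]
      linear_combination (- (σ (1, 0)).2) * a2
    have := congrArg Prod.fst (inj h2)
    simp at this
  have a2 : α * α = 1 := (by decide : ∀ α : ZMod 3, α ≠ 0 → α * α = 1) α hα
  generalize (σ (1, 0)).1 = β at hσ hβ
  generalize (σ (1, 0)).2 = γ at hσ
  have hD : ∀ β γ α : ZMod 3, β ≠ 0 → α ≠ 0 → ((α * β).val, (α * γ).val) ∈ Ds := by decide
  refine ⟨_, hD β γ α hβ hα, ?_⟩
  have k1 : ∀ v, _ := fun v => (hr v).choose_spec.1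
  have k2 : ∀ v, _ := fun v => (hr v).choose_spec.2
  simp only [hσ, Prod.mk.injEq] at k1 k2
  have z3 : ∀ x : ZMod 3, ((x.val : ℕ) : ZMod 3) = x := fun x => by simp
  refine rel_four g α hα hd (fun v => ?_) (fun v => ?_) (fun v => ?_) (fun v => ?_) <;>
    simp only [dot_linN, z3, Nat.cast_zero, zero_mul, add_zero, Nat.cast_one, one_mul]
  · linear_combination (k1 v).1 + β * dot (dec a) v * a2
  · linear_combination (k2 v).1 + β * dot (dec b) v * a2
  · linear_combination (k1 v).2 + γ * dot (dec a) v * a2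
  · linear_combination (k2 v).2 + γ * dot (dec b) v * a2

theorem isoC_eq {x y : ℕ × ℕ × ℕ × ℕ} (hx : x ∈ c68) (hy : y ∈ c68)
    (hi : Iso (qC x.1 x.2.1 x.2.2.1 x.2.2.2) (qC y.1 y.2.1 y.2.2.1 y.2.2.2)) : x = y := by
  obtain ⟨D, hD, h⟩ := isoC hi
  have := List.all_eq_true.1 (List.all_eq_true.1 (List.all_eq_true.1 c68_sep x hx) D hD) y hy
  rw [h, Nat.beq_refl] at this
  simpa using this

theorem not_9_33 {ε ε' : ZMod 3} {κ τ : Fin 3 → ZMod 9} {κ' τ' : Fin 3 → ZMod 3 × ZMod 3} {h1 h2}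
    (hi : Iso (mkQ card_Z9 κ (B9 ε) τ h1) (mkQ card_Z33 κ' (B3 ε') τ' h2)) : False := by
  obtain ⟨σ, α, g, inj, hα, hι, -⟩ := model_NI _ _ _ _ _ _ _ _ _ _ hi
  have e := hι 1
  have e2 : (B9 ε).ι 1 = 3 • (1 : ZMod 9) := by rw [B9_ι]; decide
  rw [e2, map_nsmul, three_prod, B3_ι, mul_one] at e
  exact hα (congrArg Prod.snd e).symm

theorem not_B_C {a b a' b' c' d' : ℕ} (hi : Iso (qB a b) (qC a' b' c' d')) : False := by
  obtain ⟨σ, α, g, inj, hα, hι, hφ, -⟩ := model_NI _ _ _ _ _ _ _ _ _ _ hi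
  have e := hφ (1, 0)
  have e1 := hι 1
  simp only [B3_φ, B3_ι, mul_one, zero_mul] at e e1
  rw [e1] at e
  exact hα (congrArg Prod.snd e)

/-- index type -/
abbrev Idx : Type := (ZMod 3 × Fin 6) ⊕ (Fin 6 ⊕ Fin 68)

theorem c68_len : c68.length = 68 := by decide
theorem c68_nodup : c68.Nodup := by decide

/-- the element of the list -/
def c68g (k : Fin 68) : ℕ × ℕ × ℕ × ℕ := c68.get (k.cast c68_len.symm)

/-- all representatives -/
noncomputable def rp : Idx → Quasigroup (Fin 243)
  | Sum.inl p => qA p.1 (f6 p.2).1 (f6 p.2).2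
  | Sum.inr (Sum.inl i) => qB (f6 i).1 (f6 i).2
  | Sum.inr (Sum.inr k) => qC (c68g k).1 (c68g k).2.1 (c68g k).2.2.1 (c68g k).2.2.2

theorem rp_inj : ∀ i j, Iso (rp i) (rp j) → i = j
  | Sum.inl p, Sum.inl p', h => by
    obtain ⟨h1, h2⟩ := isoA h
    rw [Prod.ext h1 (f6_sep _ _ h2)]
  | Sum.inl p, Sum.inr (Sum.inl i), h => (not_9_33 h).elim
  | Sum.inl p, Sum.inr (Sum.inr i), h => (not_9_33 h).elim
  | Sum.inr (Sum.inl i), Sum.inl p, h => (not_9_33 (iso_symm h)).elim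
  | Sum.inr (Sum.inr i), Sum.inl p, h => (not_9_33 (iso_symm h)).elim
  | Sum.inr (Sum.inl i), Sum.inr (Sum.inl j), h => by rw [f6_sep _ _ (isoB h)]
  | Sum.inr (Sum.inl i), Sum.inr (Sum.inr j), h => (not_B_C h).elim
  | Sum.inr (Sum.inr i), Sum.inr (Sum.inl j), h => (not_B_C (iso_symm h)).elim
  | Sum.inr (Sum.inr i), Sum.inr (Sum.inr j), h => by
    have e := isoC_eq (List.get_mem _ _) (List.get_mem _ _) h
    have := List.nodup_iff_injective_get.1 c68_nodup e
    rw [Fin.cast_inj] at this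
    rw [this]

theorem rp_ok : ∀ i, Distributive (rp i) ∧ ¬ Medial (rp i)
  | Sum.inl p => ⟨mkQ_dist card_Z9 _ _ _ _, mkQ_not_medial card_Z9 _ _ _ _⟩
  | Sum.inr (Sum.inl i) => ⟨mkQ_dist card_Z33 _ _ _ _, mkQ_not_medial card_Z33 _ _ _ _⟩
  | Sum.inr (Sum.inr i) => ⟨mkQ_dist card_Z33 _ _ _ _, mkQ_not_medial card_Z33 _ _ _ _⟩

theorem rp_compl (Q : Type) (q : Quasigroup Q) (hQ : Nat.card Q = 243) (hd : Distributive q)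
    (hm : ¬ Medial q) : ∃ i, Iso q (rp i) := by
  rcases compl hQ hd hm with ⟨ε, i, h⟩ | ⟨i, h⟩ | ⟨x, hx, h⟩
  · exact ⟨Sum.inl (ε, i), h⟩
  · exact ⟨Sum.inr (Sum.inl i), h⟩
  · obtain ⟨n, rfl⟩ := List.get_of_mem hx
    exact ⟨Sum.inr (Sum.inr (n.cast c68_len)), h⟩

theorem card_Idx : Fintype.card Idx = 92 := by
  simp [Idx, ZMod.card]

theorem final : ∃ reps : Fin 92 → Quasigroup (Fin 243),
      (∀ i, (Distributive (reps i)) ∧ ¬ Medial (reps i)) ∧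
      (∀ i j, i ≠ j → ¬ Iso (reps i) (reps j)) ∧
      (∀ (Q : Type) (q : Quasigroup Q), Nat.card Q = 243 →
        (Distributive q) → ¬ Medial q → ∃ i, Iso q (reps i)) := by
  let E : Idx ≃ Fin 92 := Fintype.equivFinOfCardEq card_Idx
  refine ⟨fun i => rp (E.symm i), fun i => rp_ok _, fun i j hij h => ?_, fun Q q hQ hd hm => ?_⟩
  · exact hij (E.symm.injective (rp_inj _ _ h))
  · obtain ⟨i, hi⟩ := rp_compl Q q hQ hd hm
    refine ⟨E i, ?_⟩
    simpa using hi

end DQ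
open Quasigroup in
/-- Up to isomorphism, there are exactly 92 distributive quasigroups of order 243
that are not medial. -/
theorem stmt :
    ∃ reps : Fin 92 → Quasigroup (Fin 243),
      (∀ i, (Distributive (reps i)) ∧ ¬ Medial (reps i)) ∧
      (∀ i j, i ≠ j → ¬ Iso (reps i) (reps j)) ∧
      (∀ (Q : Type) (q : Quasigroup Q), Nat.card Q = 243 →
        (Distributive q) → ¬ Medial q → ∃ i, Iso q (reps i)) := by
  exact DQ.final
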